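/- arXiv:1701.06145 — 2 statements merged into one kernel-verified Lean document; each statement's English description precedes it below -/
import Mathlib

section
/- Let T > 0 and let q : ℝ → ℝ be a T-periodic locally integrable function satisfying the mean value condition (q#) and the sign condition (q*). Let g ∈ C¹([0,∞)) satisfy (g*) and (gs). Then the equation u'' + q(t) g(u) = 0 has at least one positive T-periodic solution. -/
open MeasureTheory Set Filter

/-- `u` is a solution of `u'' + F(t,u) = 0`: `u` is of class `C¹` and its derivative `u'`
is locally absolutely continuous (it is the integral of a locally integrable function),
with `u'' + F(t, u(t)) = 0` for a.e. `t`. -/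
def IsSol (F : ℝ → ℝ → ℝ) (u : ℝ → ℝ) : Prop :=
  ∃ u' : ℝ → ℝ,
    (∀ t, HasDerivAt u (u' t) t) ∧
    MeasureTheory.LocallyIntegrable (fun s => F s (u s)) MeasureTheory.volume ∧
    ∀ t, u' t = u' 0 - ∫ s in (0:ℝ)..t, F s (u s)

/-- `q ≻ 0` on `I` : `q ≥ 0` a.e. on `I` and `q ≢ 0` on `I`. -/
def PosOn (q : ℝ → ℝ) (I : Set ℝ) : Prop :=
  (∀ᵐ t ∂(MeasureTheory.volume.restrict I), 0 ≤ q t) ∧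
  ¬ (∀ᵐ t ∂(MeasureTheory.volume.restrict I), q t = 0)

/-- Condition `(q*)`: `[0,T]` splits into `m` closed intervals where `q ≻ 0`
separated by `m` closed intervals where `q ≺ 0`. -/
def SignCond (q : ℝ → ℝ) (T : ℝ) (m : ℕ) : Prop :=
  ∃ σ : ℕ → ℝ, σ 0 = 0 ∧ σ (2*m) = T ∧ (∀ i < 2*m, σ i < σ (i+1)) ∧
    (∀ i < m, PosOn q (Set.Icc (σ (2*i)) (σ (2*i+1)))) ∧
    (∀ i < m, PosOn (fun t => - q t) (Set.Icc (σ (2*i+1)) (σ (2*i+2))))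

/-- A subharmonic solution of order `k`: `kT`-periodic but not `ℓT`-periodic
for `ℓ = 1, …, k-1`. -/
def IsSubharmonic (u : ℝ → ℝ) (T : ℝ) (k : ℕ) : Prop :=
  Function.Periodic u (k * T) ∧ ∀ ℓ : ℕ, 1 ≤ ℓ → ℓ < k → ¬ Function.Periodic u (ℓ * T)

/-- `u` and `v` belong to the same periodicity class. -/
def SameClass (u v : ℝ → ℝ) (T : ℝ) : Prop :=
  ∃ ℓ : ℤ, ∀ t, v t = u (t + ℓ * T)


lemma arg_lift (F1 F2 : ℝ × ℝ → ℝ) (h1 : Continuous F1) (h2 : Continuous F2)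
    (hne : ∀ p, ¬ (F1 p = 0 ∧ F2 p = 0)) :
    ∃ (θ ρ : ℝ × ℝ → ℝ), Continuous θ ∧ (∀ p, 0 < ρ p) ∧ (∀ p, F1 p = ρ p * Real.cos (θ p)) ∧
      (∀ p, F2 p = ρ p * Real.sin (θ p)) := by
  set G : ℝ × ℝ → ℂ := fun p => ⟨F1 p, F2 p⟩ with hG
  have hGc : Continuous G := by
    have : G = fun p => (F1 p : ℂ) + (F2 p : ℂ) * Complex.I := by
      funext p; simp [hG, Complex.mk_eq_add_mul_I]
    rw [this]; fun_prop
  have hG0 : ∀ p, G p ≠ 0 := by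
    intro p hp
    apply hne p
    exact ⟨congrArg Complex.re hp, congrArg Complex.im hp⟩
  have hn : ∀ p, 0 < ‖G p‖ := fun p => norm_pos_iff.mpr (hG0 p)
  let f : C(ℝ × ℝ, Circle) := ⟨fun p => ⟨G p / (‖G p‖ : ℂ), by
      change _ ∈ Metric.sphere (0:ℂ) 1
      simp [(hn p).ne']⟩, by
      refine Continuous.subtype_mk ?_ _
      exact hGc.div (by fun_prop) (fun p => by exact_mod_cast (hn p).ne')⟩
  obtain ⟨e₀, he⟩ : ∃ e₀, Circle.exp e₀ = f (0,0) := ⟨_, Circle.exp_arg _⟩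
  obtain ⟨L, ⟨-, hL⟩, -⟩ := Circle.isCoveringMap_exp.existsUnique_continuousMap_lifts f (0,0) e₀ he
  have key : ∀ p, G p = (‖G p‖ : ℂ) * Complex.exp (L p * Complex.I) := by
    intro p
    have := congrFun hL p
    have := congrArg (Subtype.val) this
    simp only [Function.comp, f] at this
    have h3 : (Circle.exp (L p) : ℂ) = G p / (‖G p‖ : ℂ) := this
    rw [Circle.coe_exp] at h3
    rw [h3, mul_div_cancel₀]
    exact_mod_cast (hn p).ne'
  refine ⟨L, fun p => ‖G p‖, L.continuous, hn, fun p => ?_, fun p => ?_⟩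
  · have := congrArg Complex.re (key p)
    simpa [Complex.exp_ofReal_mul_I_re] using this
  · have := congrArg Complex.im (key p)
    simpa [Complex.exp_ofReal_mul_I_im] using this

lemma topo (F1 F2 : ℝ × ℝ → ℝ) (h1 : Continuous F1) (h2 : Continuous F2)
    (a b c d y0 : ℝ) (hab : a ≤ b) (hc : c ≤ y0) (hd : y0 ≤ d)
    (hbot : ∀ x ∈ Icc a b, F1 (x, c) < 0) (htop : ∀ x ∈ Icc a b, F1 (x, d) < 0)
    (hright : ∀ y ∈ Icc c d, F1 (b, y) < 0)
    (hmid : 0 < F1 (a, y0))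
    (hlow : ∀ y ∈ Icc c y0, F1 (a, y) = 0 → 0 < F2 (a, y))
    (hup : ∀ y ∈ Icc y0 d, F1 (a, y) = 0 → F2 (a, y) < 0) :
    ∃ x ∈ Icc a b, ∃ y ∈ Icc c d, F1 (x, y) = 0 ∧ F2 (x, y) = 0 := by
  by_contra! hno
  have hcd := hc.trans hd
  let P : ℝ × ℝ → ℝ × ℝ := fun p => ((projIcc a b hab p.1 : ℝ), (projIcc c d hcd p.2 : ℝ))
  have hP : Continuous P := by
    unfold P
    have := (continuous_projIcc (h := hab))
    have := (continuous_projIcc (h := hcd))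
    fun_prop
  have hPid : ∀ x ∈ Icc a b, ∀ y ∈ Icc c d, P (x, y) = (x, y) := by
    intro x hx y hy
    simp [P, projIcc_of_mem hab hx, projIcc_of_mem hcd hy]
  obtain ⟨θ, ρ, hθ, hρ, e1, e2⟩ := arg_lift (F1 ∘ P) (F2 ∘ P) (h1.comp hP) (h2.comp hP) (by
    rintro p ⟨q1, q2⟩
    exact hno _ (projIcc a b hab p.1).2 _ (projIcc c d hcd p.2).2 q1 q2)
  have E1 : ∀ x ∈ Icc a b, ∀ y ∈ Icc c d, F1 (x, y) = ρ (x,y) * Real.cos (θ (x,y)) := by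
    intro x hx y hy; rw [← e1]; simp [hPid x hx y hy]
  have E2 : ∀ x ∈ Icc a b, ∀ y ∈ Icc c d, F2 (x, y) = ρ (x,y) * Real.sin (θ (x,y)) := by
    intro x hx y hy; rw [← e2]; simp [hPid x hx y hy]
  have ha : a ∈ Icc a b := ⟨le_rfl, hab⟩
  have hb : b ∈ Icc a b := ⟨hab, le_rfl⟩
  have hcc : c ∈ Icc c d := ⟨le_rfl, hcd⟩
  have hdd : d ∈ Icc c d := ⟨hcd, le_rfl⟩
  have hyy : y0 ∈ Icc c d := ⟨hc, hd⟩
  -- normalise at the middle point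
  obtain ⟨n, t, ht, htn⟩ : ∃ n : ℤ, ∃ t ∈ Ioo (-(Real.pi/2)) (Real.pi/2), θ (a,y0) = t + n * (2 * Real.pi) := by
    have hcos : 0 < Real.cos (θ (a,y0)) := by
      have := E1 a ha y0 hyy
      rw [this] at hmid
      exact (pos_iff_pos_of_mul_pos hmid).mp (hρ _)
    obtain ⟨n, hn, -⟩ := existsUnique_add_zsmul_mem_Ico Real.two_pi_pos (θ (a,y0)) (-(Real.pi/2))
    refine ⟨-n, θ (a,y0) + n • (2 * Real.pi), ?_, by simp⟩
    have hc' : 0 < Real.cos (θ (a,y0) + n • (2 * Real.pi)) := by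
      rw [zsmul_eq_mul, Real.cos_add_int_mul_two_pi]; exact hcos
    set t := θ (a,y0) + n • (2 * Real.pi)
    constructor
    · rcases hn.1.lt_or_eq with h | h
      · exact h
      · rw [← h] at hc'; simp at hc'
    · by_contra! h
      have := Real.cos_nonpos_of_pi_div_two_le_of_le h (by linarith [hn.2])
      linarith
  set φ : ℝ × ℝ → ℝ := fun p => θ p - n * (2 * Real.pi) with hφ
  have hφc : Continuous φ := by fun_prop
  have C1 : ∀ x ∈ Icc a b, ∀ y ∈ Icc c d, F1 (x, y) = ρ (x,y) * Real.cos (φ (x,y)) := by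
    intro x hx y hy; rw [E1 x hx y hy, hφ]; simp only [Real.cos_sub_int_mul_two_pi]
  have C2 : ∀ x ∈ Icc a b, ∀ y ∈ Icc c d, F2 (x, y) = ρ (x,y) * Real.sin (φ (x,y)) := by
    intro x hx y hy; rw [E2 x hx y hy, hφ]; simp only [Real.sin_sub_int_mul_two_pi]
  have hφm : φ (a,y0) = t := by simp [hφ, htn]
  have hpi := Real.pi_pos
  -- lower left
  have low : Real.pi / 2 < φ (a, c) := by
    have hcont : ContinuousOn (fun y => φ (a,y)) (Icc c y0) := by fun_prop
    by_contra! hle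
    have hcos : ¬ (-(Real.pi/2) ≤ φ (a,c)) := by
      intro h
      have := Real.cos_nonneg_of_mem_Icc ⟨h, hle⟩
      have h3 := hbot a ha
      rw [C1 a ha c hcc] at h3
      nlinarith [hρ (a,c)]
    push Not at hcos
    obtain ⟨y, hy, hy2⟩ := intermediate_value_Icc hc hcont (show -(Real.pi/2) ∈ _ from
      ⟨hcos.le, by simp only [hφm]; exact ht.1.le⟩)
    simp only at hy2
    have hyd : y ∈ Icc c d := ⟨hy.1, hy.2.trans hd⟩
    have := hlow y hy (by rw [C1 a ha y hyd, hy2]; simp)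
    rw [C2 a ha y hyd, hy2] at this
    simp at this
    linarith [hρ (a,y)]
  have upp : φ (a, d) < - (Real.pi / 2) := by
    have hcont : ContinuousOn (fun y => φ (a,y)) (Icc y0 d) := by fun_prop
    by_contra! hle
    have hcos : ¬ (φ (a,d) ≤ Real.pi/2) := by
      intro h
      have := Real.cos_nonneg_of_mem_Icc ⟨hle, h⟩
      have h3 := htop a ha
      rw [C1 a ha d hdd] at h3
      nlinarith [hρ (a,d)]
    push Not at hcos
    obtain ⟨y, hy, hy2⟩ := intermediate_value_Icc hd hcont (show (Real.pi/2) ∈ _ from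
      ⟨by simp only [hφm]; exact ht.2.le, hcos.le⟩)
    simp only at hy2
    have hyd : y ∈ Icc c d := ⟨hc.trans hy.1, hy.2⟩
    have := hup y hy (by rw [C1 a ha y hyd, hy2]; simp)
    rw [C2 a ha y hyd, hy2] at this
    simp at this
    linarith [hρ (a,y)]
  -- the rest of the boundary
  set S : Set (ℝ × ℝ) := (fun x => (x, c)) '' Icc a b ∪ (fun y => (b, y)) '' Icc c d ∪ (fun x => (x, d)) '' Icc a b
  have hS : IsPreconnected S := by
    have p1 : IsPreconnected ((fun x : ℝ => (x, c)) '' Icc a b) :=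
      isPreconnected_Icc.image _ (by fun_prop)
    have p2 : IsPreconnected ((fun y : ℝ => (b, y)) '' Icc c d) :=
      isPreconnected_Icc.image _ (by fun_prop)
    have p3 : IsPreconnected ((fun x : ℝ => (x, d)) '' Icc a b) :=
      isPreconnected_Icc.image _ (by fun_prop)
    refine IsPreconnected.union (b, d) (Or.inr ⟨d, hdd, rfl⟩) ⟨b, hb, rfl⟩ ?_ p3
    exact IsPreconnected.union (b, c) ⟨b, hb, rfl⟩ ⟨c, hcc, rfl⟩ p1 p2
  have hcosS : ∀ p ∈ S, Real.cos (φ p) < 0 := by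
    have aux : ∀ x ∈ Icc a b, ∀ y ∈ Icc c d, F1 (x,y) < 0 → Real.cos (φ (x,y)) < 0 := by
      intro x hx y hy h
      rw [C1 x hx y hy] at h
      nlinarith [hρ (x,y)]
    rintro p ((⟨x, hx, rfl⟩ | ⟨y, hy, rfl⟩) | ⟨x, hx, rfl⟩)
    · exact aux x hx c hcc (hbot x hx)
    · exact aux b hb y hy (hright y hy)
    · exact aux x hx d hdd (htop x hx)
  have hmem1 : (a, c) ∈ S := Or.inl (Or.inl ⟨a, ha, rfl⟩)
  have hmem2 : (a, d) ∈ S := Or.inr ⟨a, ha, rfl⟩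
  obtain ⟨p, hp, hp2⟩ := hS.intermediate_value hmem2 hmem1 hφc.continuousOn
    (show (0:ℝ) ∈ _ from ⟨by linarith, by linarith⟩)
  have := hcosS p hp
  rw [hp2] at this
  simp at this
  linarith


lemma li_ii {E : Type*} [NormedAddCommGroup E] {f : ℝ → E} (hf : LocallyIntegrable f volume) (x y : ℝ) :
    IntervalIntegrable f volume x y :=
  intervalIntegrable_iff.mpr <|
      (hf.integrableOn_isCompact isCompact_uIcc).mono_set uIoc_subset_uIcc

lemma ii_mul {k : ℝ → ℝ} (hk : LocallyIntegrable k volume) {φ : ℝ → ℝ} (hφ : Continuous φ) (a b : ℝ) :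
    IntervalIntegrable (fun s => k s * φ s) volume a b :=
  (li_ii hk a b).mul_continuousOn hφ.continuousOn

lemma prim_cont {k : ℝ → ℝ} (hk : LocallyIntegrable k volume) (c : ℝ) :
    Continuous (fun t => ∫ s in c..t, k s) :=
  intervalIntegral.continuous_primitive (fun a b => li_ii hk a b) c

lemma prim_mono {k : ℝ → ℝ} (hk : LocallyIntegrable k volume) (hk0 : ∀ s, 0 ≤ k s) (c : ℝ) :
    Monotone (fun t => ∫ s in c..t, k s) := by
  intro s t hst
  have := intervalIntegral.integral_interval_sub_left (li_ii hk c t) (li_ii hk c s)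
  have h2 := intervalIntegral.integral_nonneg (μ := volume) hst (fun u _ => hk0 u)
  simp only
  linarith

/-- basic inequality for the exponential weight -/
lemma exp_int {k : ℝ → ℝ} (hk : LocallyIntegrable k volume) (hk0 : ∀ s, 0 ≤ k s) (t0 t : ℝ) :
    |∫ s in t0..t, k s * Real.exp (2 * |∫ r in t0..s, k r|)| ≤ Real.exp (2 * |∫ r in t0..t, k r|) / 2 := by
  have hae := LocallyIntegrable.ae_hasDerivAt_integral hk
  have hmono := prim_mono hk hk0 t0
  have hW0 : ∫ r in t0..t0, k r = 0 := by simp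
  rcases le_total t0 t with h | h
  · have hm : MonotoneOn (fun s => Real.exp (2 * ∫ r in t0..s, k r)) (uIcc t0 t) := by
      intro s _ u _ hsu
      have := hmono hsu
      simp only at this ⊢
      gcongr
    have h1 := hm.intervalIntegral_deriv_mem_uIcc
    have hle : ∫ r in t0..t0, k r ≤ ∫ r in t0..t, k r := hmono h
    rw [hW0] at hle
    have e : ∫ s in t0..t, k s * Real.exp (2 * |∫ r in t0..s, k r|) =
        (∫ x in t0..t, deriv (fun s => Real.exp (2 * ∫ r in t0..s, k r)) x) / 2 := by
      rw [← intervalIntegral.integral_div]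
      apply intervalIntegral.integral_congr_ae
      filter_upwards [hae] with s hs hst
      rw [uIoc_of_le h] at hst
      have h0 : ∫ r in t0..t0, k r ≤ ∫ r in t0..s, k r := hmono hst.1.le
      rw [hW0] at h0
      rw [abs_of_nonneg h0, (((hs t0).const_mul 2).exp).deriv]
      ring
    rw [e]
    rw [abs_of_nonneg hle]
    rw [hW0] at h1
    simp only [mul_zero, Real.exp_zero] at h1
    rw [uIcc_of_le (by linarith [Real.add_one_le_exp (2 * ∫ r in t0..t, k r)])] at h1
    rw [abs_of_nonneg (by linarith [h1.1])]
    linarith [h1.2]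
  · have hm : MonotoneOn (fun s => - Real.exp (-2 * ∫ r in t0..s, k r)) (uIcc t t0) := by
      intro s _ u _ hsu
      have := hmono hsu
      simp only at this ⊢
      have : -2 * ∫ r in t0..u, k r ≤ -2 * ∫ r in t0..s, k r := by linarith
      have := Real.exp_le_exp.mpr this
      linarith
    have h1 := hm.intervalIntegral_deriv_mem_uIcc
    have hle : ∫ r in t0..t, k r ≤ ∫ r in t0..t0, k r := hmono h
    rw [hW0] at hle
    have e : ∫ s in t..t0, k s * Real.exp (2 * |∫ r in t0..s, k r|) =
        (∫ x in t..t0, deriv (fun s => - Real.exp (-2 * ∫ r in t0..s, k r)) x) / 2 := by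
      rw [← intervalIntegral.integral_div]
      apply intervalIntegral.integral_congr_ae
      filter_upwards [hae] with s hs hst
      rw [uIoc_of_le h] at hst
      have h0 : ∫ r in t0..s, k r ≤ ∫ r in t0..t0, k r := hmono hst.2
      rw [hW0] at h0
      rw [abs_of_nonpos h0, (((hs t0).const_mul (-2)).exp.fun_neg).deriv]
      ring_nf
    rw [intervalIntegral.integral_symm, abs_neg, e]
    rw [abs_of_nonpos hle]
    rw [hW0] at h1
    simp only [mul_zero, Real.exp_zero] at h1
    rw [uIcc_of_le (by linarith [Real.add_one_le_exp (-2 * ∫ r in t0..t, k r)])] at h1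
    rw [abs_of_nonneg (by linarith [h1.1])]
    have e2 : 2 * -∫ r in t0..t, k r = -2 * ∫ r in t0..t, k r := by ring
    rw [e2]
    linarith [h1.2]

lemma exp_bound {E : Type*} [NormedAddCommGroup E] [NormedSpace ℝ E]
    {k : ℝ → ℝ} (hk : LocallyIntegrable k volume) (hk0 : ∀ s, 0 ≤ k s) (t0 t : ℝ) (f : ℝ → E)
    (K : ℝ) (hK : 0 ≤ K)
    (hf : ∀ s ∈ uIcc t0 t, ‖f s‖ ≤ K * (k s * Real.exp (2 * |∫ r in t0..s, k r|))) :
    ‖∫ s in t0..t, f s‖ ≤ K * (Real.exp (2 * |∫ r in t0..t, k r|) / 2) := by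
  have hc : Continuous (fun s => Real.exp (2 * |∫ r in t0..s, k r|)) := by
    have := prim_cont hk t0
    fun_prop
  have hi := (ii_mul hk hc t0 t).const_mul K
  have h1 : ‖∫ s in t0..t, f s‖ ≤ |∫ s in t0..t, K * (k s * Real.exp (2 * |∫ r in t0..s, k r|))| := by
    apply intervalIntegral.norm_integral_le_abs_of_norm_le _ hi
    rw [ae_restrict_iff' measurableSet_uIoc]
    exact Eventually.of_forall fun s hs => hf s (uIoc_subset_uIcc hs)
  rw [intervalIntegral.integral_const_mul, abs_mul, abs_of_nonneg hK] at h1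
  exact h1.trans (mul_le_mul_of_nonneg_left (exp_int hk hk0 t0 t) hK)

lemma gron {k : ℝ → ℝ} (hk : LocallyIntegrable k volume) (hk0 : ∀ s, 0 ≤ k s) (t0 t : ℝ)
    (φ : ℝ → ℝ) (hφ : Continuous φ) (hφ0 : ∀ s, 0 ≤ φ s) (C : ℝ) 
    (h : ∀ s ∈ uIcc t0 t, φ s ≤ C + |∫ r in t0..s, k r * φ r|) :
    φ t ≤ 2 * C * Real.exp (2 * |∫ r in t0..t, k r|) := by
  have hc : Continuous (fun s => |∫ r in t0..s, k r|) := (prim_cont hk t0).abs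
  obtain ⟨s, hs, hmax⟩ := isCompact_uIcc.exists_isMaxOn (nonempty_uIcc (a := t0) (b := t))
    (f := fun s => φ s * Real.exp (-(2 * |∫ r in t0..s, k r|))) (by fun_prop)
  set K := φ s * Real.exp (-(2 * |∫ r in t0..s, k r|)) with hK
  have hK0 : 0 ≤ K := mul_nonneg (hφ0 s) (Real.exp_pos _).le
  have hb : ∀ r ∈ uIcc t0 t, φ r ≤ K * Real.exp (2 * |∫ r in t0..r, k r|) := by
    intro r hr
    have := hmax hr
    simp only [mem_ofPred_eq] at this
    calc φ r = (φ r * Real.exp (-(2 * |∫ r in t0..r, k r|))) * Real.exp (2 * |∫ r in t0..r, k r|) := by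
            rw [mul_assoc, ← Real.exp_add]; simp
      _ ≤ _ := by gcongr
  have h1 := exp_bound hk hk0 t0 s (fun r => k r * φ r) K hK0 (by
    intro r hr
    have hr' : r ∈ uIcc t0 t := uIcc_subset_uIcc_left hs hr
    rw [Real.norm_of_nonneg (mul_nonneg (hk0 r) (hφ0 r))]
    have := mul_le_mul_of_nonneg_left (hb r hr') (hk0 r)
    linarith)
  rw [Real.norm_eq_abs] at h1
  have h2 := h s hs
  have e1 : φ s = K * Real.exp (2 * |∫ r in t0..s, k r|) := by
    rw [hK, mul_assoc, ← Real.exp_add]; simp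
  have hC : 0 ≤ C := by
    have := h t0 left_mem_uIcc
    simp at this
    linarith [hφ0 t0]
  have hE : 1 ≤ Real.exp (2 * |∫ r in t0..s, k r|) := Real.one_le_exp (by positivity)
  have h3 : K ≤ 2 * C := by nlinarith
  calc φ t ≤ K * Real.exp (2 * |∫ r in t0..t, k r|) := hb t right_mem_uIcc
    _ ≤ _ := by gcongr

lemma exist_sol {E : Type*} [NormedAddCommGroup E] [NormedSpace ℝ E] [CompleteSpace E]
    {k : ℝ → ℝ} (hk : LocallyIntegrable k volume) (hk0 : ∀ s, 0 ≤ k s)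
    (f : ℝ → E → E) (hf0 : ∀ s, f s 0 = 0) (hlip : ∀ s X Y, ‖f s X - f s Y‖ ≤ k s * ‖X - Y‖)
    (hint : ∀ X : ℝ → E, Continuous X → ∀ a b, IntervalIntegrable (fun s => f s (X s)) volume a b)
    (X0 : E) : ∃ X : ℝ → E, Continuous X ∧ ∀ t, X t = X0 + ∫ s in (0:ℝ)..t, f s (X s) := by
  let w : ℝ → ℝ := fun t => 2 * |∫ r in (0:ℝ)..t, k r|
  have hw : Continuous w := by
    have := prim_cont hk 0
    fun_prop
  have hw0 : ∀ t, 0 ≤ w t := fun t => by positivity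
  let S : BoundedContinuousFunction ℝ E → ℝ → E := fun V t => Real.exp (w t) • V t
  have hS : ∀ V, Continuous (S V) := fun V => by
    have := V.continuous
    fun_prop
  let Ψ : BoundedContinuousFunction ℝ E → ℝ → E := fun V t =>
    Real.exp (-w t) • (X0 + ∫ s in (0:ℝ)..t, f s (S V s))
  have hexp : ∀ t, Real.exp (-w t) * Real.exp (w t) = 1 := fun t => by
    rw [← Real.exp_add]; simp
  have hΨd : ∀ V U t, ‖Ψ V t - Ψ U t‖ ≤ ‖V - U‖ / 2 := by
    intro V U t
    have : Ψ V t - Ψ U t = Real.exp (-w t) • (∫ s in (0:ℝ)..t, (f s (S V s) - f s (S U s))) := by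
      rw [intervalIntegral.integral_sub (hint _ (hS V) _ _) (hint _ (hS U) _ _), ← smul_sub]
      congr 1
      abel
    rw [this, norm_smul, Real.norm_of_nonneg (Real.exp_pos _).le]
    have := exp_bound hk hk0 0 t (fun s => (f s (S V s) - f s (S U s))) ‖V - U‖ (norm_nonneg _) (by
      intro s _
      refine (hlip s _ _).trans ?_
      have : ‖S V s - S U s‖ ≤ Real.exp (w s) * ‖V - U‖ := by
        simp only [S]
        rw [← smul_sub, norm_smul, Real.norm_of_nonneg (Real.exp_pos _).le]
        gcongr
        exact (V - U).norm_coe_le_norm s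
      calc _ ≤ k s * (Real.exp (w s) * ‖V - U‖) := mul_le_mul_of_nonneg_left this (hk0 s)
        _ = _ := by ring)
    calc _ ≤ Real.exp (-w t) * (‖V - U‖ * (Real.exp (w t) / 2)) := by gcongr
      _ = (Real.exp (-w t) * Real.exp (w t)) * ‖V - U‖ / 2 := by ring
      _ = _ := by rw [hexp]; ring
  have hΨ0 : ∀ t, ‖Ψ 0 t‖ ≤ ‖X0‖ := by
    intro t
    simp only [Ψ, S, BoundedContinuousFunction.coe_zero, Pi.zero_apply, smul_zero, hf0,
      intervalIntegral.integral_zero, add_zero]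
    rw [norm_smul, Real.norm_of_nonneg (Real.exp_pos _).le]
    have : Real.exp (-w t) ≤ 1 := Real.exp_le_one_iff.mpr (by linarith [hw0 t])
    nlinarith [norm_nonneg X0]
  have hΨc : ∀ V, Continuous (Ψ V) := by
    intro V
    have := intervalIntegral.continuous_primitive (hint _ (hS V)) 0
    fun_prop
  let Φ : BoundedContinuousFunction ℝ E → BoundedContinuousFunction ℝ E := fun V =>
    BoundedContinuousFunction.ofNormedAddCommGroup (Ψ V) (hΨc V) (‖X0‖ + ‖V‖ / 2) (by
      intro t
      have h1 := hΨd V 0 t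
      have h2 := hΨ0 t
      rw [sub_zero] at h1
      have : ‖Ψ V t‖ ≤ ‖Ψ V t - Ψ 0 t‖ + ‖Ψ 0 t‖ := by
        simpa using norm_add_le (Ψ V t - Ψ 0 t) (Ψ 0 t)
      linarith)
  have hcontr : ContractingWith (1/2) Φ := by
    refine ⟨by rw [← NNReal.coe_lt_coe]; norm_num, LipschitzWith.of_dist_le_mul ?_⟩
    intro V U
    rw [dist_eq_norm V U, BoundedContinuousFunction.dist_le (by positivity)]
    intro t
    rw [dist_eq_norm]
    have := hΨd V U t
    simp only [Φ, BoundedContinuousFunction.coe_ofNormedAddCommGroup]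
    push_cast
    linarith
  obtain ⟨V, hV⟩ : ∃ V, Φ V = V := ⟨_, hcontr.fixedPoint_isFixedPt⟩
  refine ⟨S V, hS V, fun t => ?_⟩
  have h1 : V t = Ψ V t := by
    conv_lhs => rw [← hV]
    rfl
  change Real.exp (w t) • V t = _
  rw [h1]
  simp only [Ψ]
  rw [smul_smul, mul_comm, hexp, one_smul]


structure Sys (q G u v : ℝ → ℝ) : Prop where
  cu : Continuous u
  cv : Continuous v
  hu : ∀ s t, u t - u s = ∫ r in s..t, v r
  hv : ∀ s t, v t - v s = - ∫ r in s..t, q r * G (u r)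

lemma Sys.hasDerivAt {q G u v : ℝ → ℝ} (h : Sys q G u v) (t : ℝ) : HasDerivAt u (v t) t := by
  have h1 := intervalIntegral.integral_hasDerivAt_right (h.cv.intervalIntegrable 0 t)
    (h.cv.stronglyMeasurableAtFilter _ _) h.cv.continuousAt
  have : u = fun t => (∫ r in (0:ℝ)..t, v r) + u 0 := by
    funext t
    have := h.hu 0 t
    linarith
  rw [this]
  exact h1.add_const _

lemma Sys.shift {q G u v : ℝ → ℝ} (h : Sys q G u v) {T : ℝ} (hq : Function.Periodic q T) :
    Sys q G (fun t => u (t + T)) (fun t => v (t + T)) where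
  cu := h.cu.comp (by fun_prop)
  cv := h.cv.comp (by fun_prop)
  hu := by
    intro s t
    rw [h.hu, ← intervalIntegral.integral_comp_add_right]
  hv := by
    intro s t
    rw [h.hv, ← intervalIntegral.integral_comp_add_right (fun r => q r * G (u r))]
    congr 2
    funext r
    rw [hq r]

lemma Sys.zero {q G : ℝ → ℝ} (hG0 : G 0 = 0) : Sys q G (fun _ => 0) (fun _ => 0) where
  cu := continuous_const
  cv := continuous_const
  hu := by simp
  hv := by simp [hG0]

lemma lip_cont {G : ℝ → ℝ} {L : ℝ} (hL : ∀ x y, |G x - G y| ≤ L * |x - y|) : Continuous G :=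
  (LipschitzWith.of_dist_le' (K := L) (fun x y => by simpa [Real.dist_eq] using hL x y)).continuous

def kk (q : ℝ → ℝ) (L : ℝ) : ℝ → ℝ := fun s => 1 + L * |q s|

lemma kk_li {q : ℝ → ℝ} (hq : LocallyIntegrable q volume) (L : ℝ) : LocallyIntegrable (kk q L) volume := by
  have h1 : LocallyIntegrable (fun _ : ℝ => (1:ℝ)) volume := locallyIntegrable_const 1
  have h2 : LocallyIntegrable (fun s => |q s|) volume := fun x => IntegrableAtFilter.norm (hq x)
  have h3 := h2.smul L
  exact h1.add h3

lemma kk_nonneg (q : ℝ → ℝ) {L : ℝ} (hL : 0 ≤ L) (s : ℝ) : 0 ≤ kk q L s := by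
  unfold kk; positivity

lemma sys_exists {q : ℝ → ℝ} (hq : LocallyIntegrable q volume) {G : ℝ → ℝ} {L : ℝ} (hL0 : 0 ≤ L)
    (hL : ∀ x y, |G x - G y| ≤ L * |x - y|) (hG0 : G 0 = 0) (x y : ℝ) :
    ∃ u v, Sys q G u v ∧ u 0 = x ∧ v 0 = y := by
  have hGc := lip_cont hL
  have hint : ∀ X : ℝ → ℝ × ℝ, Continuous X → ∀ a b,
      IntervalIntegrable (fun s => ((X s).2, - (q s * G ((X s).1)))) volume a b := by
    intro X hX a b
    have i1 : IntervalIntegrable (fun s => (X s).2) volume a b := (hX.snd).intervalIntegrable a b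
    have i2 : IntervalIntegrable (fun s => -(q s * G ((X s).1))) volume a b :=
      (ii_mul hq (hGc.comp hX.fst) a b).neg
    exact ⟨i1.1.prodMk i2.1, i1.2.prodMk i2.2⟩
  obtain ⟨X, hX, hX2⟩ := exist_sol (E := ℝ × ℝ) (kk_li hq L) (kk_nonneg q hL0)
    (fun s X => (X.2, - (q s * G X.1))) (by simp [hG0]) (by
      intro s X Y
      have a1 : |X.2 - Y.2| ≤ ‖X - Y‖ := norm_snd_le (X - Y)
      have a2 : |X.1 - Y.1| ≤ ‖X - Y‖ := norm_fst_le (X - Y)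
      have hn := norm_nonneg (X - Y)
      have hq0 := abs_nonneg (q s)
      rw [Prod.norm_def]
      apply max_le
      · simp only [Prod.fst_sub, Real.norm_eq_abs, kk]
        nlinarith [mul_nonneg (mul_nonneg hL0 hq0) hn]
      · simp only [Prod.snd_sub, Real.norm_eq_abs, kk]
        have : -(q s * G X.1) - -(q s * G Y.1) = -(q s * (G X.1 - G Y.1)) := by ring
        rw [this, abs_neg, abs_mul]
        have h3 := mul_le_mul_of_nonneg_left ((hL X.1 Y.1).trans (mul_le_mul_of_nonneg_left a2 hL0)) hq0
        nlinarith) hint (x, y)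
  have h1 : ∀ t, (X t).1 = x + ∫ s in (0:ℝ)..t, (X s).2 := by
    intro t
    have h3 := ContinuousLinearMap.intervalIntegral_comp_comm (ContinuousLinearMap.fst ℝ ℝ ℝ) (hint X hX 0 t)
    simp only [ContinuousLinearMap.coe_fst'] at h3
    rw [h3]
    exact congrArg Prod.fst (hX2 t)
  have h2 : ∀ t, (X t).2 = y + ∫ s in (0:ℝ)..t, -(q s * G (X s).1) := by
    intro t
    have h3 := ContinuousLinearMap.intervalIntegral_comp_comm (ContinuousLinearMap.snd ℝ ℝ ℝ) (hint X hX 0 t)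
    simp only [ContinuousLinearMap.coe_snd'] at h3
    rw [h3]
    exact congrArg Prod.snd (hX2 t)
  refine ⟨fun t => (X t).1, fun t => (X t).2, ⟨hX.fst, hX.snd, fun s t => ?_, fun s t => ?_⟩, ?_, ?_⟩
  · have := intervalIntegral.integral_interval_sub_left (a := 0)
      (hX.snd.intervalIntegrable (μ := volume) 0 t) (hX.snd.intervalIntegrable 0 s)
    rw [h1 t, h1 s, ← this]
    ring
  · have := intervalIntegral.integral_interval_sub_left (a := 0)
      (ii_mul hq (hGc.comp hX.fst) 0 t) (ii_mul hq (hGc.comp hX.fst) 0 s)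
    simp only [Function.comp] at this
    rw [h2 t, h2 s, ← this]
    simp only [intervalIntegral.integral_neg]
    ring
  · simp [h1]
  · simp [h2]

lemma sys_gron {q : ℝ → ℝ} (hq : LocallyIntegrable q volume) {G : ℝ → ℝ} {L : ℝ} (hL0 : 0 ≤ L)
    (hL : ∀ x y, |G x - G y| ≤ L * |x - y|) {u v u' v' : ℝ → ℝ} (h : Sys q G u v) (h' : Sys q G u' v')
    (t0 t : ℝ) :
    max |u t - u' t| |v t - v' t| ≤ 2 * max |u t0 - u' t0| |v t0 - v' t0|
      * Real.exp (2 * |∫ r in t0..t, kk q L r|) := by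
  have hGc := lip_cont hL
  have c1 := h.cu
  have c2 := h.cv
  have c3 := h'.cu
  have c4 := h'.cv
  set φ : ℝ → ℝ := fun t => max |u t - u' t| |v t - v' t| with hφ
  have hφc : Continuous φ := by fun_prop
  have hφ0 : ∀ s, 0 ≤ φ s := fun s => le_max_of_le_left (abs_nonneg _)
  refine gron (kk_li hq L) (kk_nonneg q hL0) t0 t φ hφc hφ0 (φ t0) ?_
  intro s _
  have hi := ii_mul (kk_li hq L) hφc t0 s
  apply max_le
  · have e : u s - u' s = (u t0 - u' t0) + ∫ r in t0..s, (v r - v' r) := by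
      rw [intervalIntegral.integral_sub (c2.intervalIntegrable _ _) (c4.intervalIntegrable _ _),
        ← h.hu, ← h'.hu]; ring
    have b : ‖∫ r in t0..s, (v r - v' r)‖ ≤ |∫ r in t0..s, kk q L r * φ r| := by
      apply intervalIntegral.norm_integral_le_abs_of_norm_le _ hi
      refine Eventually.of_forall fun r => ?_
      have a1 : |v r - v' r| ≤ φ r := le_max_right _ _
      simp only [Real.norm_eq_abs, kk]
      nlinarith [mul_nonneg (mul_nonneg hL0 (abs_nonneg (q r))) (hφ0 r)]
    rw [e]
    refine (abs_add_le _ _).trans ?_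
    rw [Real.norm_eq_abs] at b
    have : |u t0 - u' t0| ≤ φ t0 := le_max_left _ _
    linarith
  · have e : v s - v' s = (v t0 - v' t0) + ∫ r in t0..s, -(q r * G (u r) - q r * G (u' r)) := by
      have h3 := intervalIntegral.integral_sub (ii_mul hq (hGc.comp c1) t0 s) (ii_mul hq (hGc.comp c3) t0 s)
      simp only [Function.comp] at h3
      rw [intervalIntegral.integral_neg, h3]
      have := h.hv t0 s
      have := h'.hv t0 s
      linarith
    have b : ‖∫ r in t0..s, -(q r * G (u r) - q r * G (u' r))‖ ≤ |∫ r in t0..s, kk q L r * φ r| := by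
      apply intervalIntegral.norm_integral_le_abs_of_norm_le _ hi
      refine Eventually.of_forall fun r => ?_
      have a1 : |u r - u' r| ≤ φ r := le_max_left _ _
      rw [norm_neg, ← mul_sub, norm_mul, Real.norm_eq_abs, Real.norm_eq_abs]
      simp only [kk]
      have := mul_le_mul_of_nonneg_left ((hL (u r) (u' r)).trans (mul_le_mul_of_nonneg_left a1 hL0)) (abs_nonneg (q r))
      nlinarith [hφ0 r]
    rw [e]
    refine (abs_add_le _ _).trans ?_
    rw [Real.norm_eq_abs] at b
    have : |v t0 - v' t0| ≤ φ t0 := le_max_right _ _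
    linarith

lemma sys_uniq {q : ℝ → ℝ} (hq : LocallyIntegrable q volume) {G : ℝ → ℝ} {L : ℝ} (hL0 : 0 ≤ L)
    (hL : ∀ x y, |G x - G y| ≤ L * |x - y|) {u v u' v' : ℝ → ℝ} (h : Sys q G u v) (h' : Sys q G u' v')
    (t0 : ℝ) (e1 : u t0 = u' t0) (e2 : v t0 = v' t0) (t : ℝ) : u t = u' t ∧ v t = v' t := by
  have := sys_gron hq hL0 hL h h' t0 t
  simp only [e1, e2, sub_self, abs_zero, max_self, mul_zero, zero_mul] at this
  have h1 := (le_max_left _ _).trans this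
  have h2 := (le_max_right _ _).trans this
  exact ⟨sub_eq_zero.mp (abs_nonpos_iff.mp h1), sub_eq_zero.mp (abs_nonpos_iff.mp h2)⟩

/-- uniform constant on `[0,T]` -/
lemma sys_const {q : ℝ → ℝ} (hq : LocallyIntegrable q volume) {G : ℝ → ℝ} {L : ℝ} (hL0 : 0 ≤ L)
    (hL : ∀ x y, |G x - G y| ≤ L * |x - y|) (T : ℝ) :
    ∃ Γ : ℝ, 1 ≤ Γ ∧ ∀ u v u' v', Sys q G u v → Sys q G u' v' → ∀ t ∈ Icc 0 T,
      max |u t - u' t| |v t - v' t| ≤ Γ * max |u 0 - u' 0| |v 0 - v' 0| := by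
  refine ⟨2 * Real.exp (2 * |∫ r in (0:ℝ)..T, kk q L r|), ?_, ?_⟩
  · have := Real.one_le_exp (show 0 ≤ 2 * |∫ r in (0:ℝ)..T, kk q L r| by positivity)
    linarith
  · intro u v u' v' h h' t ht
    refine (sys_gron hq hL0 hL h h' 0 t).trans ?_
    have h1 : |∫ r in (0:ℝ)..t, kk q L r| ≤ |∫ r in (0:ℝ)..T, kk q L r| := by
      have m := prim_mono (kk_li hq L) (kk_nonneg q hL0) 0
      have m1 := m ht.1
      have m2 := m ht.2
      simp only [intervalIntegral.integral_same] at m1 m2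
      rw [abs_of_nonneg m1, abs_of_nonneg (m1.trans m2)]
      exact m2
    have h0 : 0 ≤ max |u 0 - u' 0| |v 0 - v' 0| := le_max_of_le_left (abs_nonneg _)
    calc _ ≤ 2 * max |u 0 - u' 0| |v 0 - v' 0| * Real.exp (2 * |∫ r in (0:ℝ)..T, kk q L r|) := by gcongr
      _ = _ := by ring

lemma not_pos {q : ℝ → ℝ} (hq : LocallyIntegrable q volume) {G : ℝ → ℝ} {L : ℝ} (hL0 : 0 ≤ L)
    (hL : ∀ x y, |G x - G y| ≤ L * |x - y|) (hG0 : ∀ x ≤ 0, G x = 0) {u v : ℝ → ℝ} (h : Sys q G u v)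
    (h0 : 0 < u 0) {T t1 : ℝ} (ht1 : t1 ∈ Icc 0 T) (hneg : u t1 ≤ 0) : u T ≤ 0 := by
  -- first zero
  obtain ⟨t0, ⟨ht0, hle⟩, hmin⟩ : ∃ t0, IsLeast (Icc 0 T ∩ {t | u t ≤ 0}) t0 := by
    apply (isCompact_Icc.inter_right (isClosed_le h.cu continuous_const)).exists_isLeast
    exact ⟨t1, ht1, hneg⟩
  have hpos : ∀ t ∈ Ico 0 t0, 0 < u t := by
    intro t ht
    by_contra! hc
    have := hmin ⟨⟨ht.1, ht.2.le.trans ht0.2⟩, hc⟩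
    linarith [ht.2]
  have ht0pos : 0 < t0 := by
    rcases ht0.1.lt_or_eq with h1 | h1
    · exact h1
    · rw [← h1] at hle; simp at hle; linarith
  have hz : u t0 = 0 := by
    apply le_antisymm hle
    by_contra! hc
    obtain ⟨s, hs, hs2⟩ := intermediate_value_Icc' ht0.1 h.cu.continuousOn
      (show u t0 / 2 ∈ _ from ⟨by linarith, by linarith⟩)
    rcases hs.2.lt_or_eq with h2 | h2
    · have := hpos s ⟨hs.1, h2⟩; linarith
    · rw [h2] at hs2; linarith
  have hv : v t0 ≤ 0 := by
    by_contra! hc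
    obtain ⟨δ, hδ, hb⟩ := Metric.eventually_nhds_iff.mp (h.cv.continuousAt.eventually (lt_mem_nhds hc))
    set s := max (t0 - δ/2) 0
    have hs1 : s < t0 := max_lt (by linarith) ht0pos
    have hs0 : 0 ≤ s := le_max_right _ _
    have hs2 : t0 - δ/2 ≤ s := le_max_left _ _
    have h1 : 0 < ∫ r in s..t0, v r := by
      apply intervalIntegral.intervalIntegral_pos_of_pos_on (h.cv.intervalIntegrable _ _) _ hs1
      intro r hr
      apply hb
      rw [Real.dist_eq, abs_lt]
      constructor <;> linarith [hr.1, hr.2]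
    have h2 := h.hu s t0
    have := hpos s ⟨hs0, hs1⟩
    linarith
  rcases hv.lt_or_eq with hv | hv
  · -- linear afterwards
    rcases ht0.2.lt_or_eq with hT | hT
    swap
    · rw [← hT, hz]
    obtain ⟨δ, hδ, hb⟩ := Metric.eventually_nhds_iff.mp (h.cv.continuousAt.eventually (gt_mem_nhds hv))
    set a := min (t0 + δ/2) T
    have ha1 : t0 < a := lt_min (by linarith) hT
    have haT : a ≤ T := min_le_right _ _
    have ha2 : a ≤ t0 + δ/2 := min_le_left _ _
    have hvn : ∀ r ∈ Icc t0 a, v r < 0 := by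
      intro r hr
      apply hb
      rw [Real.dist_eq, abs_lt]
      constructor <;> linarith [hr.1, hr.2]
    have hua : u a < 0 := by
      have h1 : 0 < ∫ r in t0..a, - v r := by
        apply intervalIntegral.intervalIntegral_pos_of_pos_on (h.cv.neg.intervalIntegrable _ _) _ ha1
        intro r hr
        have := hvn r ⟨hr.1.le, hr.2.le⟩
        simp only [Pi.neg_apply]
        linarith
      rw [intervalIntegral.integral_neg] at h1
      have h2 := h.hu t0 a
      linarith
    have hva := hvn a ⟨ha1.le, le_rfl⟩
    by_contra! hc
    obtain ⟨b, ⟨hb0, hbge⟩, hbmin⟩ : ∃ b, IsLeast (Icc a T ∩ {t | 0 ≤ u t}) b := by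
      apply (isCompact_Icc.inter_right (isClosed_le continuous_const h.cu)).exists_isLeast
      exact ⟨T, ⟨haT, le_rfl⟩, hc.le⟩
    have hneg' : ∀ t ∈ Ico a b, u t < 0 := by
      intro t ht
      by_contra! hc
      have := hbmin ⟨⟨ht.1, ht.2.le.trans hb0.2⟩, hc⟩
      linarith [ht.2]
    have hvc : ∀ t ∈ Icc a b, v t = v a := by
      intro t ht
      have h1 := h.hv a t
      have : ∫ r in a..t, q r * G (u r) = 0 := by
        apply intervalIntegral.integral_zero_ae
        filter_upwards [Measure.ae_ne volume b] with r hrb hr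
        rw [uIoc_of_le ht.1] at hr
        rw [hG0 _ (hneg' r ⟨hr.1.le, lt_of_le_of_ne (hr.2.trans ht.2) hrb⟩).le, mul_zero]
      rw [this] at h1
      linarith
    have h2 := h.hu a b
    have h3 : ∫ r in a..b, v r = ∫ r in a..b, v a := by
      apply intervalIntegral.integral_congr
      intro r hr
      rw [uIcc_of_le hb0.1] at hr
      exact hvc r hr
    rw [h3] at h2
    simp only [intervalIntegral.integral_const, smul_eq_mul] at h2
    have : (b - a) * v a ≤ 0 := mul_nonpos_of_nonneg_of_nonpos (by linarith [hb0.1]) hva.le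
    have hbge' : 0 ≤ u b := hbge
    linarith
  · have := (sys_uniq hq hL0 hL h (Sys.zero (hG0 0 le_rfl)) t0 hz hv 0).1
    linarith

lemma pos_int {q : ℝ → ℝ} (hq : LocallyIntegrable q volume) {α β : ℝ} (hαβ : α < β)
    (h1 : ∀ᵐ t ∂(volume.restrict (Icc α β)), 0 ≤ q t)
    (h2 : ¬ ∀ᵐ t ∂(volume.restrict (Icc α β)), q t = 0) : 0 < ∫ t in α..β, q t := by
  have hi : IntegrableOn q (Icc α β) volume := hq.integrableOn_isCompact isCompact_Icc
  rw [intervalIntegral.integral_of_le hαβ.le, ← integral_Icc_eq_integral_Ioc]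
  have h3 : 0 ≤ ∫ t in Icc α β, q t := integral_nonneg_of_ae h1
  rcases h3.lt_or_eq with h | h
  · exact h
  · exact absurd ((integral_eq_zero_iff_of_nonneg_ae h1 hi).mp h.symm) h2

lemma int_nonneg_sub {f : ℝ → ℝ} {α β : ℝ}
    (h1 : ∀ᵐ t ∂(volume.restrict (Icc α β)), 0 ≤ f t) {s t : ℝ} (hs : α ≤ s) (hst : s ≤ t) (ht : t ≤ β) :
    0 ≤ ∫ r in s..t, f r := by
  apply intervalIntegral.integral_nonneg_of_ae_restrict hst
  exact ae_restrict_of_ae_restrict_of_subset (Icc_subset_Icc hs ht) h1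

lemma v_anti {q G u v : ℝ → ℝ} (h : Sys q G u v) (hG : ∀ s, 0 ≤ G s) {α β : ℝ}
    (h1 : ∀ᵐ t ∂(volume.restrict (Icc α β)), 0 ≤ q t) {s t : ℝ} (hs : α ≤ s) (hst : s ≤ t) (ht : t ≤ β) :
    v t ≤ v s := by
  have := h.hv s t
  have h3 : 0 ≤ ∫ r in s..t, q r * G (u r) :=
    int_nonneg_sub (h1.mono fun r hr => mul_nonneg hr (hG _)) hs hst ht
  linarith

lemma v_mono {q G u v : ℝ → ℝ} (h : Sys q G u v) (hG : ∀ s, 0 ≤ G s) {α β : ℝ}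
    (h1 : ∀ᵐ t ∂(volume.restrict (Icc α β)), 0 ≤ - q t) {s t : ℝ} (hs : α ≤ s) (hst : s ≤ t) (ht : t ≤ β) :
    v s ≤ v t := by
  have := h.hv s t
  have h3 : 0 ≤ ∫ r in s..t, - (q r * G (u r)) :=
    int_nonneg_sub (h1.mono fun r hr => by nlinarith [hG (u r)]) hs hst ht
  rw [intervalIntegral.integral_neg] at h3
  linarith

lemma u_le {q G u v : ℝ → ℝ} (h : Sys q G u v) {s t c : ℝ} (hst : s ≤ t)
    (hc : ∀ r ∈ Icc s t, v r ≤ c) : u t - u s ≤ (t - s) * c := by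
  rw [h.hu]
  have := intervalIntegral.integral_mono_on (μ := volume) hst (h.cv.intervalIntegrable s t)
    (continuous_const.intervalIntegrable s t) hc
  simpa using this

lemma u_ge {q G u v : ℝ → ℝ} (h : Sys q G u v) {s t c : ℝ} (hst : s ≤ t)
    (hc : ∀ r ∈ Icc s t, c ≤ v r) : (t - s) * c ≤ u t - u s := by
  rw [h.hu]
  have := intervalIntegral.integral_mono_on (μ := volume) hst 
    (continuous_const.intervalIntegrable s t) (h.cv.intervalIntegrable s t) hc
  simpa using this

lemma apriori_I {q : ℝ → ℝ} (hq : LocallyIntegrable q volume) {α β : ℝ} (hαβ : α < β)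
    (h1 : ∀ᵐ t ∂(volume.restrict (Icc α β)), 0 ≤ q t)
    (h2 : ¬ ∀ᵐ t ∂(volume.restrict (Icc α β)), q t = 0) :
    ∃ c > 0, ∃ K0 > 0, ∀ K ≥ K0, ∀ M > 0, ∀ G : ℝ → ℝ, Continuous G → (∀ s, 0 ≤ G s) →
      (∀ s ≥ M, K * s ≤ G s) → ∀ u v, Sys q G u v → (∀ t ∈ Icc α β, 0 ≤ u t) →
      ∀ t ∈ Icc α β, c * u t < M := by
  obtain ⟨h, hh0, hhβ, hq0⟩ : ∃ h > 0, 2 * h < β - α ∧ 0 < ∫ t in (α+h)..(β-h), q t := by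
    have hc : Continuous (fun h => (∫ t in α..(β-h), q t) - ∫ t in α..(α+h), q t) :=
      ((prim_cont hq α).comp (by fun_prop : Continuous fun h => β - h)).sub
        ((prim_cont hq α).comp (by fun_prop : Continuous fun h => α + h))
    have h0 : 0 < (fun h => (∫ t in α..(β-h), q t) - ∫ t in α..(α+h), q t) 0 := by
      simpa using pos_int hq hαβ h1 h2
    obtain ⟨δ, hδ, hb⟩ := Metric.eventually_nhds_iff.mp (hc.continuousAt.eventually (lt_mem_nhds h0))
    refine ⟨min (δ/2) ((β-α)/4), by have : 0 < β - α := by linarith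
                                    positivity, ?_, ?_⟩
    · have := min_le_right (δ/2) ((β-α)/4)
      linarith
    · have h3 : 0 < min (δ/2) ((β-α)/4) := lt_min (by linarith) (by linarith)
      have := @hb (min (δ/2) ((β-α)/4)) (by
        rw [Real.dist_eq, sub_zero, abs_of_pos h3]
        have := min_le_left (δ/2) ((β-α)/4)
        linarith)
      rwa [intervalIntegral.integral_interval_sub_left (li_ii hq _ _) (li_ii hq _ _)] at this
  set q0 := ∫ t in (α+h)..(β-h), q t with hq0d
  have hba : 0 < β - α := by linarith
  set c := h / (β - α) with hcd
  have hc0 : 0 < c := by positivity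
  have hch : c * (β - α) = h := by rw [hcd]; field_simp
  refine ⟨c, hc0, 2 / (h * c * q0) + 1, by positivity, ?_⟩
  intro K hK M hM G hGc hG hGK u v hs hu0 t ht
  obtain ⟨tm, htm, hmax⟩ := isCompact_Icc.exists_isMaxOn (nonempty_Icc.mpr hαβ.le) hs.cu.continuousOn
  set S := u tm with hS
  have hmax' : ∀ r ∈ Icc α β, u r ≤ S := fun r hr => hmax hr
  suffices c * S < M from (mul_le_mul_of_nonneg_left (hmax' t ht) hc0.le).trans_lt this
  by_contra! hcon
  have hS0 : 0 < S := by
    by_contra! h9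
    nlinarith
  have va : ∀ {s t : ℝ}, α ≤ s → s ≤ t → t ≤ β → v t ≤ v s := fun a b c => v_anti hs hG h1 a b c
  have conc1 : ∀ s t : ℝ, α ≤ s → s ≤ t → t ≤ β → u t - u s ≤ (t - s) * v s := fun s t a b d =>
    u_le hs b (fun r hr => va a hr.1 (hr.2.trans d))
  have conc2 : ∀ s t : ℝ, α ≤ s → s ≤ t → t ≤ β → (t - s) * v t ≤ u t - u s := fun s t a b d =>
    u_ge hs b (fun r hr => va (a.trans hr.1) hr.2 d)
  have low : ∀ r ∈ Icc (α + h) (β - h), c * S ≤ u r := by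
    intro r hr
    have hrI : r ∈ Icc α β := ⟨by linarith [hr.1], by linarith [hr.2]⟩
    have ur := hu0 r hrI
    have key : h * S ≤ (β - α) * u r := by
      rcases le_total r tm with hle | hle
      · have a1 := conc1 r tm hrI.1 hle htm.2
        have a2 := conc2 α r le_rfl hrI.1 hrI.2
        have a3 := hu0 α ⟨le_rfl, hαβ.le⟩
        have b1 := mul_le_mul_of_nonneg_left a1 (show 0 ≤ r - α by linarith [hrI.1])
        have b2 := mul_le_mul_of_nonneg_left a2 (show 0 ≤ tm - r by linarith)
        have b3 := mul_nonneg (show 0 ≤ tm - r by linarith) a3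
        have b4 := mul_le_mul_of_nonneg_right (show h ≤ r - α by linarith [hr.1]) hS0.le
        have b5 := mul_le_mul_of_nonneg_right (show tm - α ≤ β - α by linarith [htm.2]) ur
        nlinarith
      · have a1 := conc2 tm r htm.1 hle hrI.2
        have a2 := conc1 r β hrI.1 hrI.2 le_rfl
        have a3 := hu0 β ⟨hαβ.le, le_rfl⟩
        have b1 := mul_le_mul_of_nonneg_left a1 (show 0 ≤ β - r by linarith [hrI.2])
        have b2 := mul_le_mul_of_nonneg_left a2 (show 0 ≤ r - tm by linarith)
        have b3 := mul_nonneg (show 0 ≤ r - tm by linarith) a3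
        have b4 := mul_le_mul_of_nonneg_right (show h ≤ β - r by linarith [hr.2]) hS0.le
        have b5 := mul_le_mul_of_nonneg_right (show β - tm ≤ β - α by linarith [htm.1]) ur
        nlinarith
    rw [← hch] at key
    have : (β - α) * (c * S) ≤ (β - α) * u r := by linarith
    exact le_of_mul_le_mul_left this hba
  have i1 : h * v (α + h) ≤ S := by
    have := conc2 α (α + h) le_rfl (by linarith) (by linarith)
    have a3 := hu0 α ⟨le_rfl, hαβ.le⟩
    have := hmax' (α + h) ⟨by linarith, by linarith⟩
    nlinarith
  have i2 : - (h * v (β - h)) ≤ S := by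
    have := conc1 (β - h) β (by linarith) (by linarith) le_rfl
    have a3 := hu0 β ⟨hαβ.le, le_rfl⟩
    have := hmax' (β - h) ⟨by linarith, by linarith⟩
    nlinarith
  have K0 : 0 < K := lt_of_lt_of_le (by positivity) hK
  have i3 : q0 * (K * (c * S)) ≤ ∫ r in (α+h)..(β-h), q r * G (u r) := by
    rw [hq0d, ← intervalIntegral.integral_mul_const]
    apply intervalIntegral.integral_mono_ae_restrict (by linarith) ((li_ii hq _ _).mul_const _)
      (ii_mul hq (hGc.comp hs.cu) _ _)
    have h1' := ae_restrict_of_ae_restrict_of_subset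
      (Icc_subset_Icc (show α ≤ α + h by linarith) (show β - h ≤ β by linarith)) h1
    filter_upwards [h1', ae_restrict_mem measurableSet_Icc] with r hr hrm
    have a1 := low r hrm
    have a2 := hGK (u r) (hcon.trans a1)
    exact mul_le_mul_of_nonneg_left ((mul_le_mul_of_nonneg_left a1 K0.le).trans a2) hr
  have i4 := hs.hv (α + h) (β - h)
  have i5 : 2 < h * c * q0 * K := by
    have : 2 / (h * c * q0) < K := by linarith
    rw [div_lt_iff₀ (by positivity)] at this
    linarith
  have i6 : h * (q0 * (K * (c * S))) ≤ 2 * S := by nlinarith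
  nlinarith

lemma u_convex {q G u v : ℝ → ℝ} (h : Sys q G u v) (hG : ∀ s, 0 ≤ G s) {α β : ℝ}
    (h1 : ∀ᵐ t ∂(volume.restrict (Icc α β)), 0 ≤ - q t) {t : ℝ} (ht : t ∈ Icc α β) :
    u t ≤ u α ∨ u t ≤ u β := by
  have a1 : u t - u α ≤ (t - α) * v t :=
    u_le h ht.1 (fun r hr => v_mono h hG h1 hr.1 hr.2 ht.2)
  have a2 : (β - t) * v t ≤ u β - u t :=
    u_ge h ht.2 (fun r hr => v_mono h hG h1 ht.1 hr.1 hr.2)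
  rcases le_total (v t) 0 with hv | hv
  · left
    nlinarith [ht.1]
  · right
    nlinarith [ht.2]

lemma sig_mono {σ : ℕ → ℝ} {n : ℕ} (h : ∀ i < n, σ i < σ (i+1)) : ∀ j ≤ n, ∀ i ≤ j, σ i ≤ σ j := by
  intro j
  induction j with
  | zero => intro _ i hi; rw [Nat.le_zero.mp hi]
  | succ k ih =>
    intro hk i hi
    rcases Nat.le_succ_iff.mp hi with h1 | h1
    · exact (ih (by omega) i h1).trans (h k (by omega)).le
    · rw [h1]

lemma sig_cover {σ : ℕ → ℝ} {t : ℝ} (n : ℕ) (h0 : σ 0 ≤ t) (h1 : t ≤ σ (n+1)) :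
    ∃ i ≤ n, t ∈ Icc (σ i) (σ (i+1)) := by
  induction n with
  | zero => exact ⟨0, le_rfl, h0, h1⟩
  | succ k ih =>
    rcases le_total t (σ (k+1)) with h | h
    · obtain ⟨i, hi, hi2⟩ := ih h
      exact ⟨i, by omega, hi2⟩
    · exact ⟨k+1, le_rfl, h, h1⟩

lemma apriori {q : ℝ → ℝ} (hq : LocallyIntegrable q volume) {T : ℝ} {m : ℕ} (hm : 1 ≤ m) {σ : ℕ → ℝ}
    (h0 : σ 0 = 0) (hT : σ (2*m) = T) (hσ : ∀ i < 2*m, σ i < σ (i+1))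
    (hp : ∀ i < m, PosOn q (Set.Icc (σ (2*i)) (σ (2*i+1))))
    (hn : ∀ i < m, PosOn (fun t => - q t) (Set.Icc (σ (2*i+1)) (σ (2*i+2)))) :
    ∃ K > 0, ∀ M > 0, ∃ M' > 0, ∀ G : ℝ → ℝ, Continuous G → (∀ s, 0 ≤ G s) →
      (∀ s ≥ M, K * s ≤ G s) → ∀ u v, Sys q G u v →
      ((∀ t ∈ Icc 0 (σ 1), 0 ≤ u t) → ∀ t ∈ Icc 0 (σ 1), u t < M') ∧
      ((∀ t ∈ Icc 0 T, 0 ≤ u t) → u T = u 0 → ∀ t ∈ Icc 0 T, u t < M') := by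
  have H := fun i (hi : i < m) => apriori_I hq (hσ (2*i) (by omega)) (hp i hi).1 (hp i hi).2
  choose! c hc K0 hK0 H using H
  refine ⟨∑ i ∈ Finset.range m, K0 i, Finset.sum_pos (fun i hi => hK0 i (Finset.mem_range.mp hi))
    ⟨0, Finset.mem_range.mpr hm⟩, ?_⟩
  intro M hM
  have hpos : ∀ i ∈ Finset.range m, 0 < M / c i := fun i hi => div_pos hM (hc i (Finset.mem_range.mp hi))
  refine ⟨∑ i ∈ Finset.range m, M / c i, Finset.sum_pos hpos
    ⟨0, Finset.mem_range.mpr hm⟩, ?_⟩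
  intro G hGc hG hGK u v hs
  set M' := ∑ i ∈ Finset.range m, M / c i
  have key : ∀ i < m, (∀ t ∈ Icc (σ (2*i)) (σ (2*i+1)), 0 ≤ u t) →
      ∀ t ∈ Icc (σ (2*i)) (σ (2*i+1)), u t < M' := by
    intro i hi hu t ht
    have h3 := H i hi (∑ i ∈ Finset.range m, K0 i)
      (Finset.single_le_sum (f := K0) (fun i hi => (hK0 i (Finset.mem_range.mp hi)).le) (Finset.mem_range.mpr hi))
      M hM G hGc hG hGK u v hs hu t ht
    have h4 : u t < M / c i := by
      rw [lt_div_iff₀ (hc i hi)]; linarith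
    exact h4.trans_le (Finset.single_le_sum (f := fun i => M / c i) (fun i hi => (hpos i hi).le) (Finset.mem_range.mpr hi))
  constructor
  · have := key 0 (by omega)
    simpa [h0] using this
  · intro hu huT t ht
    have mono := sig_mono hσ
    have hsub : ∀ i, i + 1 ≤ 2*m → Icc (σ i) (σ (i+1)) ⊆ Icc 0 T := fun i hi =>
      Icc_subset_Icc (by rw [← h0]; exact mono i (by omega) 0 (by omega))
        (by rw [← hT]; exact mono _ le_rfl (i+1) hi)
    have key' : ∀ i < m, ∀ t ∈ Icc (σ (2*i)) (σ (2*i+1)), u t < M' := fun i hi =>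
      key i hi (fun t ht => hu t (hsub (2*i) (by omega) ht))
    obtain ⟨i, hi, hti⟩ := sig_cover (σ := σ) (t := t) (2*m-1) (by rw [h0]; exact ht.1)
      (by rw [show 2*m-1+1 = 2*m by omega, hT]; exact ht.2)
    rcases Nat.even_or_odd' i with ⟨j, rfl | rfl⟩
    · exact key' j (by omega) t hti
    · rcases u_convex hs hG (hn j (by omega)).1 hti with h5 | h5
      · exact h5.trans_lt (key' j (by omega) _ ⟨(hσ _ (by omega)).le, le_rfl⟩)
      · refine h5.trans_lt ?_
        rcases Nat.lt_or_ge (j+1) m with h6 | h6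
        · exact key' (j+1) h6 _ ⟨by rw [show 2*(j+1) = 2*j+1+1 by ring], by
            rw [show 2*j+1+1 = 2*(j+1) by ring]; exact (hσ _ (by omega)).le⟩
        · rw [show 2*j+1+1 = 2*m by omega, hT, huT, ← h0]
          exact key' 0 (by omega) _ ⟨by simp, (by simpa using (hσ 0 (by omega)).le)⟩

lemma g_deriv {g : ℝ → ℝ} (hg : ContDiffOn ℝ 1 g (Ici 0)) {s : ℝ} (hs : 0 < s) :
    HasDerivAt g (derivWithin g (Ici 0) s) s := by
  have h1 : DifferentiableWithinAt ℝ g (Ici 0) s := hg.differentiableOn (by norm_num) s hs.le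
  exact h1.hasDerivWithinAt.hasDerivAt (Ici_mem_nhds hs)

lemma z_id {q G u v g : ℝ → ℝ} (hq : LocallyIntegrable q volume) (hGc : Continuous G) (h : Sys q G u v)
    (hg : ContDiffOn ℝ 1 g (Ici 0)) (hgp : ∀ s, 0 < s → 0 < g s) {s t : ℝ}
    (hu : ∀ r ∈ uIcc s t, 0 < u r) (hGg : ∀ r ∈ uIcc s t, G (u r) = g (u r)) :
    v t / g (u t) - v s / g (u s) = - (∫ r in s..t, q r)
      - ∫ r in s..t, derivWithin g (Ici 0) (u r) * (v r / g (u r))^2 := by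
  have hcu : ContDiff ℝ 1 u := by
    rw [contDiff_one_iff_deriv]
    refine ⟨fun t => (h.hasDerivAt t).differentiableAt, ?_⟩
    have : deriv u = v := funext fun t => (h.hasDerivAt t).deriv
    rw [this]; exact h.cv
  have hgu : ContDiffOn ℝ 1 (fun r => g (u r)) (uIcc s t) :=
    hg.comp hcu.contDiffOn (fun r hr => (hu r hr).le)
  have hw : ContDiffOn ℝ 1 (fun r => (g (u r))⁻¹) (uIcc s t) :=
    hgu.inv (fun r hr => (hgp _ (hu r hr)).ne')
  have hwa := hw.absolutelyContinuousOnInterval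
  have hqG : LocallyIntegrable (fun r => q r * G (u r)) volume := by
    rw [locallyIntegrable_iff]
    intro k hk
    exact (hq.integrableOn_isCompact hk).mul_continuousOn (hGc.comp h.cu).continuousOn hk
  have hv : v = fun r => v s - ∫ x in s..r, q x * G (u x) := by
    funext r
    have := h.hv s r
    linarith
  have hva : AbsolutelyContinuousOnInterval v s t := by
    rw [hv]
    refine AbsolutelyContinuousOnInterval.sub ?_ ?_
    · exact (contDiff_const (n := 1)).contDiffOn.absolutelyContinuousOnInterval
    · exact (li_ii hqG s t).absolutelyContinuousOnInterval_intervalIntegral left_mem_uIcc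
  have hz := hva.integral_deriv_mul_eq_sub hwa
  have hcz : ContinuousOn (fun r => derivWithin g (Ici 0) (u r) * (v r / g (u r))^2) (uIcc s t) := by
    have c1 : ContinuousOn (derivWithin g (Ici 0)) (Ici 0) :=
      hg.continuousOn_derivWithin (uniqueDiffOn_Ici 0) le_rfl
    refine (c1.comp h.cu.continuousOn (fun r hr => (hu r hr).le)).mul ?_
    exact (h.cv.continuousOn.div hgu.continuousOn (fun r hr => (hgp _ (hu r hr)).ne')).pow 2
  have hqn : IntervalIntegrable (fun r => - q r) volume s t := (li_ii hq s t).neg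
  rw [← intervalIntegral.integral_neg, ← intervalIntegral.integral_sub hqn hcz.intervalIntegrable]
  simp only [div_eq_mul_inv]
  rw [← hz]
  apply intervalIntegral.integral_congr_ae
  filter_upwards [LocallyIntegrable.ae_hasDerivAt_integral hqG] with r hr hrm
  have hrm' := uIoc_subset_uIcc hrm
  have d1 : deriv v r = - (q r * G (u r)) := by
    have h1 := (hr s).const_sub (v s)
    rw [← hv] at h1
    exact h1.deriv
  have gne := (hgp _ (hu r hrm')).ne'
  have d2 : deriv (fun r => (g (u r))⁻¹) r = - (derivWithin g (Ici 0) (u r) * v r) / (g (u r))^2 := by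
    have h1 : HasDerivAt (fun r => g (u r)) (derivWithin g (Ici 0) (u r) * v r) r :=
      (g_deriv hg (hu r hrm')).comp r (h.hasDerivAt r)
    exact (h1.fun_inv gne).deriv
  rw [d1, d2, hGg r hrm']
  field_simp
  ring

lemma z_lemma {q G u v g : ℝ → ℝ} (hq : LocallyIntegrable q volume) (hGc : Continuous G) (h : Sys q G u v)
    (hg : ContDiffOn ℝ 1 g (Ici 0)) (hgp : ∀ s, 0 < s → 0 < g s) {T r0 η Q B : ℝ} (hT : 0 < T)
    (hη : ∀ s ∈ Ioc 0 r0, |derivWithin g (Ici 0) s| ≤ η) (hη0 : 0 ≤ η)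
    (hu : ∀ t ∈ Icc 0 T, u t ∈ Ioc 0 r0) (hGg : ∀ s ∈ Icc 0 r0, G s = g s) (huT : u T = u 0)
    (hQ : Q = ∫ r in (0:ℝ)..T, |q r|) (hB : B = Q + 1) (h1 : η * B^2 * T < 1)
    (h2 : η * B^2 * T < - ∫ r in (0:ℝ)..T, q r) : v 0 < v T := by
  set z : ℝ → ℝ := fun t => v t / g (u t) with hzd
  have hid : ∀ s ∈ Icc 0 T, ∀ t ∈ Icc 0 T, z t - z s = - (∫ r in s..t, q r)
      - ∫ r in s..t, derivWithin g (Ici 0) (u r) * (z r)^2 := by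
    intro s hs t ht
    have hsub : uIcc s t ⊆ Icc 0 T := by
      rw [← uIcc_of_le hT.le] at *
      exact uIcc_subset_uIcc hs ht
    apply z_id hq hGc h hg hgp
    · exact fun r hr => (hu r (hsub hr)).1
    · exact fun r hr => hGg _ ⟨(hu r (hsub hr)).1.le, (hu r (hsub hr)).2⟩
  have hQ0 : 0 ≤ Q := by
    rw [hQ]
    exact intervalIntegral.integral_nonneg hT.le (fun _ _ => abs_nonneg _)
  have hB0 : 0 < B := by linarith
  have hqi : LocallyIntegrable (fun s => |q s|) volume := fun x => IntegrableAtFilter.norm (hq x)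
  have hqb : ∀ s ∈ Icc 0 T, ∀ t ∈ Icc 0 T, |∫ r in s..t, q r| ≤ Q := by
    intro s hs t ht
    have a1 := intervalIntegral.norm_integral_le_abs_integral_norm (f := q) (μ := volume) (a := s) (b := t)
    have m := prim_mono hqi (fun _ => abs_nonneg _) 0
    have e := intervalIntegral.integral_interval_sub_left (li_ii hqi 0 t) (li_ii hqi 0 s)
    have m1 := m hs.1
    have m2 := m hs.2
    have m3 := m ht.1
    have m4 := m ht.2
    simp only [intervalIntegral.integral_same, Real.norm_eq_abs] at m1 m2 m3 m4 a1
    refine a1.trans ?_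
    rw [← e, hQ, abs_le]
    constructor <;> linarith
  have hgz : ∀ s ∈ Icc 0 T, ∀ t ∈ Icc 0 T, (∀ r ∈ uIoc s t, r ≠ t → |z r| ≤ B) →
      |∫ r in s..t, derivWithin g (Ici 0) (u r) * (z r)^2| ≤ η * B^2 * T := by
    intro s hs t ht hb
    have hsub : uIcc s t ⊆ Icc 0 T := by
      rw [← uIcc_of_le hT.le] at *
      exact uIcc_subset_uIcc hs ht
    have := intervalIntegral.norm_integral_le_of_norm_le_const_ae (a := s) (b := t)
      (f := fun r => derivWithin g (Ici 0) (u r) * (z r)^2) (C := η * B^2) (by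
        filter_upwards [Measure.ae_ne volume t] with r hrt hr
        rw [Real.norm_eq_abs, abs_mul, abs_pow]
        exact mul_le_mul (hη _ (hu r (hsub (uIoc_subset_uIcc hr))))
          (pow_le_pow_left₀ (abs_nonneg _) (hb r hr hrt) 2) (by positivity) hη0)
    refine this.trans (mul_le_mul_of_nonneg_left ?_ (by positivity))
    rw [abs_le]
    constructor <;> linarith [hs.1, hs.2, ht.1, ht.2]
  obtain ⟨t0, ht0, hv0⟩ : ∃ t ∈ Ioo 0 T, v t = 0 :=
    exists_hasDerivAt_eq_zero hT h.cu.continuousOn huT.symm (fun x _ => h.hasDerivAt x)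
  have ht0' : t0 ∈ Icc 0 T := ⟨ht0.1.le, ht0.2.le⟩
  have hz0 : z t0 = 0 := by simp [hzd, hv0]
  have hzc : ContinuousOn z (Icc 0 T) := by
    refine h.cv.continuousOn.div ?_ (fun r hr => (hgp _ (hu r hr).1).ne')
    exact hg.continuousOn.comp h.cu.continuousOn (fun r hr => (hu r hr).1.le)
  have hzb : ∀ t ∈ Icc 0 T, |z t| < B := by
    by_contra! hcon
    have hcomp : IsCompact (Icc 0 T ∩ z ⁻¹' {y | B ≤ |y|}) :=
      (isCompact_Icc).of_isClosed_subset
        (hzc.preimage_isClosed_of_isClosed isClosed_Icc (isClosed_le continuous_const continuous_abs))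
        inter_subset_left
    obtain ⟨t1, ⟨ht1, hB1⟩, hmin⟩ := hcomp.exists_isMinOn (f := fun t => |t - t0|)
      (by obtain ⟨t, ht, hb⟩ := hcon; exact ⟨t, ht, hb⟩) (by fun_prop)
    have hB1' : B ≤ |z t1| := hB1
    have hlt : ∀ r ∈ uIoc t0 t1, r ≠ t1 → |z r| ≤ B := by
      intro r hr hne
      by_contra! hc
      have hsub : uIcc t0 t1 ⊆ Icc 0 T := by
        rw [← uIcc_of_le hT.le] at *
        exact uIcc_subset_uIcc ht0' ht1
      have h3 : |t1 - t0| ≤ |r - t0| := hmin ⟨hsub (uIoc_subset_uIcc hr), hc.le⟩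
      rcases le_total t0 t1 with hl | hl
      · rw [uIoc_of_le hl] at hr
        rw [abs_of_nonneg (by linarith), abs_of_pos (by linarith [hr.1])] at h3
        exact hne (le_antisymm hr.2 (by linarith))
      · rw [uIoc_of_ge hl] at hr
        rw [abs_of_nonpos (by linarith), abs_of_nonpos (by linarith [hr.2])] at h3
        linarith [hr.1]
    have a1 := hid t0 ht0' t1 ht1
    have a2 := hqb t0 ht0' t1 ht1
    have a3 := hgz t0 ht0' t1 ht1 hlt
    rw [hz0, sub_zero] at a1
    have : |z t1| < B := by
      rw [a1]
      rw [abs_le] at a2 a3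
      rw [abs_lt]
      constructor <;> linarith
    linarith
  have a1 := hid 0 ⟨le_rfl, hT.le⟩ T ⟨hT.le, le_rfl⟩
  have a3 := hgz 0 ⟨le_rfl, hT.le⟩ T ⟨hT.le, le_rfl⟩ (fun r hr _ => (hzb r (by
    rw [uIoc_of_le hT.le] at hr; exact ⟨hr.1.le, hr.2⟩)).le)
  rw [abs_le] at a3
  have a4 : z 0 < z T := by linarith
  simp only [hzd, huT] at a4
  exact (div_lt_div_iff_of_pos_right (hgp _ (hu 0 ⟨le_rfl, hT.le⟩).1)).mp a4

lemma trunc {g : ℝ → ℝ} (hg : ContDiffOn ℝ 1 g (Ici 0)) (hg0 : g 0 = 0) (hgp : ∀ s, 0 < s → 0 < g s)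
    {K M N : ℝ} (hK : 0 < K) (hM : 0 < M) (hMN : M ≤ N) (hgK : ∀ s ≥ M, K * s ≤ g s) :
    ∃ G : ℝ → ℝ, ∃ L : ℝ, 0 ≤ L ∧ (∀ x y, |G x - G y| ≤ L * |x - y|) ∧ (∀ s ≤ 0, G s = 0) ∧
      (∀ s ∈ Icc 0 N, G s = g s) ∧ (∀ s, 0 ≤ G s) ∧ (∀ s ≥ M, K * s ≤ G s) := by
  have hN : 0 < N := hM.trans_le hMN
  have hgn : ∀ s, 0 ≤ s → 0 ≤ g s := by
    intro s hs
    rcases hs.lt_or_eq with h | h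
    · exact (hgp s h).le
    · rw [← h, hg0]
  obtain ⟨L, hL⟩ : ∃ L : ℝ, ∀ x ∈ Icc 0 N, |derivWithin g (Ici 0) x| ≤ L := by
    have c1 : ContinuousOn (derivWithin g (Ici 0)) (Icc 0 N) :=
      (hg.continuousOn_derivWithin (uniqueDiffOn_Ici 0) le_rfl).mono Icc_subset_Ici_self
    exact isCompact_Icc.exists_bound_of_continuousOn c1
  have hL0 : 0 ≤ L := (abs_nonneg _).trans (hL 0 ⟨le_rfl, hN.le⟩)
  have hlip : ∀ x ∈ Icc 0 N, ∀ y ∈ Icc 0 N, |g x - g y| ≤ L * |x - y| := by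
    intro x hx y hy
    refine (convex_Icc 0 N).norm_image_sub_le_of_norm_hasDerivWithin_le (f' := derivWithin g (Ici 0)) ?_ hL hy hx
    intro r hr
    exact ((hg.differentiableOn (by norm_num) r hr.1).hasDerivWithinAt).mono Icc_subset_Ici_self
  have hp : ∀ s, max 0 (min s N) ∈ Icc 0 N := fun s => ⟨le_max_left _ _, max_le hN.le (min_le_right _ _)⟩
  refine ⟨fun s => g (max 0 (min s N)) + K * max (s - N) 0, L + K, by positivity, ?_, ?_, ?_, ?_, ?_⟩
  · intro x y
    have a1 := hlip _ (hp x) _ (hp y)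
    have a2 : |max 0 (min x N) - max 0 (min y N)| ≤ |x - y| :=
      (abs_max_sub_max_le_abs _ _ _ |> fun h => by simpa [max_comm] using h : 
        |max 0 (min x N) - max 0 (min y N)| ≤ |min x N - min y N|).trans (by
          have := abs_min_sub_min_le_max x N y N
          simpa using this)
    have a3 : |max (x - N) 0 - max (y - N) 0| ≤ |x - y| := by
      have := abs_max_sub_max_le_abs (x - N) (y - N) 0
      simpa using this
    have e : g (max 0 (min x N)) + K * max (x - N) 0 - (g (max 0 (min y N)) + K * max (y - N) 0)
      = (g (max 0 (min x N)) - g (max 0 (min y N))) + K * (max (x - N) 0 - max (y - N) 0) := by ring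
    simp only
    rw [e]
    refine (abs_add_le _ _).trans ?_
    rw [abs_mul, abs_of_pos hK, add_mul]
    exact add_le_add (a1.trans (mul_le_mul_of_nonneg_left a2 hL0)) (mul_le_mul_of_nonneg_left a3 hK.le)
  · intro s hs
    simp only
    rw [max_eq_left ((min_le_left _ _).trans hs), hg0, max_eq_right (by linarith)]
    simp
  · intro s hs
    simp only
    rw [min_eq_left hs.2, max_eq_right hs.1, max_eq_right (by linarith [hs.2])]
    simp
  · intro s
    exact add_nonneg (hgn _ (hp s).1) (mul_nonneg hK.le (le_max_right _ _))
  · intro s hs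
    simp only
    rcases le_total s N with h | h
    · rw [min_eq_left h, max_eq_right (by linarith), max_eq_right (by linarith)]
      simpa using hgK s hs
    · rw [min_eq_right h, max_eq_right hN.le, max_eq_left (by linarith)]
      have := hgK N hMN
      linarith

lemma v_bound {q G u v : ℝ → ℝ} (hq : LocallyIntegrable q volume) (h : Sys q G u v) {s t C : ℝ} (hst : s ≤ t)
    (hb : ∀ r ∈ Icc s t, |G (u r)| ≤ C) : |v t - v s| ≤ C * ∫ r in s..t, |q r| := by
  have hqi : LocallyIntegrable (fun s => |q s|) volume := fun x => IntegrableAtFilter.norm (hq x)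
  rw [h.hv, abs_neg, ← Real.norm_eq_abs, ← intervalIntegral.integral_const_mul]
  apply intervalIntegral.norm_integral_le_of_norm_le hst _ ((li_ii hqi s t).const_mul C)
  refine Eventually.of_forall fun r hr => ?_
  rw [Real.norm_eq_abs, abs_mul, mul_comm]
  exact mul_le_mul_of_nonneg_right (hb r ⟨hr.1.le, hr.2⟩) (abs_nonneg _)

set_option maxHeartbeats 2000000 in
lemma core {q : ℝ → ℝ} (hq : LocallyIntegrable q volume) {T a : ℝ} (hT : 0 < T)
    (hκ : (∫ t in (0:ℝ)..T, q t) < 0) (ha0 : 0 < a) (haT : a ≤ T)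
    (hqa : ∀ᵐ t ∂(volume.restrict (Icc 0 a)), 0 ≤ q t)
    {g : ℝ → ℝ} (hg : ContDiffOn ℝ 1 g (Ici 0)) (hg0 : g 0 = 0) (hgp : ∀ s, 0 < s → 0 < g s)
    (hg'0 : derivWithin g (Ici 0) 0 = 0)
    {G : ℝ → ℝ} {L N M' : ℝ} (hL0 : 0 ≤ L) (hL : ∀ x y, |G x - G y| ≤ L * |x - y|)
    (hG0 : ∀ s ≤ 0, G s = 0) (hN : 0 < N) (hGg : ∀ s ∈ Icc 0 N, G s = g s) (hGn : ∀ s, 0 ≤ G s)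
    (hM' : 0 < M')
    (hap : ∀ u v, Sys q G u v → (∀ t ∈ Icc 0 a, 0 ≤ u t) → ∀ t ∈ Icc 0 a, u t < M') :
    ∃ u v, Sys q G u v ∧ u T = u 0 ∧ v T = v 0 ∧ ∀ t ∈ Icc 0 T, 0 < u t := by
  have hGc := lip_cont hL
  have hGz : G 0 = 0 := hG0 0 le_rfl
  have hGL : ∀ s, |G s| ≤ L * |s| := fun s => by simpa [hGz] using hL s 0
  have hqi : LocallyIntegrable (fun s => |q s|) volume := fun x => IntegrableAtFilter.norm (hq x)
  obtain ⟨Γ, hΓ1, hΓ⟩ := sys_const hq hL0 hL T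
  have hΓ0 : 0 < Γ := by linarith
  choose U V hS hU0 hV0 using fun p : ℝ × ℝ => sys_exists hq hL0 hL hGz p.1 p.2
  have hbd : ∀ p : ℝ × ℝ, ∀ t ∈ Icc 0 T, |U p t| ≤ Γ * max |p.1| |p.2| := by
    intro p t ht
    have := hΓ _ _ _ _ (hS p) (Sys.zero hGz) t ht
    simp only [sub_zero, hU0, hV0] at this
    exact (le_max_left _ _).trans this
  have hTT : T ∈ Icc 0 T := ⟨hT.le, le_rfl⟩
  have h0T : (0:ℝ) ∈ Icc 0 T := ⟨le_rfl, hT.le⟩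
  have cU : Continuous (fun p => U p T) := by
    refine (LipschitzWith.of_dist_le' (K := Γ) (fun p p' => ?_)).continuous
    have := hΓ _ _ _ _ (hS p) (hS p') T hTT
    simp only [hU0, hV0] at this
    exact (le_max_left _ _).trans this
  have cV : Continuous (fun p => V p T) := by
    refine (LipschitzWith.of_dist_le' (K := Γ) (fun p p' => ?_)).continuous
    have := hΓ _ _ _ _ (hS p) (hS p') T hTT
    simp only [hU0, hV0] at this
    exact (le_max_right _ _).trans this
  have cF1 : Continuous (fun p => U p T - p.1) := cU.sub continuous_fst
  have cF2 : Continuous (fun p => V p T - p.2) := cV.sub continuous_snd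
  have hpos : ∀ p : ℝ × ℝ, 0 < p.1 → 0 ≤ U p T - p.1 → ∀ t ∈ Icc 0 T, 0 < U p t := by
    intro p hp h1 t ht
    by_contra! hc
    have := not_pos hq hL0 hL hG0 (hS p) (by rw [hU0]; exact hp) ht hc
    linarith
  -- constants
  set Q := ∫ r in (0:ℝ)..T, |q r| with hQ
  have hmono := prim_mono hqi (fun _ => abs_nonneg _) 0
  have hQ0 : 0 ≤ Q := intervalIntegral.integral_nonneg hT.le (fun _ _ => abs_nonneg _)
  have hQt : ∀ t ≤ T, ∫ r in (0:ℝ)..t, |q r| ≤ Q := fun t ht => hmono ht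
  set A := M' / a + 1 with hA
  have hA' : M' < A * a := by rw [hA, add_mul, div_mul_cancel₀ _ ha0.ne']; linarith
  have hA0 : 0 < A := by positivity
  set D := L * M' * Q with hD
  have hD0 : 0 ≤ D := by positivity
  set B := D + (M' / a + 1) with hB
  have hB0 : 0 < B := by positivity
  -- eta
  obtain ⟨η, hη0, e1, e2, e3⟩ : ∃ η > 0, η * (Q + 1)^2 * T < 1 ∧
      η * (Q + 1)^2 * T < - (∫ t in (0:ℝ)..T, q t) ∧ η * Γ * Q ≤ 1/2 := by
    set κ := - (∫ t in (0:ℝ)..T, q t)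
    have hκ0 : 0 < min 1 κ := lt_min one_pos (by simp only [κ]; linarith)
    set D0 := (Q + 1)^2 * T + Γ * Q with hD0
    have hD0p : 0 < D0 := by positivity
    refine ⟨min 1 κ / (2 * D0), by positivity, ?_⟩
    set η := min 1 κ / (2 * D0) with hη
    have hη0 : 0 < η := by positivity
    have h3 : η * (2 * D0) = min 1 κ := by rw [hη]; field_simp
    have m1 := min_le_left 1 κ
    have m2 := min_le_right 1 κ
    have p1 : 0 ≤ η * ((Q+1)^2 * T) := by positivity
    have p2 : 0 ≤ η * (Γ * Q) := by positivity
    have e : η * D0 = η * ((Q+1)^2 * T) + η * (Γ * Q) := by rw [hD0]; ring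
    refine ⟨?_, ?_, ?_⟩
    · nlinarith
    · nlinarith
    · nlinarith
  -- r0
  obtain ⟨r0, hr0, hrN, hrB, hd⟩ : ∃ r0 > 0, r0 ≤ N ∧ r0 ≤ B ∧ ∀ s ∈ Icc 0 r0, |derivWithin g (Ici 0) s| ≤ η := by
    have c1 : ContinuousWithinAt (derivWithin g (Ici 0)) (Ici 0) 0 :=
      hg.continuousOn_derivWithin (uniqueDiffOn_Ici 0) le_rfl 0 self_mem_Ici
    obtain ⟨δ, hδ, h3⟩ := Metric.continuousWithinAt_iff.mp c1 η hη0
    refine ⟨min (δ/2) (min N B), lt_min (by linarith) (lt_min hN hB0),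
      (min_le_right _ _).trans (min_le_left _ _), (min_le_right _ _).trans (min_le_right _ _), ?_⟩
    intro s hs
    have := @h3 s hs.1 (by
      rw [Real.dist_eq, sub_zero, abs_of_nonneg hs.1]
      have := hs.2.trans (min_le_left _ _)
      linarith)
    rw [hg'0, Real.dist_eq, sub_zero] at this
    exact this.le
  have hGη : ∀ s, |s| ≤ r0 → |G s| ≤ η * r0 := by
    intro s hs
    rcases le_total s 0 with h | h
    · rw [hG0 s h, abs_zero]; positivity
    · rw [abs_of_nonneg h] at hs
      rw [hGg s ⟨h, hs.trans hrN⟩]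
      have := (convex_Icc 0 r0).norm_image_sub_le_of_norm_hasDerivWithin_le (f := g)
        (f' := derivWithin g (Ici 0)) (C := η) (fun r hr =>
          ((hg.differentiableOn (by norm_num) r hr.1).hasDerivWithinAt).mono Icc_subset_Ici_self)
        hd (left_mem_Icc.mpr hr0.le) ⟨h, hs⟩
      rw [hg0, sub_zero, sub_zero, Real.norm_eq_abs, Real.norm_eq_abs, abs_of_nonneg h] at this
      exact this.trans (mul_le_mul_of_nonneg_left hs hη0.le)
  set y0 := r0 / Γ with hy0
  have hy0p : 0 < y0 := by positivity
  have hΓy : Γ * y0 = r0 := by rw [hy0]; field_simp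
  have hy0B : y0 ≤ B := by
    have : y0 ≤ r0 := by rw [← hΓy]; nlinarith
    linarith
  -- h
  obtain ⟨h, hh0, hhT, hhq⟩ : ∃ h > 0, h ≤ T ∧ L * (Γ * B) * (∫ r in (T-h)..T, |q r|) ≤ y0 / 2 := by
    have hc : Continuous (fun h => L * (Γ * B) * (Q - ∫ r in (0:ℝ)..(T-h), |q r|)) :=
      continuous_const.mul (continuous_const.sub ((prim_cont hqi 0).comp (by fun_prop : Continuous fun h => T - h)))
    have h0 : (fun h => L * (Γ * B) * (Q - ∫ r in (0:ℝ)..(T-h), |q r|)) 0 < y0 / 2 := by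
      simp only [sub_zero, ← hQ, sub_self, mul_zero]; positivity
    obtain ⟨δ, hδ, hb⟩ := Metric.eventually_nhds_iff.mp (hc.continuousAt.eventually (gt_mem_nhds h0))
    have h3 : 0 < min (δ/2) T := lt_min (by linarith) hT
    refine ⟨min (δ/2) T, h3, min_le_right _ _, ?_⟩
    have := @hb (min (δ/2) T) (by
        rw [Real.dist_eq, sub_zero, abs_of_pos h3]
        have := min_le_left (δ/2) T
        linarith)
    rw [hQ, intervalIntegral.integral_interval_sub_left (li_ii hqi _ _) (li_ii hqi _ _)] at this
    exact this.le
  obtain ⟨ε, hε0, hε1, hε2, hε3, hε4⟩ : ∃ ε > 0, ε ≤ M' ∧ ε ≤ y0 ∧ ε ≤ a * y0 ∧ ε ≤ h * (y0 / 2) :=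
    ⟨min (min M' y0) (min (a * y0) (h * (y0 / 2))), by positivity,
      (min_le_left _ _).trans (min_le_left _ _), (min_le_left _ _).trans (min_le_right _ _),
      (min_le_right _ _).trans (min_le_left _ _), (min_le_right _ _).trans (min_le_right _ _)⟩
  have hdec : ∀ p : ℝ × ℝ, U p a ≤ p.1 + a * p.2 := by
    intro p
    have := u_le (hS p) ha0.le (c := p.2) (fun r hr => by
      rw [← hV0 p]; exact v_anti (hS p) hGn hqa le_rfl hr.1 hr.2)
    rw [hU0, sub_zero] at this
    linarith
  have haI : a ∈ Icc 0 T := ⟨ha0.le, haT⟩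
  obtain ⟨x, hx, y, hy, z1, z2⟩ := topo (fun p => U p T - p.1) (fun p => V p T - p.2) cF1 cF2
    ε M' (-A) B y0 hε1 (by linarith) hy0B
    (by
      intro x hx
      by_contra! hc
      have h1 := hpos (x, -A) (hε0.trans_le hx.1) hc a haI
      have h2 := hdec (x, -A)
      simp only at h2
      linarith [hx.2])
    (by
      intro x hx
      by_contra! hc
      have h1 := hpos (x, B) (hε0.trans_le hx.1) hc
      have h2 := hap _ _ (hS (x, B)) (fun t ht => (h1 t ⟨ht.1, ht.2.trans haT⟩).le)
      have h3 : ∀ r ∈ Icc 0 a, B - D ≤ V (x, B) r := by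
        intro r hr
        have h4 := v_bound hq (hS (x, B)) (C := L * M') hr.1 (fun s hs => by
          refine (hGL _).trans (mul_le_mul_of_nonneg_left ?_ hL0)
          rw [abs_of_pos (h1 s ⟨hs.1, hs.2.trans (hr.2.trans haT)⟩)]
          exact (h2 s ⟨hs.1, hs.2.trans hr.2⟩).le)
        have h5 := h4.trans (mul_le_mul_of_nonneg_left (hQt r (hr.2.trans haT)) (by positivity))
        rw [hV0, abs_le] at h5
        simp only at h5
        linarith [h5.1]
      have h6 := u_ge (hS (x, B)) ha0.le h3
      have h7 := h2 a ⟨ha0.le, le_rfl⟩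
      have h8 : (a - 0) * (B - D) = M' + a := by
        rw [hB]; field_simp; ring
      rw [h8, hU0] at h6
      simp only at h6
      linarith [hx.1])
    (by
      intro y hy
      by_contra! hc
      have h1 := hpos (M', y) hM' hc
      have h2 := hap _ _ (hS (M', y)) (fun t ht => (h1 t ⟨ht.1, ht.2.trans haT⟩).le) 0 ⟨le_rfl, ha0.le⟩
      rw [hU0] at h2
      exact lt_irrefl _ h2)
    (by
      have h1 : ∀ t ∈ Icc 0 T, |U (ε, y0) t| ≤ r0 := by
        intro t ht
        refine (hbd (ε, y0) t ht).trans ?_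
        simp only
        rw [abs_of_pos hε0, abs_of_pos hy0p, max_eq_right hε2, hΓy]
      have h3 : ∀ r ∈ Icc 0 T, y0 / 2 ≤ V (ε, y0) r := by
        intro r hr
        have h4 := v_bound hq (hS (ε, y0)) (C := η * r0) hr.1 (fun s hs => 
          hGη _ (h1 s ⟨hs.1, hs.2.trans hr.2⟩))
        have h5 := h4.trans (mul_le_mul_of_nonneg_left (hQt r hr.2) (by positivity))
        rw [hV0, abs_le, ← hΓy] at h5
        simp only at h5
        have h7 := mul_le_mul_of_nonneg_right e3 hy0p.le
        have h8 : η * (Γ * y0) * Q = η * Γ * Q * y0 := by ring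
        rw [h8] at h5
        linarith [h5.1]
      have h6 := u_ge (hS (ε, y0)) hT.le h3
      rw [hU0] at h6
      have : 0 < (T - 0) * (y0 / 2) := by rw [sub_zero]; positivity
      simp only at h6 ⊢
      linarith)
    (by
      intro y hy h1
      have h2 := hpos (ε, y) hε0 h1.ge
      have h1' : U (ε, y) T = U (ε, y) 0 := by rw [hU0]; simpa [sub_eq_zero] using h1
      rcases lt_or_ge y (-y0) with h3 | h3
      · have h4 := h2 a haI
        have h5 := hdec (ε, y)
        simp only at h5
        have h6 := mul_lt_mul_of_pos_left h3 ha0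
        linarith
      · have h4 : |y| ≤ y0 := abs_le.mpr ⟨h3, hy.2⟩
        have h5 : ∀ t ∈ Icc 0 T, U (ε, y) t ∈ Ioc 0 r0 := by
          intro t ht
          refine ⟨h2 t ht, (le_abs_self _).trans ((hbd (ε, y) t ht).trans ?_)⟩
          rw [← hΓy]
          refine mul_le_mul_of_nonneg_left (max_le ?_ h4) hΓ0.le
          simp only
          rw [abs_of_pos hε0]; exact hε2
        have h6 := z_lemma hq hGc (hS (ε, y)) hg hgp hT (fun s hs => hd s ⟨hs.1.le, hs.2⟩) hη0.le h5
          (fun s hs => hGg s ⟨hs.1, hs.2.trans hrN⟩) h1' hQ rfl e1 e2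
        rw [hV0] at h6
        simpa using h6)
    (by
      intro y hy h1
      have h2 := hpos (ε, y) hε0 h1.ge
      by_contra! hc
      have h1' : U (ε, y) T = ε := by simpa [sub_eq_zero] using h1
      have hyp : 0 < y := hy0p.trans_le hy.1
      have hb : ∀ t ∈ Icc 0 T, |G (U (ε, y) t)| ≤ L * (Γ * B) := by
        intro t ht
        refine (hGL _).trans (mul_le_mul_of_nonneg_left ((hbd (ε, y) t ht).trans ?_) hL0)
        refine mul_le_mul_of_nonneg_left (max_le ?_ ?_) hΓ0.le
        · simp only
          rw [abs_of_pos hε0]; exact hε2.trans hy0B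
        · simp only
          rw [abs_of_pos hyp]; exact hy.2
      have h3 : ∀ r ∈ Icc (T - h) T, y0 / 2 ≤ V (ε, y) r := by
        intro r hr
        have h4 := v_bound hq (hS (ε, y)) hr.2 (fun s hs => hb s ⟨by linarith [hr.1, hs.1], hs.2⟩)
        have h5 : ∫ s in r..T, |q s| ≤ ∫ s in (T-h)..T, |q s| := by
          have j1 := intervalIntegral.integral_interval_sub_left (li_ii hqi 0 T) (li_ii hqi 0 r)
          have j2 := intervalIntegral.integral_interval_sub_left (li_ii hqi 0 T) (li_ii hqi 0 (T-h))
          have := hmono hr.1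
          simp only at this
          linarith
        have h6 := (h4.trans (mul_le_mul_of_nonneg_left h5 (by positivity))).trans hhq
        rw [abs_le] at h6
        simp only at hc
        linarith [h6.2, hy.1]
      have h6 := u_ge (hS (ε, y)) (by linarith) h3
      have h7 := h2 (T - h) ⟨by linarith, by linarith⟩
      rw [h1', sub_sub_cancel] at h6
      linarith)
  refine ⟨U (x, y), V (x, y), hS _, ?_, ?_, hpos _ (hε0.trans_le hx.1) z1.ge⟩
  · rw [hU0]; simpa [sub_eq_zero] using z1
  · rw [hV0]; simpa [sub_eq_zero] using z2


/-- Theorem 2.1: under `(q#)`, `(q*)`, `(g*)`, `(gs)` the equation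
`u'' + q(t) g(u) = 0` has at least one positive `T`-periodic solution. -/
theorem stmt2 (T : ℝ) (hT : 0 < T) (q : ℝ → ℝ)
    (hqper : Function.Periodic q T)
    (hqloc : MeasureTheory.LocallyIntegrable q MeasureTheory.volume)
    (m : ℕ) (hm : 1 ≤ m) (hqsign : SignCond q T m)
    (hqmean : (∫ t in (0:ℝ)..T, q t) < 0)
    (g : ℝ → ℝ) (hgC1 : ContDiffOn ℝ 1 g (Set.Ici 0))
    (hg0 : g 0 = 0) (hgpos : ∀ s : ℝ, 0 < s → 0 < g s)
    (hg'0 : derivWithin g (Set.Ici 0) 0 = 0)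
    (hgsup : Filter.Tendsto (fun s => g s / s) Filter.atTop Filter.atTop) :
    ∃ u : ℝ → ℝ,
      IsSol (fun t s => q t * g s) u ∧ (∀ t, 0 < u t) ∧ Function.Periodic u T := by
  obtain ⟨σ, h0, hσT, hσ, hp, hn⟩ := hqsign
  obtain ⟨K, hK, hKap⟩ := apriori hqloc hm h0 hσT hσ hp hn
  obtain ⟨M, hM, hgK⟩ : ∃ M > 0, ∀ s ≥ M, K * s ≤ g s := by
    obtain ⟨M, hM⟩ := (hgsup.eventually_ge_atTop K).exists_forall_of_atTop
    refine ⟨max M 1, by positivity, fun s hs => ?_⟩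
    have hs0 : 0 < s := lt_of_lt_of_le one_pos ((le_max_right _ _).trans hs)
    have := hM s ((le_max_left _ _).trans hs)
    rwa [le_div_iff₀ hs0] at this
  obtain ⟨M', hM', hap⟩ := hKap M hM
  obtain ⟨G, L, hL0, hL, hG0, hGg, hGn, hGK⟩ := trunc hgC1 hg0 hgpos hK hM (le_max_left M M') hgK
  have hGc := lip_cont hL
  have hap' := hap G hGc hGn hGK
  have ha0 : 0 < σ 1 := by
    have := hσ 0 (by omega)
    rwa [h0] at this
  have haT : σ 1 ≤ T := by
    rw [← hσT]; exact sig_mono hσ (2*m) le_rfl 1 (by omega)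
  have hqa : ∀ᵐ t ∂(volume.restrict (Icc 0 (σ 1))), 0 ≤ q t := by
    have := (hp 0 (by omega)).1
    simpa [h0] using this
  obtain ⟨u, v, hS, huT, hvT, hpos⟩ := core hqloc hT hqmean ha0 haT hqa hgC1 hg0 hgpos hg'0 hL0 hL hG0
    (lt_of_lt_of_le hM (le_max_left M M')) hGg hGn hM' (fun u v hS => (hap' u v hS).1)
  have hub := (hap' u v hS).2 (fun t ht => (hpos t ht).le) huT
  have hper : Function.Periodic u T := by
    intro t
    exact (sys_uniq hqloc hL0 hL (hS.shift hqper) hS 0 (by simpa using huT) (by simpa using hvT) t).1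
  have hall : ∀ t, 0 < u t ∧ u t < M' := by
    intro t
    obtain ⟨s, hs, hst⟩ := hper.exists_mem_Ico₀ hT t
    rw [hst]
    exact ⟨hpos s ⟨hs.1, hs.2.le⟩, hub s ⟨hs.1, hs.2.le⟩⟩
  have hGu : ∀ t, G (u t) = g (u t) := fun t =>
    hGg _ ⟨(hall t).1.le, (hall t).2.le.trans (le_max_right _ _)⟩
  refine ⟨u, ⟨v, hS.hasDerivAt, ?_, ?_⟩, fun t => (hall t).1, hper⟩
  · simp only [← hGu]
    rw [locallyIntegrable_iff]
    intro k hk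
    exact (hqloc.integrableOn_isCompact hk).mul_continuousOn (hGc.comp hS.cu).continuousOn hk
  · intro t
    simp only [← hGu]
    have := hS.hv 0 t
    linarith
end

section
/- Let T > 0, let a : ℝ → ℝ be T-periodic and locally integrable satisfying condition (a*), and for μ > 0 set a_μ(t) = a⁺(t) − μ a⁻(t), where a⁺ and a⁻ are the positive and negative parts of a. Let g ∈ C¹([0,∞)) satisfy (g*) and (gs). Then there exists μ* > 0 such that for every μ > μ* the equation u'' + a_μ(t) g(u) = 0 has at least 2^m − 1 distinct positive T-periodic solutions. -/
open MeasureTheory Set Filter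

lemma pm_seg (φ : ℝ → ℝ) (a b : ℝ) (hab : a ≤ b) (hφ : ContinuousOn φ (Icc a b))
    (hc : ∀ t ∈ Icc a b, 0 ≤ Real.cos (φ t)) (ha : φ a ∈ Icc (-(Real.pi/2)) 0)
    (hs : 0 ≤ Real.sin (φ b)) : φ b ∈ Icc 0 (Real.pi/2) := by
  have hpi := Real.pi_pos
  have key1 : φ b ≤ Real.pi/2 := by
    by_contra h
    push Not at h
    have hv : min (φ b) Real.pi ∈ Icc (φ a) (φ b) :=
      ⟨le_min (by linarith [ha.2]) (by linarith [ha.2]), min_le_left _ _⟩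
    obtain ⟨t, ht, hte⟩ := intermediate_value_Icc hab hφ hv
    have := hc t ht
    rw [hte] at this
    have h2 : Real.cos (min (φ b) Real.pi) < 0 :=
      Real.cos_neg_of_pi_div_two_lt_of_lt (lt_min h (by linarith))
        (lt_of_le_of_lt (min_le_right _ _) (by linarith))
    linarith
  have key2 : -(Real.pi/2) ≤ φ b := by
    by_contra h
    push Not at h
    have hv : max (φ b) (-Real.pi) ∈ Icc (φ b) (φ a) :=
      ⟨le_max_left _ _, max_le (by linarith [ha.1]) (by linarith [ha.1])⟩
    obtain ⟨t, ht, hte⟩ := intermediate_value_Icc' hab hφ hv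
    have := hc t ht
    rw [hte, ← Real.cos_neg] at this
    have h2 : Real.cos (-max (φ b) (-Real.pi)) < 0 := by
      apply Real.cos_neg_of_pi_div_two_lt_of_lt
      · have : max (φ b) (-Real.pi) < -(Real.pi/2) := max_lt h (by linarith)
        linarith
      · have := le_max_right (φ b) (-Real.pi)
        linarith
    linarith
  refine ⟨?_, key1⟩
  by_contra h
  push Not at h
  have := Real.sin_neg_of_neg_of_neg_pi_lt h (by linarith)
  linarith

lemma pm_seg' (φ : ℝ → ℝ) (a b : ℝ) (hab : a ≤ b) (hφ : ContinuousOn φ (Icc a b))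
    (hc : ∀ t ∈ Icc a b, 0 ≤ Real.cos (φ t)) (ha : φ b ∈ Icc (-(Real.pi/2)) 0)
    (hs : 0 ≤ Real.sin (φ a)) : φ a ∈ Icc 0 (Real.pi/2) := by
  have := pm_seg (fun t => φ (-t)) (-b) (-a) (by linarith)
    (hφ.comp continuous_neg.continuousOn (fun t ht => ⟨by linarith [ht.2], by linarith [ht.1]⟩))
    (fun t ht => hc (-t) ⟨by linarith [ht.2], by linarith [ht.1]⟩) (by simpa using ha)
    (by simpa using hs)
  simpa using this

/-- planar Poincare-Miranda theorem -/
theorem poincare_miranda (f₁ f₂ : ℝ × ℝ → ℝ) (h₁ : Continuous f₁) (h₂ : Continuous f₂)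
    (a b c d : ℝ) (hab : a ≤ b) (hcd : c ≤ d)
    (hl : ∀ y ∈ Icc c d, f₁ (a, y) ≤ 0) (hr : ∀ y ∈ Icc c d, 0 ≤ f₁ (b, y))
    (hb : ∀ x ∈ Icc a b, f₂ (x, c) ≤ 0) (ht : ∀ x ∈ Icc a b, 0 ≤ f₂ (x, d)) :
    ∃ p : ℝ × ℝ, p.1 ∈ Icc a b ∧ p.2 ∈ Icc c d ∧ f₁ p = 0 ∧ f₂ p = 0 := by
  by_contra hno
  push Not at hno
  have hpi := Real.pi_pos
  let cl : ℝ × ℝ → ℝ × ℝ := fun p => (max a (min b p.1), max c (min d p.2))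
  have hcl : Continuous cl := by fun_prop
  have hcl1 : ∀ p, (cl p).1 ∈ Icc a b := fun p => ⟨le_max_left _ _, max_le hab (min_le_left _ _)⟩
  have hcl2 : ∀ p, (cl p).2 ∈ Icc c d := fun p => ⟨le_max_left _ _, max_le hcd (min_le_left _ _)⟩
  have hclid : ∀ x ∈ Icc a b, ∀ y ∈ Icc c d, cl (x, y) = (x, y) := by
    intro x hx y hy
    simp only [cl, min_eq_right hx.2, min_eq_right hy.2, max_eq_right hx.1, max_eq_right hy.1]
  let F : C(ℝ × ℝ, {z : ℂ // z ≠ 0}) :=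
    ⟨fun p => ⟨(⟨f₁ (cl p), f₂ (cl p)⟩ : ℂ), by
      intro h
      have e1 := congrArg Complex.re h
      have e2 := congrArg Complex.im h
      simp only [Complex.zero_re, Complex.zero_im] at e1 e2
      exact hno (cl p) (hcl1 p) (hcl2 p) e1 e2⟩, by
      apply Continuous.subtype_mk
      have : (fun p => (⟨f₁ (cl p), f₂ (cl p)⟩ : ℂ)) =
        fun p => ((f₁ (cl p) : ℝ) : ℂ) + ((f₂ (cl p) : ℝ) : ℂ) * Complex.I := by
        funext p
        apply Complex.ext <;> simp
      rw [this]
      fun_prop⟩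
  obtain ⟨ℓ, ⟨-, hℓ⟩, -⟩ := Complex.isCoveringMap_exp.existsUnique_continuousMap_lifts
    F (a₀ := (0, 0)) (e₀ := Complex.log (F (0,0)).1) (by
      apply Subtype.ext
      exact Complex.exp_log (F (0,0)).2)
  have hre : ∀ p, Real.exp (ℓ p).re * Real.cos (ℓ p).im = f₁ (cl p) := by
    intro p
    have := congrArg (fun z => (Subtype.val z).re) (congrFun hℓ p)
    simp only [Function.comp] at this
    rw [Complex.exp_re] at this
    exact this
  have him : ∀ p, Real.exp (ℓ p).re * Real.sin (ℓ p).im = f₂ (cl p) := by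
    intro p
    have := congrArg (fun z => (Subtype.val z).im) (congrFun hℓ p)
    simp only [Function.comp] at this
    rw [Complex.exp_im] at this
    exact this
  have Ra : a ∈ Icc a b := ⟨le_rfl, hab⟩
  have Rb : b ∈ Icc a b := ⟨hab, le_rfl⟩
  have Rc : c ∈ Icc c d := ⟨le_rfl, hcd⟩
  have Rd : d ∈ Icc c d := ⟨hcd, le_rfl⟩
  let k := toIocDiv Real.two_pi_pos (-Real.pi) (ℓ (b, c)).im
  let ψ : ℝ × ℝ → ℝ := fun p => (ℓ p).im - k * (2 * Real.pi)
  have hψc : Continuous ψ := by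
    have := ℓ.continuous
    fun_prop
  have hcos : ∀ p, Real.cos (ψ p) = Real.cos (ℓ p).im := fun p => Real.cos_sub_int_mul_two_pi _ _
  have hsin : ∀ p, Real.sin (ψ p) = Real.sin (ℓ p).im := fun p => Real.sin_sub_int_mul_two_pi _ _
  have cR : ∀ y ∈ Icc c d, 0 ≤ Real.cos (ψ (b, y)) := by
    intro y hy
    rw [hcos]
    have := hre (b, y)
    rw [hclid b Rb y hy] at this
    have h3 := hr y hy
    rw [← this] at h3
    exact nonneg_of_mul_nonneg_right h3 (Real.exp_pos _)
  have cL : ∀ y ∈ Icc c d, Real.cos (ψ (a, y)) ≤ 0 := by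
    intro y hy
    rw [hcos]
    have := hre (a, y)
    rw [hclid a Ra y hy] at this
    have h3 := hl y hy
    rw [← this] at h3
    exact nonpos_of_mul_nonpos_right h3 (Real.exp_pos _)
  have sT : ∀ x ∈ Icc a b, 0 ≤ Real.sin (ψ (x, d)) := by
    intro y hy
    rw [hsin]
    have := him (y, d)
    rw [hclid y hy d Rd] at this
    have h3 := ht y hy
    rw [← this] at h3
    exact nonneg_of_mul_nonneg_right h3 (Real.exp_pos _)
  have sB : ∀ x ∈ Icc a b, Real.sin (ψ (x, c)) ≤ 0 := by
    intro y hy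
    rw [hsin]
    have := him (y, c)
    rw [hclid y hy c Rc] at this
    have h3 := hb y hy
    rw [← this] at h3
    exact nonpos_of_mul_nonpos_right h3 (Real.exp_pos _)
  have hk : ψ (b, c) ∈ Ioc (-Real.pi) Real.pi := by
    have := toIocMod_mem_Ioc Real.two_pi_pos (-Real.pi) (ℓ (b, c)).im
    rw [toIocMod, zsmul_eq_mul] at this
    refine ⟨this.1, ?_⟩
    have h2 := this.2
    have e : -Real.pi + 2 * Real.pi = Real.pi := by ring
    rw [e] at h2
    exact h2
  have s0 : ψ (b, c) ∈ Icc (-(Real.pi/2)) 0 := by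
    have h1 := cR c Rc
    have h2 := sB b Rb
    constructor
    · by_contra h
      push Not at h
      have : Real.cos (-ψ (b,c)) < 0 :=
        Real.cos_neg_of_pi_div_two_lt_of_lt (by linarith) (by linarith [hk.1])
      rw [Real.cos_neg] at this
      linarith
    · by_contra h
      push Not at h
      rcases lt_or_eq_of_le hk.2 with h4 | h4
      · have := Real.sin_pos_of_pos_of_lt_pi h h4
        linarith
      · rw [h4, Real.cos_pi] at h1
        linarith
  have s1 := pm_seg (fun y => ψ (b, y)) c d hcd (by fun_prop) cR s0 (sT b Rb)
  have s2 := pm_seg' (fun x => ψ (x, d) - Real.pi/2) a b hab (by fun_prop)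
    (fun x hx => by simpa only [Real.cos_sub_pi_div_two] using sT x hx)
    ⟨by linarith [s1.1], by linarith [s1.2]⟩
    (by simpa only [Real.sin_sub_pi_div_two] using neg_nonneg.2 (cL d Rd))
  have s3 := pm_seg' (fun y => ψ (a, y) - Real.pi) c d hcd (by fun_prop)
    (fun x hx => by simpa only [Real.cos_sub_pi] using neg_nonneg.2 (cL x hx))
    ⟨by linarith [s2.1], by linarith [s2.2]⟩
    (by simpa only [Real.sin_sub_pi] using neg_nonneg.2 (sB a Ra))
  have e1 : ∀ z : ℝ, Real.cos (z - Real.pi - Real.pi/2) = - Real.sin z := by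
    intro z
    rw [Real.cos_sub_pi_div_two, Real.sin_sub_pi]
  have e2 : ∀ z : ℝ, Real.sin (z - Real.pi - Real.pi/2) = Real.cos z := by
    intro z
    rw [Real.sin_sub_pi_div_two, Real.cos_sub_pi, neg_neg]
  have s4 := pm_seg (fun x => ψ (x, c) - Real.pi - Real.pi/2) a b hab (by fun_prop)
    (fun x hx => by simpa only [e1] using neg_nonneg.2 (sB x hx))
    ⟨by linarith [s3.1], by linarith [s3.2]⟩
    (by simpa only [e2] using (cR c Rc))
  linarith [s4.1, s0.2]

lemma exp_weight (q : ℝ → ℝ) (hq : ∀ a b, IntervalIntegrable q volume a b) (l : ℝ) (hl : 0 ≤ l)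
    (t : ℝ) (ht : 0 ≤ t) :
    l * ∫ s in (0:ℝ)..t, |q s| * Real.exp (l * ∫ z in (0:ℝ)..s, |q z|) ≤
      Real.exp (l * ∫ z in (0:ℝ)..t, |q z|) := by
  set E : ℝ → ℝ := fun s => Real.exp (l * ∫ z in (0:ℝ)..s, |q z|) with hE
  have hqa : ∀ a b, IntervalIntegrable (fun s => |q s|) volume a b := fun a b => (hq a b).abs
  have hloc : LocallyIntegrable (fun s => |q s|) volume := by
    rw [locallyIntegrable_iff]
    intro k hk
    obtain ⟨R, hR⟩ := hk.isBounded.subset_closedBall 0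
    rw [Real.closedBall_eq_Icc] at hR
    by_cases h0 : (0 - R) ≤ 0 + R
    · exact ((intervalIntegrable_iff_integrableOn_Icc_of_le h0).1 (hqa _ _)).mono_set hR
    · rw [Icc_eq_empty h0] at hR
      rw [subset_empty_iff.1 hR]
      exact integrableOn_empty
  have hmono : Monotone E := by
    intro s s' hss
    apply Real.exp_le_exp.2
    apply mul_le_mul_of_nonneg_left _ hl
    have : (∫ z in (0:ℝ)..s', |q z|) - ∫ z in (0:ℝ)..s, |q z| = ∫ z in s..s', |q z| :=
      intervalIntegral.integral_interval_sub_left (hqa _ _) (hqa _ _)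
    have h2 : 0 ≤ ∫ z in s..s', |q z| :=
      intervalIntegral.integral_nonneg hss (fun _ _ => abs_nonneg _)
    linarith
  have h1 := (hmono.monotoneOn (uIcc 0 t)).intervalIntegral_deriv_mem_uIcc
  have hd : ∀ᵐ s, deriv E s = l * (|q s| * E s) := by
    filter_upwards [LocallyIntegrable.ae_hasDerivAt_integral hloc] with s hs
    have := ((hs 0).const_mul l).exp
    rw [HasDerivAt.deriv this]
    simp only [hE]
    ring
  rw [uIcc_of_le (by linarith [hmono ht])] at h1
  have h2 : ∫ s in (0:ℝ)..t, deriv E s = ∫ s in (0:ℝ)..t, l * (|q s| * E s) := by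
    apply intervalIntegral.integral_congr_ae
    filter_upwards [hd] with s hs _ using hs
  rw [h2, intervalIntegral.integral_const_mul] at h1
  have : E 0 = 1 := by simp [hE]
  linarith [h1.2]

theorem flow_exists (T : ℝ) (hT : 0 < T) (q : ℝ → ℝ)
    (hq : ∀ a b, IntervalIntegrable q volume a b) (G : ℝ → ℝ) (Λ : ℝ) (hΛ : 0 ≤ Λ)
    (hG : ∀ s s', |G s - G s'| ≤ Λ * |s - s'|) :
    ∃ u v : ℝ × ℝ → ℝ → ℝ, Continuous (fun z : (ℝ × ℝ) × ℝ => u z.1 z.2) ∧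
      (∀ p, Continuous (v p)) ∧ Continuous (fun p => v p T) ∧
      ∀ p, ∀ t ∈ Icc 0 T, v p t = p.2 - ∫ s in (0:ℝ)..t, q s * G (u p s) ∧
        u p t = p.1 + ∫ s in (0:ℝ)..t, v p s := by
  have hGc : Continuous G := by
    have : LipschitzWith (Real.toNNReal Λ) G := by
      apply LipschitzWith.of_dist_le_mul
      intro x y
      rw [Real.dist_eq, Real.dist_eq, Real.coe_toNNReal _ hΛ]
      exact hG x y
    exact this.continuous
  have hqa : ∀ a b, IntervalIntegrable (fun s => |q s|) volume a b := fun a b => (hq a b).abs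
  set l : ℝ := 2 * Λ * T + 1 with hl
  have hlpos : 0 < l := by positivity
  set E : ℝ → ℝ := fun s => Real.exp (l * ∫ z in (0:ℝ)..s, |q z|) with hE
  have hEpos : ∀ s, 0 < E s := fun s => Real.exp_pos _
  have hEc : Continuous E := by
    have := intervalIntegral.continuous_primitive hqa 0
    fun_prop
  have hmono : Monotone E := by
    intro s s' hss
    apply Real.exp_le_exp.2
    apply mul_le_mul_of_nonneg_left _ hlpos.le
    have : (∫ z in (0:ℝ)..s', |q z|) - ∫ z in (0:ℝ)..s, |q z| = ∫ z in s..s', |q z| :=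
      intervalIntegral.integral_interval_sub_left (hqa _ _) (hqa _ _)
    have h2 : 0 ≤ ∫ z in s..s', |q z| :=
      intervalIntegral.integral_nonneg hss (fun _ _ => abs_nonneg _)
    linarith
  have hE0 : E 0 = 1 := by simp [hE]
  have hE1 : ∀ s, 0 ≤ s → 1 ≤ E s := fun s hs => hE0 ▸ hmono hs
  let X := C(Icc (0:ℝ) T, ℝ)
  let U : X → ℝ → ℝ := fun w s => E s * IccExtend hT.le w s
  have hUc : ∀ w, Continuous (U w) := fun w => hEc.mul (w.continuous.Icc_extend')
  have hint : ∀ w a b, IntervalIntegrable (fun s => q s * G (U w s)) volume a b :=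
    fun w a b => (hq a b).mul_continuousOn (hGc.comp (hUc w)).continuousOn
  let V : ℝ × ℝ → X → ℝ → ℝ := fun p w t => p.2 - ∫ s in (0:ℝ)..t, q s * G (U w s)
  have hVc : ∀ p w, Continuous (V p w) := fun p w =>
    continuous_const.sub (intervalIntegral.continuous_primitive (hint w) 0)
  let Nf : ℝ × ℝ → X → ℝ → ℝ := fun p w t => (E t)⁻¹ * (p.1 + ∫ s in (0:ℝ)..t, V p w s)
  have hNc : ∀ p w, Continuous (Nf p w) := fun p w =>
    (hEc.inv₀ (fun s => (hEpos s).ne')).mul (continuous_const.add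
      (intervalIntegral.continuous_primitive (fun a b => (hVc p w).intervalIntegrable a b) 0))
  let N : ℝ × ℝ → X → X := fun p w => ⟨fun t => Nf p w t, (hNc p w).comp continuous_subtype_val⟩
  -- pointwise bound
  have hUd : ∀ w w' : X, ∀ s, |U w s - U w' s| ≤ E s * dist w w' := by
    intro w w' s
    simp only [U]
    rw [← mul_sub, abs_mul, abs_of_pos (hEpos s)]
    apply mul_le_mul_of_nonneg_left _ (hEpos s).le
    simp only [IccExtend, Function.comp]
    rw [← Real.dist_eq]
    exact ContinuousMap.dist_apply_le_dist _
  have hVd : ∀ p (w w' : X), ∀ t, 0 ≤ t → |V p w t - V p w' t| ≤ Λ * dist w w' * E t / l := by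
    intro p w w' t ht
    have e : V p w t - V p w' t = ∫ s in (0:ℝ)..t, q s * (G (U w' s) - G (U w s)) := by
      simp only [V, mul_sub]
      rw [intervalIntegral.integral_sub (hint _ _ _) (hint _ _ _)]
      ring
    rw [e]
    have h1 : ‖∫ s in (0:ℝ)..t, q s * (G (U w' s) - G (U w s))‖ ≤
        ∫ s in (0:ℝ)..t, (Λ * dist w w') * (|q s| * E s) := by
      apply intervalIntegral.norm_integral_le_of_norm_le ht
      · filter_upwards with s _
        rw [Real.norm_eq_abs, abs_mul]
        have h2 := (hG (U w' s) (U w s)).trans (mul_le_mul_of_nonneg_left (hUd w' w s) hΛ)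
        rw [dist_comm] at h2
        have := mul_le_mul_of_nonneg_left h2 (abs_nonneg (q s))
        linarith
      · exact ((hqa _ _).mul_continuousOn hEc.continuousOn).const_mul _
    rw [intervalIntegral.integral_const_mul] at h1
    have h3 := exp_weight q hq l hlpos.le t ht
    have h4 : ∫ s in (0:ℝ)..t, |q s| * E s ≤ E t / l := by
      rw [le_div_iff₀ hlpos]; linarith
    rw [← Real.norm_eq_abs]
    calc _ ≤ _ := h1
      _ ≤ Λ * dist w w' * (E t / l) := by gcongr
      _ = _ := by ring
  have hcontr : ∀ p, ContractingWith (1/2) (N p) := by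
    intro p
    refine ⟨by rw [← NNReal.coe_lt_coe]; norm_num, LipschitzWith.of_dist_le_mul fun w w' => ?_⟩
    have hd0 : 0 ≤ dist w w' := dist_nonneg
    have h12 : ((1/2 : NNReal) : ℝ) = 1/2 := by norm_num
    rw [h12, ContinuousMap.dist_le (by positivity)]
    rintro ⟨t, ht⟩
    rw [Real.dist_eq]
    show |Nf p w t - Nf p w' t| ≤ _
    have e : Nf p w t - Nf p w' t = (E t)⁻¹ * ∫ s in (0:ℝ)..t, (V p w s - V p w' s) := by
      simp only [Nf]
      rw [intervalIntegral.integral_sub ((hVc p w).intervalIntegrable _ _)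
        ((hVc p w').intervalIntegrable _ _)]
      ring
    rw [e, abs_mul, abs_of_pos (inv_pos.2 (hEpos t))]
    have h1 : ‖∫ s in (0:ℝ)..t, (V p w s - V p w' s)‖ ≤ (Λ * dist w w' * E t / l) * |t - 0| := by
      apply intervalIntegral.norm_integral_le_of_norm_le_const
      intro s hs
      rw [uIoc_of_le ht.1] at hs
      refine (hVd p w w' s hs.1.le).trans ?_
      have := hmono hs.2
      gcongr
    rw [sub_zero, abs_of_nonneg ht.1, Real.norm_eq_abs] at h1
    calc _ ≤ (E t)⁻¹ * ((Λ * dist w w' * E t / l) * t) :=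
          mul_le_mul_of_nonneg_left h1 (inv_pos.2 (hEpos t)).le
      _ = Λ * t / l * dist w w' := by
          have := (hEpos t).ne'
          field_simp
      _ ≤ 1/2 * dist w w' := by
          apply mul_le_mul_of_nonneg_right _ hd0
          rw [div_le_iff₀ hlpos, hl]
          have := mul_le_mul_of_nonneg_left ht.2 hΛ
          linarith
  let W : ℝ × ℝ → X := fun p => ContractingWith.fixedPoint (N p) (hcontr p)
  have hW : ∀ p, N p (W p) = W p := fun p => (hcontr p).fixedPoint_isFixedPt
  have hWl : ∀ p p', dist (W p) (W p') ≤ 2 * (1 + T) * dist p p' := by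
    intro p p'
    have h1 : dist (W p) (W p') ≤ ((1 + T) * dist p p') / (1 - ((1/2 : NNReal) : ℝ)) := by
      apply (hcontr p).fixedPoint_lipschitz_in_map (hcontr p')
      intro w
      rw [ContinuousMap.dist_le (by positivity)]
      rintro ⟨t, ht⟩
      rw [Real.dist_eq]
      show |Nf p w t - Nf p' w t| ≤ _
      have e : Nf p w t - Nf p' w t = (E t)⁻¹ * ((p.1 - p'.1) + t * (p.2 - p'.2)) := by
        have : (∫ s in (0:ℝ)..t, V p w s) - ∫ s in (0:ℝ)..t, V p' w s = t * (p.2 - p'.2) := by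
          rw [← intervalIntegral.integral_sub ((hVc p w).intervalIntegrable _ _)
            ((hVc p' w).intervalIntegrable _ _)]
          simp [V]
          ring
        simp only [Nf]
        rw [← this]
        ring
      rw [e, abs_mul, abs_of_pos (inv_pos.2 (hEpos t))]
      have hinv : (E t)⁻¹ ≤ 1 := inv_le_one_of_one_le₀ (hE1 t ht.1)
      have d1 : |p.1 - p'.1| ≤ dist p p' := by
        rw [Prod.dist_eq, ← Real.dist_eq]; exact le_max_left _ _
      have d2 : |p.2 - p'.2| ≤ dist p p' := by
        rw [Prod.dist_eq, ← Real.dist_eq p.2]; exact le_max_right _ _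
      have d3 : |(p.1 - p'.1) + t * (p.2 - p'.2)| ≤ (1 + T) * dist p p' := by
        refine (abs_add_le _ _).trans ?_
        rw [abs_mul, abs_of_nonneg ht.1]
        have : t * |p.2 - p'.2| ≤ T * dist p p' :=
          mul_le_mul ht.2 d2 (abs_nonneg _) hT.le
        linarith
      calc _ ≤ 1 * ((1 + T) * dist p p') :=
            mul_le_mul hinv d3 (abs_nonneg _) zero_le_one
        _ = _ := one_mul _
    have h12 : ((1/2 : NNReal) : ℝ) = 1/2 := by norm_num
    rw [h12] at h1
    have e7 : (1 + T) * dist p p' / (1 - 1 / 2) = 2 * (1 + T) * dist p p' := by ring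
    linarith
  have hWc : Continuous W := by
    have : LipschitzWith (Real.toNNReal (2 * (1 + T))) W := by
      apply LipschitzWith.of_dist_le_mul
      intro x y
      rw [Real.coe_toNNReal _ (by positivity)]
      exact hWl x y
    exact this.continuous
  refine ⟨fun p => U (W p), fun p => V p (W p), ?_, fun p => hVc _ _, ?_, ?_⟩
  · apply (hEc.comp continuous_snd).mul
    simp only [IccExtend, Function.comp]
    have : Continuous (fun z : (ℝ × ℝ) × ℝ => ((W z.1 : X), projIcc 0 T hT.le z.2)) := by
      apply (hWc.comp continuous_fst).prodMk
      exact continuous_projIcc.comp continuous_snd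
    exact continuous_eval.comp this
  · have hc1 : ∀ p p', |V p (W p) T - V p' (W p') T| ≤
      (1 + Λ * (2 * (1 + T)) * E T / l) * dist p p' := by
      intro p p'
      have h1 := hVd p (W p) (W p') T hT.le
      have h2 : V p (W p') T - V p' (W p') T = p.2 - p'.2 := by simp [V]
      have d2 : |p.2 - p'.2| ≤ dist p p' := by
        rw [Prod.dist_eq, ← Real.dist_eq p.2]; exact le_max_right _ _
      have h3 : Λ * dist (W p) (W p') * E T / l ≤ Λ * (2 * (1 + T) * dist p p') * E T / l := by
        have := hWl p p'
        have := (hEpos T).le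
        gcongr
      have h4 := abs_add_le (V p (W p) T - V p (W p') T) (V p (W p') T - V p' (W p') T)
      rw [h2] at h4
      have h5 : V p (W p) T - V p (W p') T + (p.2 - p'.2) = V p (W p) T - V p' (W p') T := by
        rw [← h2]; ring
      rw [h5] at h4
      have e6 : (1 + Λ * (2 * (1 + T)) * E T / l) * dist p p' =
        Λ * (2 * (1 + T) * dist p p') * E T / l + dist p p' := by ring
      linarith
    have : LipschitzWith (Real.toNNReal (1 + Λ * (2 * (1 + T)) * E T / l))
        (fun p => V p (W p) T) := by
      apply LipschitzWith.of_dist_le_mul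
      intro x y
      have := (hEpos T).le
      rw [Real.coe_toNNReal _ (by positivity), Real.dist_eq]
      exact hc1 x y
    exact this.continuous
  · intro p t ht
    refine ⟨rfl, ?_⟩
    have h1 : (N p (W p)) ⟨t, ht⟩ = (W p) ⟨t, ht⟩ := by rw [hW]
    show E t * IccExtend hT.le (W p) t = _
    rw [IccExtend_of_mem _ _ ht, ← h1]
    show E t * ((E t)⁻¹ * (p.1 + ∫ s in (0:ℝ)..t, V p (W p) s)) = _
    rw [← mul_assoc, mul_inv_cancel₀ (hEpos t).ne', one_mul]

structure Traj (T : ℝ) (q G u v : ℝ → ℝ) : Prop where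
  hq : ∀ a b, IntervalIntegrable q volume a b
  hGc : Continuous G
  hG0 : ∀ s, s ≤ 0 → G s = 0
  hGn : ∀ s, 0 ≤ G s
  uc : Continuous u
  vc : Continuous v
  hv : ∀ s t, 0 ≤ s → s ≤ t → t ≤ T → v t - v s = - ∫ x in s..t, q x * G (u x)
  hu : ∀ s t, 0 ≤ s → s ≤ t → t ≤ T → u t - u s = ∫ x in s..t, v x

namespace Traj
variable {T : ℝ} {q G u v : ℝ → ℝ}

lemma int (h : Traj T q G u v) (a b : ℝ) : IntervalIntegrable (fun x => q x * G (u x)) volume a b :=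
  (h.hq a b).mul_continuousOn (h.hGc.comp h.uc).continuousOn

lemma u_ge (h : Traj T q G u v) {s t c : ℝ} (h0 : 0 ≤ s) (hst : s ≤ t) (hT : t ≤ T)
    (hc : ∀ x ∈ Icc s t, c ≤ v x) : u s + c * (t - s) ≤ u t := by
  have h1 := h.hu s t h0 hst hT
  have h2 : ∫ x in s..t, c ≤ ∫ x in s..t, v x :=
    intervalIntegral.integral_mono_on hst (by simp) (h.vc.intervalIntegrable _ _) hc
  simp only [intervalIntegral.integral_const, smul_eq_mul] at h2
  linarith

lemma u_le (h : Traj T q G u v) {s t c : ℝ} (h0 : 0 ≤ s) (hst : s ≤ t) (hT : t ≤ T)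
    (hc : ∀ x ∈ Icc s t, v x ≤ c) : u t ≤ u s + c * (t - s) := by
  have h1 := h.hu s t h0 hst hT
  have h2 : ∫ x in s..t, v x ≤ ∫ x in s..t, c :=
    intervalIntegral.integral_mono_on hst (h.vc.intervalIntegrable _ _) (by simp) hc
  simp only [intervalIntegral.integral_const, smul_eq_mul] at h2
  linarith

lemma restr {a b s t : ℝ} {p : ℝ → Prop} (hp : ∀ᵐ x ∂(volume.restrict (Icc a b)), p x)
    (has : a ≤ s) (htb : t ≤ b) : ∀ᵐ x ∂(volume.restrict (Icc s t)), p x :=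
  ae_mono (Measure.restrict_mono (Icc_subset_Icc has htb) le_rfl) hp

lemma v_anti (h : Traj T q G u v) {a b : ℝ} (ha : 0 ≤ a) (hb : b ≤ T)
    (hq : ∀ᵐ x ∂(volume.restrict (Icc a b)), 0 ≤ q x) {s t : ℝ} (hs : a ≤ s) (hst : s ≤ t)
    (ht : t ≤ b) : v t ≤ v s := by
  have h1 := h.hv s t (by linarith) hst (by linarith)
  have h2 : 0 ≤ ∫ x in s..t, q x * G (u x) := by
    apply intervalIntegral.integral_nonneg_of_ae_restrict hst
    filter_upwards [restr hq hs ht] with x hx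
    exact mul_nonneg hx (h.hGn _)
  linarith

lemma v_mono (h : Traj T q G u v) {a b : ℝ} (ha : 0 ≤ a) (hb : b ≤ T)
    (hq : ∀ᵐ x ∂(volume.restrict (Icc a b)), q x ≤ 0) {s t : ℝ} (hs : a ≤ s) (hst : s ≤ t)
    (ht : t ≤ b) : v s ≤ v t := by
  have h1 := h.hv s t (by linarith) hst (by linarith)
  have h2 : 0 ≤ ∫ x in s..t, -(q x * G (u x)) := by
    apply intervalIntegral.integral_nonneg_of_ae_restrict hst
    filter_upwards [restr hq hs ht] with x hx
    have := mul_nonpos_of_nonpos_of_nonneg hx (h.hGn (u x))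
    simp only [Pi.zero_apply]
    linarith
  rw [intervalIntegral.integral_neg] at h2
  linarith

lemma v_const (h : Traj T q G u v) {s t : ℝ} (hs : 0 ≤ s) (hst : s ≤ t) (ht : t ≤ T)
    (hu : ∀ x ∈ Icc s t, u x ≤ 0) : v t = v s := by
  have h1 := h.hv s t hs hst ht
  have h2 : ∫ x in s..t, q x * G (u x) = 0 := by
    rw [intervalIntegral.integral_congr (g := fun _ => (0:ℝ))]
    · simp
    · intro x hx
      rw [uIcc_of_le hst] at hx
      simp [h.hG0 _ (hu x hx)]
  linarith

/-- negative position and velocity stay negative -/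
lemma dead_aux (h : Traj T q G u v) {t s : ℝ} (ht : 0 ≤ t) (hts : t ≤ s) (hs : s ≤ T)
    (hu : u t < 0) (hv : v t < 0) : u s < 0 := by
  by_contra hcon
  push Not at hcon
  have hcl : IsClosed (Icc t s ∩ {x | 0 ≤ u x}) :=
    isClosed_Icc.inter (isClosed_le continuous_const h.uc)
  have hne : (Icc t s ∩ {x | 0 ≤ u x}).Nonempty := ⟨s, ⟨hts, le_rfl⟩, hcon⟩
  have hbd : BddBelow (Icc t s ∩ {x | 0 ≤ u x}) := ⟨t, fun x hx => hx.1.1⟩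
  have hmem := hcl.csInf_mem hne hbd
  set z := sInf (Icc t s ∩ {x | 0 ≤ u x}) with hz
  have hlt : ∀ x ∈ Ico t z, u x < 0 := by
    intro x hx
    by_contra h1
    push Not at h1
    have : z ≤ x := csInf_le hbd ⟨⟨hx.1, hx.2.le.trans hmem.1.2⟩, h1⟩
    linarith [hx.2]
  have hz0 : 0 ≤ u z := hmem.2
  have htz : t < z := by
    rcases lt_or_eq_of_le hmem.1.1 with h1 | h1
    · exact h1
    · rw [← h1] at hz0; linarith
  have hvz : ∀ x ∈ Ico t z, v x = v t := fun x hx =>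
    h.v_const ht hx.1 (by linarith [hx.2, hmem.1.2])
      (fun y hy => (hlt y ⟨hy.1, lt_of_le_of_lt hy.2 hx.2⟩).le)
  have hvz' : ∀ x ∈ Icc t z, v x ≤ v t := by
    have : Icc t z ⊆ closure (Ico t z) := by rw [closure_Ico htz.ne]
    intro x hx
    exact closure_minimal (fun y hy => (hvz y hy).le) (isClosed_le h.vc continuous_const) (this hx)
  have := h.u_le ht htz.le (hmem.1.2.trans hs) hvz'
  have : v t * (z - t) < 0 := mul_neg_of_neg_of_pos hv (by linarith)
  linarith

lemma dead_zero (h : Traj T q G u v) {t s : ℝ} (ht : 0 ≤ t) (hts : t ≤ s) (hs : s ≤ T)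
    (hu : u t ≤ 0) (hv : v t < 0) : u s ≤ 0 := by
  rcases eq_or_lt_of_le hts with h1 | h1
  · rw [← h1]; exact hu
  have hev : ∀ᶠ x in nhds t, v x < v t / 2 :=
    h.vc.continuousAt.eventually_lt continuousAt_const (by linarith)
  obtain ⟨e, he, hee⟩ := Metric.eventually_nhds_iff.1 hev
  have hlt : ∀ x ∈ Icc t (t + e/2), v x ≤ v t / 2 := by
    intro x hx
    refine (hee ?_).le
    rw [Real.dist_eq, abs_of_nonneg (by linarith [hx.1])]
    linarith [hx.2]
  by_cases h2 : s ≤ t + e/2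
  · have := h.u_le ht hts hs (fun x hx => hlt x ⟨hx.1, hx.2.trans h2⟩)
    have : v t / 2 * (s - t) ≤ 0 := mul_nonpos_of_nonpos_of_nonneg (by linarith) (by linarith)
    linarith
  · push Not at h2
    have h3 := h.u_le ht (by linarith : t ≤ t + e/2) (by linarith) hlt
    have h4 : v t / 2 * (t + e/2 - t) < 0 := mul_neg_of_neg_of_pos (by linarith) (by linarith)
    have h5 := hlt (t + e/2) ⟨by linarith, le_rfl⟩
    exact (h.dead_aux (by linarith) h2.le hs (by linarith) (by linarith)).le

lemma dead (h : Traj T q G u v) (h0 : 0 ≤ u 0) {t s : ℝ} (ht : 0 ≤ t) (hts : t ≤ s) (hs : s ≤ T)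
    (hu : u t < 0) : u s < 0 := by
  have hcl : IsClosed (Icc 0 t ∩ {x | 0 ≤ u x}) :=
    isClosed_Icc.inter (isClosed_le continuous_const h.uc)
  have hne : (Icc 0 t ∩ {x | 0 ≤ u x}).Nonempty := ⟨0, ⟨le_rfl, ht⟩, h0⟩
  have hbd : BddAbove (Icc 0 t ∩ {x | 0 ≤ u x}) := ⟨t, fun x hx => hx.1.2⟩
  have hmem := hcl.csSup_mem hne hbd
  set z := sSup (Icc 0 t ∩ {x | 0 ≤ u x}) with hz
  have hz0 : 0 ≤ u z := hmem.2
  have hzt : z < t := by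
    rcases lt_or_eq_of_le hmem.1.2 with h1 | h1
    · exact h1
    · rw [h1] at hz0; linarith
  have hlt : ∀ x ∈ Ioc z t, u x < 0 := by
    intro x hx
    by_contra h1
    push Not at h1
    have : x ≤ z := le_csSup hbd ⟨⟨hmem.1.1.trans hx.1.le, hx.2⟩, h1⟩
    linarith [hx.1]
  have hvz : ∀ x ∈ Ioc z t, v t = v x := fun x hx =>
    h.v_const (by linarith [hx.1, hmem.1.1]) hx.2 (by linarith)
      (fun y hy => (hlt y ⟨lt_of_lt_of_le hx.1 hy.1, hy.2⟩).le)
  have hvz' : ∀ x ∈ Icc z t, v t ≤ v x := by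
    have : Icc z t ⊆ closure (Ioc z t) := by rw [closure_Ioc hzt.ne]
    intro x hx
    exact closure_minimal (fun y hy => (hvz y hy).le) (isClosed_le continuous_const h.vc) (this hx)
  have h3 := h.u_ge hmem.1.1 hzt.le (hts.trans hs) hvz'
  have h4 : v t < 0 := by
    by_contra h5
    push Not at h5
    have : 0 ≤ v t * (t - z) := mul_nonneg h5 (by linarith)
    linarith
  exact h.dead_aux ht hts hs hu h4

/-- a priori bound on intervals of positivity -/
lemma apriori (h : Traj T q G u v) {a b d J K s0 R : ℝ} (ha : 0 ≤ a) (hb : b ≤ T) (hd : 0 < d)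
    (hab : a + 2 * d < b) (hq : ∀ᵐ x ∂(volume.restrict (Icc a b)), 0 ≤ q x)
    (hJ : J ≤ ∫ x in (a+d)..(b-d), q x) (hJ0 : 0 < J) (hK : 2 * T < K * J * d ^ 2) (hK0 : 0 < K)
    (hGK : ∀ s, s0 ≤ s → K * s ≤ G s) (hR : s0 * T ≤ d * R) (hR0 : 0 < R)
    (hun : ∀ x ∈ Icc a b, 0 ≤ u x) : ∀ x ∈ Icc a b, u x < R := by
  have hT : 0 < T := by linarith
  obtain ⟨z, hz, hzmax⟩ := isCompact_Icc.exists_isMaxOn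
    (nonempty_Icc.2 (by linarith : a ≤ b)) h.uc.continuousOn
  by_contra hcon
  push Not at hcon
  obtain ⟨x0, hx0, hx0R⟩ := hcon
  have hρ : R ≤ u z := hx0R.trans (hzmax hx0)
  set ρ := u z with hρd
  have hρ0 : 0 < ρ := by linarith
  have hlow : ∀ s ∈ Icc (a+d) (b-d), d * ρ ≤ T * u s := by
    intro s hs
    have hus : 0 ≤ u s := hun s ⟨by linarith [hs.1], by linarith [hs.2]⟩
    have hus2 : u s ≤ ρ := hzmax (⟨by linarith [hs.1], by linarith [hs.2]⟩ : s ∈ Icc a b)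
    rcases le_total s z with hsz | hsz
    · have h1 := h.u_ge (c := v s) ha (by linarith [hs.1] : a ≤ s) (by linarith [hs.2])
        (fun x hx => h.v_anti ha hb hq hx.1 hx.2 (by linarith [hs.2]))
      have h2 := h.u_le (c := v s) (by linarith [hs.1]) hsz (by linarith [hz.2])
        (fun x hx => h.v_anti ha hb hq (by linarith [hs.1]) hx.1 (by linarith [hz.2, hx.2]))
      have hua := hun a ⟨le_rfl, by linarith⟩
      have h3 : v s * (s - a) ≤ u s := by linarith
      have h4 : ρ - u s ≤ v s * (z - s) := by linarith
      have h5 : (ρ - u s) * (s - a) ≤ v s * (z - s) * (s - a) :=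
        mul_le_mul_of_nonneg_right h4 (by linarith [hs.1])
      have h6 : v s * (s - a) * (z - s) ≤ u s * (z - s) :=
        mul_le_mul_of_nonneg_right h3 (by linarith)
      have h7 : u s * (z - a) ≤ u s * T := mul_le_mul_of_nonneg_left (by linarith [hz.2]) hus
      have h8 : d * ρ ≤ (s - a) * ρ := mul_le_mul_of_nonneg_right (by linarith [hs.1]) hρ0.le
      nlinarith
    · have h1 := h.u_le (c := v s) (by linarith [hs.1] : 0 ≤ s) (by linarith [hs.2] : s ≤ b) hb
        (fun x hx => h.v_anti ha hb hq (by linarith [hs.1]) hx.1 hx.2)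
      have h2 := h.u_ge (c := v s) (by linarith [hz.1]) hsz (by linarith [hs.2])
        (fun x hx => h.v_anti ha hb hq (by linarith [hz.1, hx.1]) hx.2 (by linarith [hs.2]))
      have hub := hun b ⟨by linarith, le_rfl⟩
      have h3 : -v s * (b - s) ≤ u s := by linarith
      have h4 : ρ - u s ≤ -v s * (s - z) := by linarith
      have h5 : (ρ - u s) * (b - s) ≤ -v s * (s - z) * (b - s) :=
        mul_le_mul_of_nonneg_right h4 (by linarith [hs.2])
      have h6 : -v s * (b - s) * (s - z) ≤ u s * (s - z) :=
        mul_le_mul_of_nonneg_right h3 (by linarith)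
      have h7 : u s * (b - z) ≤ u s * T := mul_le_mul_of_nonneg_left (by linarith [hz.1]) hus
      have h8 : d * ρ ≤ (b - s) * ρ := mul_le_mul_of_nonneg_right (by linarith [hs.2]) hρ0.le
      nlinarith
  have hGlow : ∀ s ∈ Icc (a+d) (b-d), K * (d * ρ / T) ≤ G (u s) := by
    intro s hs
    have h1 := hlow s hs
    have h2 : d * ρ / T ≤ u s := by rw [div_le_iff₀ hT]; linarith
    have h3 : s0 ≤ d * ρ / T := by
      rw [le_div_iff₀ hT]
      have := mul_le_mul_of_nonneg_left hρ hd.le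
      linarith
    exact (mul_le_mul_of_nonneg_left h2 hK0.le).trans (hGK _ (h3.trans h2))
  have hI : K * (d * ρ / T) * J ≤ v (a+d) - v (b-d) := by
    have h1 := h.hv (a+d) (b-d) (by linarith) (by linarith) (by linarith)
    have h2 : ∫ x in (a+d)..(b-d), K * (d * ρ / T) * q x ≤ ∫ x in (a+d)..(b-d), q x * G (u x) := by
      apply intervalIntegral.integral_mono_ae_restrict (by linarith) ((h.hq _ _).const_mul _)
        (h.int _ _)
      filter_upwards [restr hq (by linarith : a ≤ a + d) (by linarith : b - d ≤ b),
        ae_restrict_mem measurableSet_Icc] with x hx hx2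
      have := mul_le_mul_of_nonneg_right (hGlow x hx2) hx
      linarith
    rw [intervalIntegral.integral_const_mul] at h2
    have h3 : K * (d * ρ / T) * J ≤ K * (d * ρ / T) * ∫ x in (a+d)..(b-d), q x :=
      mul_le_mul_of_nonneg_left hJ (by positivity)
    linarith
  have hA : v (a+d) * d ≤ ρ := by
    have h1 := h.u_ge (c := v (a+d)) ha (by linarith : a ≤ a + d) (by linarith)
      (fun x hx => h.v_anti ha hb hq hx.1 hx.2 (by linarith))
    have h2 := hun a ⟨le_rfl, by linarith⟩
    have h3 : u (a+d) ≤ ρ := hzmax (⟨by linarith, by linarith⟩ : a + d ∈ Icc a b)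
    nlinarith
  have hB : -v (b-d) * d ≤ ρ := by
    have h1 := h.u_le (c := v (b-d)) (by linarith : 0 ≤ b - d) (by linarith : b - d ≤ b) hb
      (fun x hx => h.v_anti ha hb hq (by linarith) hx.1 hx.2)
    have h2 := hun b ⟨by linarith, le_rfl⟩
    have h3 : u (b-d) ≤ ρ := hzmax (⟨by linarith, by linarith⟩ : b - d ∈ Icc a b)
    nlinarith
  have h9 : K * (d * ρ / T) * J * d ≤ 2 * ρ := by
    have := mul_le_mul_of_nonneg_right hI hd.le
    linarith
  have h10 : K * (d * ρ / T) * J * d = K * J * d ^ 2 * ρ / T := by ring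
  rw [h10, div_le_iff₀ hT] at h9
  have := mul_lt_mul_of_pos_right hK hρ0
  linarith

/-- small solutions on an interval of positivity -/
lemma small (h : Traj T q G u v) {a b r e E : ℝ} (ha : 0 ≤ a) (hab : a ≤ b) (hb : b ≤ T)
    (hq : ∀ᵐ x ∂(volume.restrict (Icc a b)), 0 ≤ q x)
    (hE0 : 0 ≤ E) (hE : ∀ s, s ≤ r → G s ≤ E) (he : E * ∫ x in a..b, q x ≤ e) (heT : e * T ≤ r / 8)
    (hva : 0 ≤ v a) (hur : ∀ x ∈ Icc a b, u x ≤ r) (hm : ∃ x ∈ Icc a b, u x = r) (he0 : 0 ≤ e) :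
    7 * r / 8 ≤ u b ∧ -e ≤ v b := by
  have hvb : -e ≤ v b := by
    have h1 := h.hv a b ha hab hb
    have h2 : ∫ x in a..b, q x * G (u x) ≤ ∫ x in a..b, E * q x := by
      apply intervalIntegral.integral_mono_ae_restrict hab (h.int _ _) ((h.hq _ _).const_mul _)
      filter_upwards [hq, ae_restrict_mem measurableSet_Icc] with x hx hx2
      have := mul_le_mul_of_nonneg_right (hE _ (hur x hx2)) hx
      linarith
    rw [intervalIntegral.integral_const_mul] at h2
    linarith
  refine ⟨?_, hvb⟩
  obtain ⟨z, hz, hzr⟩ := hm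
  have h1 := h.u_ge (c := -e) (ha.trans hz.1) hz.2 hb
    (fun x hx => hvb.trans (h.v_anti ha hb hq (hz.1.trans hx.1) hx.2 le_rfl))
  have : e * (b - z) ≤ e * T := mul_le_mul_of_nonneg_left (by linarith [hz.1]) he0
  linarith

lemma intG (h : Traj T q G u v) {a b k J : ℝ} (hab : a ≤ b)
    (hq : ∀ᵐ x ∂(volume.restrict (Icc a b)), q x ≤ 0) (hk0 : 0 ≤ k)
    (hk : ∀ x ∈ Icc a b, k ≤ G (u x)) (hJ : J ≤ -∫ x in a..b, q x) :
    k * J ≤ -∫ x in a..b, q x * G (u x) := by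
  have h2 : ∫ x in a..b, q x * G (u x) ≤ ∫ x in a..b, k * q x := by
    apply intervalIntegral.integral_mono_ae_restrict hab (h.int _ _) ((h.hq _ _).const_mul _)
    filter_upwards [hq, ae_restrict_mem measurableSet_Icc] with x hx hx2
    have := mul_le_mul_of_nonpos_right (hk x hx2) hx
    linarith
  rw [intervalIntegral.integral_const_mul] at h2
  have := mul_le_mul_of_nonneg_left hJ hk0
  linarith

/-- forward blow up on an interval of negativity -/
lemma blowup (h : Traj T q G u v) {a b r e k J d R : ℝ} (ha : 0 ≤ a) (hd : 0 < d)
    (hab : a + 2 * d < b) (hb : b ≤ T)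
    (hq : ∀ᵐ x ∂(volume.restrict (Icc a b)), q x ≤ 0)
    (hJ : J ≤ -∫ x in (a+d)..(b-d), q x) (hr : 0 < r) (he0 : 0 ≤ e) (heT : e * T ≤ r / 8)
    (hk0 : 0 ≤ k) (hk : ∀ s, r / 2 ≤ s → k ≤ G s) (hua : 7 * r / 8 ≤ u a) (hva : -e ≤ v a)
    (hR : R ≤ d * (k * J)) : R ≤ u b := by
  have hlow : ∀ x ∈ Icc a b, 3 * r / 4 ≤ u x := by
    intro x hx
    have h1 := h.u_ge (c := -e) ha hx.1 (hx.2.trans hb)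
      (fun y hy => hva.trans (h.v_mono ha hb hq le_rfl hy.1 (hy.2.trans hx.2)))
    have : e * (x - a) ≤ e * T := mul_le_mul_of_nonneg_left (by linarith [hx.2]) he0
    linarith
  have h1 := h.hv (a+d) (b-d) (by linarith) (by linarith) (by linarith)
  have h2 := h.intG (by linarith : a + d ≤ b - d)
    (restr hq (by linarith : a ≤ a + d) (by linarith : b - d ≤ b)) hk0
    (fun x hx => hk _ (by linarith [hlow x ⟨by linarith [hx.1], by linarith [hx.2]⟩])) hJ
  have h3 := h.v_mono ha hb hq le_rfl (by linarith : a ≤ a + d) (by linarith)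
  have h4 := h.u_ge (c := -e + k * J) (by linarith : 0 ≤ b - d) (by linarith : b - d ≤ b) hb
    (fun x hx => by
      have := h.v_mono ha hb hq (by linarith : a ≤ b - d) hx.1 hx.2
      linarith)
  have h5 := hlow (b-d) ⟨by linarith, by linarith⟩
  have : e * d ≤ e * T := mul_le_mul_of_nonneg_left (by linarith) he0
  nlinarith

/-- backward blow up -/
lemma blowup_back (h : Traj T q G u v) {a b r k J d R : ℝ} (ha : 0 ≤ a) (hd : 0 < d)
    (hab : a + 2 * d < b) (hb : b ≤ T)
    (hq : ∀ᵐ x ∂(volume.restrict (Icc a b)), q x ≤ 0)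
    (hJ : J ≤ -∫ x in (a+d)..(b-d), q x) (hr : 0 < r)
    (hk0 : 0 ≤ k) (hk : ∀ s, r / 2 ≤ s → k ≤ G s) (hub : r / 2 ≤ u b) (hvb : v b ≤ 0)
    (hR : R ≤ d * (k * J)) : R ≤ u a := by
  have hlow : ∀ x ∈ Icc a b, r / 2 ≤ u x := by
    intro x hx
    have h1 := h.u_le (c := 0) (ha.trans hx.1) hx.2 hb
      (fun y hy => (h.v_mono ha hb hq (hx.1.trans hy.1) hy.2 le_rfl).trans hvb)
    linarith
  have h1 := h.hv (a+d) (b-d) (by linarith) (by linarith) (by linarith)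
  have h2 := h.intG (by linarith : a + d ≤ b - d)
    (restr hq (by linarith : a ≤ a + d) (by linarith : b - d ≤ b)) hk0
    (fun x hx => hk _ (hlow x ⟨by linarith [hx.1], by linarith [hx.2]⟩)) hJ
  have h3 := h.v_mono ha hb hq (by linarith : a ≤ b - d) (by linarith : b - d ≤ b) le_rfl
  have h4 := h.u_le (c := -(k * J)) ha (by linarith : a ≤ a + d) (by linarith)
    (fun x hx => by
      have := h.v_mono ha hb hq hx.1 hx.2 (by linarith)
      linarith)
  have h5 := hlow (a+d) ⟨by linarith, by linarith⟩
  nlinarith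

lemma back_steep (h : Traj T q G u v) {a b d R Y : ℝ} (ha : 0 ≤ a) (hd : 0 < d)
    (hab : a + 2 * d < b) (hb : b ≤ T)
    (hq : ∀ᵐ x ∂(volume.restrict (Icc a b)), q x ≤ 0) (hub : 0 ≤ u b) (hvb : v b ≤ -(Y / 2))
    (hY0 : 0 ≤ Y) (hR : R ≤ d * Y) : R ≤ u a := by
  have h1 := h.u_le (c := -(Y/2)) ha (by linarith : a ≤ b) hb
      (fun y hy => (h.v_mono ha hb hq hy.1 hy.2 le_rfl).trans hvb)
  nlinarith

lemma convex_le (h : Traj T q G u v) {a b R : ℝ} (ha : 0 ≤ a) (hb : b ≤ T)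
    (hq : ∀ᵐ x ∂(volume.restrict (Icc a b)), q x ≤ 0) (hua : u a < R) (hub : u b < R) :
    ∀ x ∈ Icc a b, u x < R := by
  intro x hx
  rcases le_total (v x) 0 with h0 | h0
  · have h1 := h.u_le (c := 0) ha hx.1 (hx.2.trans hb)
      (fun y hy => (h.v_mono ha hb hq hy.1 hy.2 hx.2).trans h0)
    linarith
  · have h1 := h.u_ge (c := 0) (ha.trans hx.1) hx.2 hb
      (fun y hy => h0.trans (h.v_mono ha hb hq hx.1 hy.1 hy.2))
    linarith

/-- a too large final slope is impossible -/
lemma back_slope (h : Traj T q G u v) {a b d R Y B Q : ℝ} (ha : 0 ≤ a) (hd : 0 < d)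
    (hab : a + 2 * d < b) (hb : b ≤ T)
    (hR : 0 < R) (huR : ∀ x ∈ Icc a b, u x < R) (hua : 0 ≤ u a)
    (hB : ∀ s, s < R → G s ≤ B) (hB0 : 0 ≤ B) (hQ : ∫ x in a..b, |q x| ≤ Q)
    (hY : R ≤ d * (Y - B * Q)) : v b < Y := by
  by_contra hcon
  push Not at hcon
  have hlow : ∀ x ∈ Icc a b, Y - B * Q ≤ v x := by
    intro x hx
    have h1 := h.hv x b (ha.trans hx.1) hx.2 hb
    have h2 : ‖∫ y in x..b, q y * G (u y)‖ ≤ ∫ y in x..b, B * |q y| := by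
      apply intervalIntegral.norm_integral_le_of_norm_le hx.2
      · filter_upwards with y hy
        rw [Real.norm_eq_abs, abs_mul, abs_of_nonneg (h.hGn _), mul_comm]
        apply mul_le_mul_of_nonneg_right _ (abs_nonneg _)
        exact hB _ (huR y ⟨hx.1.trans hy.1.le, hy.2⟩)
      · exact (h.hq _ _).abs.const_mul _
    rw [intervalIntegral.integral_const_mul] at h2
    have h3 : ∫ y in x..b, |q y| ≤ ∫ y in a..b, |q y| := by
      have e := intervalIntegral.integral_add_adjacent_intervals (μ := volume)
        (h.hq a x).abs (h.hq x b).abs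
      have : 0 ≤ ∫ y in a..x, |q y| :=
        intervalIntegral.integral_nonneg hx.1 (fun _ _ => abs_nonneg _)
      linarith
    have h4 := mul_le_mul_of_nonneg_left (h3.trans hQ) hB0
    have h5 := (abs_le.1 h2).1
    linarith
  have h1 := h.u_ge ha (by linarith : a ≤ b) hb hlow
  have h2 := huR b ⟨by linarith, le_rfl⟩
  have h3 : 0 < Y - B * Q := by
    by_contra h4
    push Not at h4
    have := mul_nonpos_of_nonneg_of_nonpos hd.le h4
    linarith
  nlinarith

lemma end_slope (h : Traj T q G u v) (hT : 0 < T) (hn : ∀ x ∈ Icc 0 T, 0 ≤ u x) (h0 : u T = 0) :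
    v T ≤ 0 := by
  by_contra hcon
  push Not at hcon
  have hev : ∀ᶠ x in nhds T, v T / 2 < v x :=
    continuousAt_const.eventually_lt h.vc.continuousAt (by linarith)
  obtain ⟨e, he, hee⟩ := Metric.eventually_nhds_iff.1 hev
  set t := max 0 (T - e/2) with ht
  have h1 : t < T := max_lt hT (by linarith)
  have h2 := h.u_ge (c := v T / 2) (le_max_left _ _ : 0 ≤ t) h1.le le_rfl (fun x hx => by
    refine (hee ?_).le
    rw [Real.dist_eq, abs_lt]
    have : T - e/2 ≤ t := le_max_right _ _
    constructor <;> linarith [hx.1, hx.2])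
  have h3 := hn t ⟨le_max_left _ _, h1.le⟩
  have : 0 < v T / 2 * (T - t) := mul_pos (by linarith) (by linarith)
  linarith

end Traj

lemma build_H {X : Type*} [TopologicalSpace X] (m : ℕ) (S : Set ℕ) (M : ℕ → X → ℝ) (hM : ∀ i < m, Continuous (M i))
    (dead big : ℕ → X → Prop) (f1 : X → ℝ) (hf1 : Continuous f1) (r : ℝ)
    (h1 : ∀ i < m, ∀ z, dead i z → M i z < r)
    (h2 : ∀ i < m, ∀ z, dead i z → dead (i+1) z)
    (h3 : ∀ i < m, ∀ z, big i z → r < M i z)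
    (h4 : ∀ i < m, ∀ z, big i z → dead (i+1) z)
    (h5 : ∀ i < m, ∀ z, M i z = r → big (i+1) z)
    (h6 : ∀ z, dead m z → f1 z ≤ 0) (h7 : ∀ z, big m z → 0 ≤ f1 z) :
    ∃ H : X → ℝ, Continuous H ∧ (∀ z, dead 0 z → H z ≤ 0) ∧ (∀ z, big 0 z → 0 ≤ H z) ∧
      ∀ z, H z = 0 → f1 z = 0 ∧ ∀ k < m, (k ∈ S → r ≤ M k z) ∧ (k ∉ S → M k z ≤ r) := by
  have key : ∀ j ≤ m, ∃ H : X → ℝ, Continuous H ∧ (∀ z, dead (m - j) z → H z ≤ 0) ∧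
      (∀ z, big (m - j) z → 0 ≤ H z) ∧
      ∀ z, H z = 0 → f1 z = 0 ∧ ∀ k < m, m - j ≤ k → (k ∈ S → r ≤ M k z) ∧ (k ∉ S → M k z ≤ r) := by
    intro j
    induction j with
    | zero =>
      intro _
      refine ⟨f1, hf1, by simpa using h6, by simpa using h7, fun z hz => ⟨hz, fun k hk hk' => ?_⟩⟩
      omega
    | succ j ih =>
      intro hj
      obtain ⟨H, hc, hd, hb, hz⟩ := ih (by omega)
      obtain ⟨i, hi⟩ : ∃ i, i = m - (j+1) := ⟨_, rfl⟩
      have hi1 : m - j = i + 1 := by omega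
      have him : i < m := by omega
      rw [← hi]
      rw [hi1] at hd hb hz
      have hat : ∀ z, M i z = r → H z = max (H z) 0 := fun z h =>
        (max_eq_left (hb z (h5 i him z h))).symm
      by_cases hS : i ∈ S
      · refine ⟨fun z => - (if r ≤ M i z then H z else max (H z) 0 + (r - M i z)), ?_, ?_, ?_, ?_⟩
        · apply Continuous.neg
          apply Continuous.if_le hc _ continuous_const (hM i him)
          · intro z h
            rw [← h, sub_self, add_zero, ← hat z h.symm]
          · have := hM i him
            fun_prop
        · intro z h
          have := h1 i him z h
          simp only [if_neg (not_le.mpr this)]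
          have := le_max_right (H z) 0
          linarith
        · intro z h
          have := h3 i him z h
          simp only [if_pos this.le]
          have := hd z (h4 i him z h)
          linarith
        · intro z h
          by_cases hr : r ≤ M i z
          · simp only [if_pos hr, neg_eq_zero] at h
            refine ⟨(hz z h).1, fun k hk hik => ?_⟩
            rcases eq_or_lt_of_le hik with e | e
            · subst e
              exact ⟨fun _ => hr, fun h => absurd hS h⟩
            · exact (hz z h).2 k hk e
          · simp only [if_neg hr] at h
            have := le_max_right (H z) 0
            push Not at hr
            linarith
      · refine ⟨fun z => (if M i z ≤ r then H z else max (H z) 0 + (M i z - r)), ?_, ?_, ?_, ?_⟩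
        · apply Continuous.if_le hc _ (hM i him) continuous_const
          · intro z h
            rw [h, sub_self, add_zero, ← hat z h]
          · have := hM i him
            fun_prop
        · intro z h
          have := h1 i him z h
          simp only [if_pos this.le]
          exact hd z (h2 i him z h)
        · intro z h
          have := h3 i him z h
          simp only [if_neg (not_le.mpr this)]
          have := le_max_right (H z) 0
          linarith
        · intro z h
          by_cases hr : M i z ≤ r
          · simp only [if_pos hr] at h
            refine ⟨(hz z h).1, fun k hk hik => ?_⟩
            rcases eq_or_lt_of_le hik with e | e
            · subst e
              exact ⟨fun h => absurd h hS, fun _ => hr⟩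
            · exact (hz z h).2 k hk e
          · simp only [if_neg hr] at h
            have := le_max_right (H z) 0
            push Not at hr
            linarith
  obtain ⟨H, hc, hd, hb, hz⟩ := key m le_rfl
  simp only [Nat.sub_self] at hd hb hz
  exact ⟨H, hc, hd, hb, fun z h => ⟨(hz z h).1, fun k hk => (hz z h).2 k hk (Nat.zero_le _)⟩⟩

lemma part_mono {n : ℕ} {σ : ℕ → ℝ} (h : ∀ i < n, σ i < σ (i+1)) {i j : ℕ} (hij : i ≤ j) (hj : j ≤ n) :
    σ i ≤ σ j := by
  induction j, hij using Nat.le_induction with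
  | base => exact le_rfl
  | succ j hij ih => exact (ih (by omega)).trans (h j (by omega)).le

lemma part_cover {σ : ℕ → ℝ} (n : ℕ) {t : ℝ} (h0 : σ 0 ≤ t) (hn : 1 ≤ n) (ht : t ≤ σ n) :
    ∃ i < n, t ∈ Icc (σ i) (σ (i+1)) := by
  induction n with
  | zero => omega
  | succ n ih =>
    by_cases h : σ n ≤ t
    · exact ⟨n, by omega, h, ht⟩
    · push Not at h
      rcases Nat.eq_zero_or_pos n with h' | h'
      · subst h'
        exact absurd h0 (not_le.mpr h)
      · obtain ⟨i, hi, hi'⟩ := ih h' h.le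
        exact ⟨i, by omega, hi'⟩

theorem core_s3 (T : ℝ) (hT : 0 < T) (q : ℝ → ℝ) (hq : ∀ a b, IntervalIntegrable q volume a b)
    (G : ℝ → ℝ) (Λ : ℝ) (hΛ : 0 ≤ Λ) (hG : ∀ s s', |G s - G s'| ≤ Λ * |s - s'|)
    (hG0 : ∀ s, s ≤ 0 → G s = 0) (hGn : ∀ s, 0 ≤ G s)
    (m : ℕ) (hm : 1 ≤ m) (σ : ℕ → ℝ) (hσ0 : σ 0 = 0) (hσT : σ (2*m) = T) (d : ℝ) (hd : 0 < d)
    (hσd : ∀ i < 2*m, σ i + 2 * d < σ (i+1))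
    (hqp : ∀ i < m, ∀ᵐ x ∂(volume.restrict (Icc (σ (2*i)) (σ (2*i+1)))), 0 ≤ q x)
    (hqn : ∀ i < m, ∀ᵐ x ∂(volume.restrict (Icc (σ (2*i+1)) (σ (2*i+2)))), q x ≤ 0)
    (J J' K s0 R r e E k B Q Y : ℝ)
    (hJ : ∀ i < m, J ≤ ∫ x in (σ (2*i) + d)..(σ (2*i+1) - d), q x) (hJ0 : 0 < J)
    (hK : 2 * T < K * J * d ^ 2) (hK0 : 0 < K)
    (hGK : ∀ s, s0 ≤ s → K * s ≤ G s) (hR : s0 * T ≤ d * R) (hR0 : 0 < R)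
    (hr : 0 < r) (hrR : r < R)
    (hE0 : 0 ≤ E) (hE : ∀ s, s ≤ r → G s ≤ E)
    (he : ∀ i < m, E * ∫ x in (σ (2*i))..(σ (2*i+1)), q x ≤ e) (heT : e * T ≤ r / 8) (he0 : 0 ≤ e)
    (hJ' : ∀ i < m, J' ≤ - ∫ x in (σ (2*i+1) + d)..(σ (2*i+2) - d), q x)
    (hk0 : 0 ≤ k) (hk : ∀ s, r / 2 ≤ s → k ≤ G s) (hRk : R ≤ d * (k * J'))
    (hB : ∀ s, s < R → G s ≤ B) (hB0 : 0 ≤ B)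
    (hQ : ∀ i < m, ∫ x in (σ (2*i+1))..(σ (2*i+2)), |q x| ≤ Q)
    (hY0 : 0 < Y) (hRY : R ≤ d * Y) (hY : R ≤ d * (Y - B * Q))
    (S : Set ℕ) (hS : ∃ k < m, k ∈ S) :
    ∃ u v : ℝ → ℝ, Traj T q G u v ∧ u T = u 0 ∧ v T = v 0 ∧ (∀ t ∈ Icc 0 T, 0 ≤ u t ∧ u t < R) ∧
      ∀ k < m, (k ∈ S → ∃ t ∈ Icc (σ (2*k)) (σ (2*k+1)), r < u t) ∧
        (k ∉ S → ∀ t ∈ Icc (σ (2*k)) (σ (2*k+1)), u t < r) := by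
  have hGc : Continuous G := by
    have : LipschitzWith (Real.toNNReal Λ) G := LipschitzWith.of_dist_le_mul fun x y => by
      rw [Real.dist_eq, Real.dist_eq, Real.coe_toNNReal _ hΛ]
      exact hG x y
    exact this.continuous
  obtain ⟨U, V, hUc, hVc, hVT, hUV⟩ := flow_exists T hT q hq G Λ hΛ hG
  have hUpc : ∀ p, Continuous (U p) := fun p =>
    hUc.comp (Continuous.prodMk continuous_const continuous_id)
  have traj : ∀ p, Traj T q G (U p) (V p) := by
    intro p
    have hint : ∀ a b, IntervalIntegrable (fun x => q x * G (U p x)) volume a b := fun a b =>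
      (hq a b).mul_continuousOn (hGc.comp (hUpc p)).continuousOn
    refine ⟨hq, hGc, hG0, hGn, hUpc p, hVc p, ?_, ?_⟩
    · intro s t hs hst ht
      rw [(hUV p t ⟨by linarith, ht⟩).1, (hUV p s ⟨hs, by linarith⟩).1,
        ← intervalIntegral.integral_interval_sub_left (hint 0 t) (hint 0 s)]
      ring
    · intro s t hs hst ht
      rw [(hUV p t ⟨by linarith, ht⟩).2, (hUV p s ⟨hs, by linarith⟩).2,
        ← intervalIntegral.integral_interval_sub_left ((hVc p).intervalIntegrable 0 t)
          ((hVc p).intervalIntegrable 0 s)]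
      ring
  have hU0 : ∀ p, U p 0 = p.1 := fun p => by
    have := (hUV p 0 ⟨le_rfl, hT.le⟩).2
    simpa using this
  have hV0 : ∀ p, V p 0 = p.2 := fun p => by
    have := (hUV p 0 ⟨le_rfl, hT.le⟩).1
    simpa using this
  -- partition facts
  have hσ1 : ∀ i < 2*m, σ i < σ (i+1) := fun i hi => by
    have := hσd i hi
    linarith
  have hσn : ∀ i ≤ 2*m, 0 ≤ σ i := fun i hi => by
    have := part_mono hσ1 (Nat.zero_le i) hi
    linarith
  have hσm : ∀ i ≤ 2*m, σ i ≤ T := fun i hi => by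
    have := part_mono hσ1 hi le_rfl
    linarith
  -- parametrization
  obtain ⟨X, hX⟩ : ∃ X : ℝ × ℝ → ℝ, X = fun z => max 0 (min z.1 R) := ⟨_, rfl⟩
  obtain ⟨kk, hkk⟩ : ∃ kk : ℝ × ℝ → ℝ, kk = fun z => Y * max 0 (1 - X z / r) := ⟨_, rfl⟩
  obtain ⟨W, hW⟩ : ∃ W : ℝ × ℝ → ℝ, W = fun z => max z.2 (- kk z) - 2 * Y * max (- z.1) 0 := ⟨_, rfl⟩
  have hXc : Continuous X := by rw [hX]; fun_prop
  have hkc : Continuous kk := by rw [hkk]; fun_prop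
  have hWc : Continuous W := by rw [hW]; fun_prop
  obtain ⟨u, hu⟩ : ∃ u : ℝ × ℝ → ℝ → ℝ, u = fun z => U (X z, W z) := ⟨_, rfl⟩
  obtain ⟨v, hv⟩ : ∃ v : ℝ × ℝ → ℝ → ℝ, v = fun z => V (X z, W z) := ⟨_, rfl⟩
  have tr : ∀ z, Traj T q G (u z) (v z) := fun z => by rw [hu, hv]; exact traj _
  have hu0 : ∀ z, u z 0 = X z := fun z => by rw [hu]; exact hU0 _
  have hv0 : ∀ z, v z 0 = W z := fun z => by rw [hv]; exact hV0 _
  have huc : Continuous (fun z : (ℝ × ℝ) × ℝ => u z.1 z.2) := by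
    rw [hu]
    exact hUc.comp (((hXc.comp continuous_fst).prodMk (hWc.comp continuous_fst)).prodMk continuous_snd)
  have hvT : Continuous (fun z => v z T) := by
    rw [hv]
    exact hVT.comp (hXc.prodMk hWc)
  have hX0 : ∀ z, 0 ≤ X z := fun z => by rw [hX]; exact le_max_left _ _
  have hXR : ∀ z, X z ≤ R := fun z => by rw [hX]; exact max_le hR0.le (min_le_right _ _)
  have hk1 : ∀ z, 0 ≤ kk z := fun z => by rw [hkk]; exact mul_nonneg hY0.le (le_max_left _ _)
  have hu0' : ∀ z, 0 ≤ u z 0 := fun z => by rw [hu0]; exact hX0 z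
  have hXW : ∀ z, r ≤ X z → 0 ≤ W z := by
    intro z hz
    have h1 : kk z = 0 := by
      rw [hkk]
      have : 1 ≤ X z / r := by rw [le_div_iff₀ hr]; linarith
      simp only [mul_eq_zero]
      right
      exact max_eq_left (by linarith)
    have h2 : 0 < z.1 := by
      rw [hX] at hz
      by_contra h
      push Not at h
      have : max 0 (min z.1 R) = 0 := max_eq_left ((min_le_left _ _).trans h)
      simp only [this] at hz
      linarith
    rw [hW]
    simp only [h1]
    rw [max_eq_right (a := -z.1) (by linarith)]
    have := le_max_right z.2 (-0)
    linarith
  -- M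
  obtain ⟨M, hM⟩ : ∃ M : ℕ → ℝ × ℝ → ℝ, M = fun i z => sSup (u z '' Icc (σ (2*i)) (σ (2*i+1))) := ⟨_, rfl⟩
  have hMc : ∀ i, Continuous (M i) := fun i => by
    rw [hM]
    exact IsCompact.continuous_sSup isCompact_Icc huc
  have hMle : ∀ i z, ∀ t ∈ Icc (σ (2*i)) (σ (2*i+1)), u z t ≤ M i z := by
    intro i z t ht
    rw [hM]
    exact le_csSup (isCompact_Icc.image (tr z).uc).bddAbove ⟨t, ht, rfl⟩
  have hMex : ∀ i < m, ∀ z, ∃ t ∈ Icc (σ (2*i)) (σ (2*i+1)), u z t = M i z := by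
    intro i hi z
    have hne : (Icc (σ (2*i)) (σ (2*i+1))).Nonempty := nonempty_Icc.mpr (hσ1 _ (by omega)).le
    obtain ⟨t, ht, h⟩ := (isCompact_Icc.image (tr z).uc).sSup_mem (hne.image (u z))
    exact ⟨t, ht, by rw [hM]; exact h⟩
  -- F1
  have F1 : ∀ i < m, ∀ z, R ≤ M i z → u z (σ (2*i+1)) < 0 := by
    intro i hi z hz
    by_contra hcon
    have hnn : ∀ x ∈ Icc (σ (2*i)) (σ (2*i+1)), 0 ≤ u z x := by
      intro x hx
      by_contra h
      push Not at h
      exact hcon ((tr z).dead (hu0' z) ((hσn _ (by omega)).trans hx.1) hx.2 (hσm _ (by omega)) h)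
    obtain ⟨t, ht, h⟩ := hMex i hi z
    have := (tr z).apriori (hσn _ (by omega)) (hσm _ (by omega)) hd (hσd _ (by omega)) (hqp i hi)
      (hJ i hi) hJ0 hK hK0 hGK hR hR0 hnn t ht
    linarith
  -- F2
  have F2 : ∀ i < m, ∀ z, M i z = r → R ≤ u z (σ (2*(i+1))) := by
    intro i hi z hz
    have hur : ∀ x ∈ Icc (σ (2*i)) (σ (2*i+1)), u z x ≤ r := fun x hx => hz ▸ hMle i z x hx
    have hmx : ∃ x ∈ Icc (σ (2*i)) (σ (2*i+1)), u z x = r := hz ▸ hMex i hi z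
    have hva : 0 ≤ v z (σ (2*i)) := by
      by_contra hneg
      push Not at hneg
      have hge : r ≤ u z (σ (2*i)) := by
        obtain ⟨x, hx, hxr⟩ := hmx
        have := (tr z).u_le (c := 0) (hσn _ (by omega)) hx.1 (hx.2.trans (hσm _ (by omega)))
          (fun y hy => ((tr z).v_anti (hσn _ (by omega)) (hσm _ (by omega)) (hqp i hi) le_rfl hy.1
            (hy.2.trans hx.2)).trans hneg.le)
        linarith
      rcases Nat.eq_zero_or_pos i with h0 | h0
      · subst h0
        simp only [mul_zero, hσ0] at hge hneg
        rw [hu0] at hge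
        rw [hv0] at hneg
        have := hXW z hge
        linarith
      · obtain ⟨j, rfl⟩ : ∃ j, i = j + 1 := ⟨i - 1, by omega⟩
        have hb : R ≤ u z (σ (2*j+1)) :=
          (tr z).blowup_back (hσn _ (by omega)) hd (hσd (2*j+1) (by omega)) (hσm _ (by omega))
            (hqn j (by omega)) (hJ' j (by omega)) hr hk0 hk (by
              have : (2*j+1+1) = 2*(j+1) := by ring
              rw [this]; linarith) hneg.le hRk
        have := F1 j (by omega) z (hb.trans (hMle j z _ ⟨(hσ1 _ (by omega)).le, le_rfl⟩))
        linarith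
    obtain ⟨h1, h2⟩ := (tr z).small (hσn _ (by omega)) (hσ1 _ (by omega)).le (hσm _ (by omega))
      (hqp i hi) hE0 hE (he i hi) heT hva hur hmx he0
    exact (tr z).blowup (hσn _ (by omega)) hd (hσd (2*i+1) (by omega)) (hσm _ (by omega))
      (hqn i hi) (hJ' i hi) hr he0 heT hk0 hk h1 h2 hRk
  have hT2m : ∀ z, u z (σ (2*m)) = u z T := fun z => by rw [hσT]
  obtain ⟨H, hHc, hHd, hHb, hHz⟩ := build_H m S M (fun i _ => hMc i)
    (fun i z => ∀ t ∈ Icc (σ (2*i)) T, u z t ≤ 0) (fun i z => R ≤ u z (σ (2*i)))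
    (fun z => u z T - X z)
    ((huc.comp (continuous_id.prodMk continuous_const)).sub hXc) r
    (by
      intro i hi z h
      obtain ⟨t, ht, h'⟩ := hMex i hi z
      have := h t ⟨ht.1, ht.2.trans (hσm _ (by omega))⟩
      linarith)
    (by
      intro i hi z h t ht
      exact h t ⟨(part_mono hσ1 (by omega) (by omega)).trans ht.1, ht.2⟩)
    (by
      intro i hi z h
      have := hMle i z (σ (2*i)) ⟨le_rfl, (hσ1 _ (by omega)).le⟩
      linarith)
    (by
      intro i hi z h t ht
      have h1 := F1 i hi z (h.trans (hMle i z (σ (2*i)) ⟨le_rfl, (hσ1 _ (by omega)).le⟩))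
      exact ((tr z).dead (hu0' z) (hσn _ (by omega))
        ((part_mono hσ1 (by omega : 2*i+1 ≤ 2*(i+1)) (by omega)).trans ht.1) ht.2 h1).le)
    F2
    (by
      intro z h
      have := h T ⟨hσT.le, le_rfl⟩
      have := hX0 z
      linarith)
    (by
      intro z h
      have := hT2m z
      have := hXR z
      linarith)
  -- Poincare-Miranda
  obtain ⟨z, hz1, hz2, hz3, hz4⟩ := poincare_miranda H (fun z => z.2 - max (-Y) (min (v z T) Y)) hHc
    (by fun_prop) (-1) R (-Y) Y (by linarith) (by linarith)
    (by
      intro y hy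
      apply hHd
      intro t ht
      have hx0 : X (-1, y) = 0 := by
        rw [hX]
        exact max_eq_left ((min_le_left _ _).trans (by norm_num))
      have hw : W (-1, y) < 0 := by
        have h1 : max y (- kk (-1, y)) ≤ Y := max_le hy.2 (by have := hk1 (-1, y); linarith)
        rw [hW]
        simp only [neg_neg]
        rw [max_eq_left (zero_le_one)]
        linarith
      simp only [mul_zero, hσ0] at ht
      exact (tr _).dead_zero le_rfl ht.1 ht.2 (by rw [hu0, hx0]) (by rw [hv0]; exact hw))
    (by
      intro y hy
      apply hHb
      simp only [mul_zero, hσ0]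
      rw [hu0, hX]
      simp)
    (by
      intro x hx
      have := le_max_left (-Y) (min (v (x, -Y) T) Y)
      simp only
      linarith)
    (by
      intro x hx
      have : max (-Y) (min (v (x, Y) T) Y) ≤ Y := max_le (by linarith) (min_le_right _ _)
      simp only
      linarith)
  obtain ⟨hf, hcon⟩ := hHz z hz3
  have huT : u z T = u z 0 := by rw [hu0]; linarith
  have hnn : ∀ t ∈ Icc 0 T, 0 ≤ u z t := by
    intro t ht
    by_contra h
    push Not at h
    have := (tr z).dead (hu0' z) ht.1 ht.2 le_rfl h
    have := hu0' z
    linarith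
  have hMR : ∀ i < m, M i z < R := by
    intro i hi
    by_contra h
    push Not at h
    have h1 := F1 i hi z h
    have := hnn (σ (2*i+1)) ⟨hσn _ (by omega), hσm _ (by omega)⟩
    linarith
  obtain ⟨n, rfl⟩ : ∃ n, m = n + 1 := ⟨m - 1, by omega⟩
  have hlast : u z (σ (2*n+1)) < R :=
    (hMle n z _ ⟨(hσ1 _ (by omega)).le, le_rfl⟩).trans_lt (hMR n (by omega))
  have hT' : σ (2*n+2) = T := hσT
  have hkT : - kk z < v z T := by
    by_contra hle
    push Not at hle
    apply absurd hlast
    rw [not_lt]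
    rcases le_or_gt (r/2) (X z) with hx | hx
    · exact (tr z).blowup_back (hσn _ (by omega)) hd (hσd (2*n+1) (by omega)) (hσm _ (by omega))
        (hqn n (by omega)) (hJ' n (by omega)) hr hk0 hk
        (show r/2 ≤ u z (σ (2*n+2)) by rw [hT', huT, hu0]; exact hx)
        (show v z (σ (2*n+2)) ≤ 0 by rw [hT']; have := hk1 z; linarith) hRk
    · have h1 : Y / 2 ≤ kk z := by
        rw [hkk]
        have : X z / r < 1/2 := by rw [div_lt_iff₀ hr]; linarith
        have h2 := le_max_right 0 (1 - X z / r)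
        have : 1/2 ≤ max 0 (1 - X z / r) := by linarith
        have := mul_le_mul_of_nonneg_left this hY0.le
        simp only
        linarith
      exact (tr z).back_steep (hσn _ (by omega)) hd (hσd (2*n+1) (by omega)) (hσm _ (by omega))
        (hqn n (by omega)) 
        (show 0 ≤ u z (σ (2*n+2)) by rw [hT']; exact hnn T ⟨hT.le, le_rfl⟩)
        (show v z (σ (2*n+2)) ≤ -(Y/2) by rw [hT']; linarith) hY0.le hRY
  have hu0R : u z 0 < R := by
    have h := (hMle 0 z (σ 0) ⟨le_rfl, (hσ1 0 (by omega)).le⟩).trans_lt (hMR 0 (by omega))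
    rwa [hσ0] at h
  have huR : ∀ t ∈ Icc 0 T, u z t < R := by
    intro t ht
    obtain ⟨i, hi, hti⟩ := part_cover (σ := σ) (t := t) (2*(n+1)) (by rw [hσ0]; exact ht.1) (by omega)
      (by rw [hσT]; exact ht.2)
    rcases Nat.even_or_odd' i with ⟨j, rfl | rfl⟩
    · exact (hMle j z t hti).trans_lt (hMR j (by omega))
    · refine (tr z).convex_le (hσn _ (by omega)) (hσm _ (by omega)) (hqn j (by omega)) 
        ((hMle j z _ ⟨(hσ1 _ (by omega)).le, le_rfl⟩).trans_lt (hMR j (by omega))) ?_ t hti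
      by_cases hj : j + 1 < n + 1
      · exact (hMle (j+1) z _ ⟨le_rfl, (hσ1 _ (by omega)).le⟩).trans_lt (hMR (j+1) hj)
      · have : j = n := by omega
        subst this
        rw [hT', huT]; exact hu0R
  have hvY : v z T < Y := by
    have := (tr z).back_slope (hσn _ (by omega)) hd (hσd (2*n+1) (by omega)) (hσm _ (by omega)) hR0
      (fun x hx => huR x ⟨(hσn _ (by omega)).trans hx.1, hx.2.trans (hσm _ (by omega))⟩)
      (hnn _ ⟨hσn _ (by omega), hσm _ (by omega)⟩) hB hB0 (hQ n (by omega)) hY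
    rwa [show 2*n+1+1 = 2*n+2 from rfl, hT'] at this
  have hkY : kk z ≤ Y := by
    rw [hkk]
    have h1 : 0 ≤ X z / r := div_nonneg (hX0 z) hr.le
    have : max 0 (1 - X z / r) ≤ 1 := max_le zero_le_one (by linarith)
    have := mul_le_mul_of_nonneg_left this hY0.le
    simp only
    linarith
  have heta : z.2 = v z T := by
    rw [min_eq_left hvY.le, max_eq_right (by linarith)] at hz4
    linarith
  have hxi : 0 ≤ z.1 := by
    by_contra hneg
    push Not at hneg
    have hx0 : X z = 0 := by
      rw [hX]
      exact max_eq_left ((min_le_left _ _).trans hneg.le)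
    have h0 : u z 0 = 0 := by rw [hu0, hx0]
    have h1 := (tr z).end_slope hT hnn (huT.trans h0)
    have hw : W z < 0 := by
      rw [hW]
      simp only
      have h2 : max z.2 (- kk z) ≤ 0 := max_le (by linarith) (by have := hk1 z; linarith)
      have h3 : 0 < Y * max (-z.1) 0 := mul_pos hY0 (lt_max_of_lt_left (by linarith))
      linarith
    obtain ⟨j, hj, hjS⟩ := hS
    have h2 := (hcon j hj).1 hjS
    obtain ⟨t, ht, h3⟩ := hMex j hj z
    have h4 := (tr z).dead_zero le_rfl ((hσn _ (by omega)).trans ht.1) (ht.2.trans (hσm _ (by omega)))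
      h0.le (by rw [hv0]; exact hw)
    linarith
  have hvT0 : v z T = v z 0 := by
    rw [hv0, hW]
    simp only
    rw [max_eq_left (by linarith), max_eq_right (by linarith), heta]
    ring
  have hMne : ∀ i < n + 1, M i z ≠ r := by
    intro i hi h
    have h1 := F2 i hi z h
    have h2 := huR (σ (2*(i+1))) ⟨hσn _ (by omega), hσm _ (by omega)⟩
    linarith
  refine ⟨u z, v z, tr z, huT, hvT0, fun t ht => ⟨hnn t ht, huR t ht⟩, fun j hj => ⟨fun h => ?_, fun h t ht => ?_⟩⟩
  · obtain ⟨t, ht, h'⟩ := hMex j hj z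
    exact ⟨t, ht, by rw [h']; exact lt_of_le_of_ne ((hcon j hj).1 h) (hMne j hj).symm⟩
  · exact (hMle j z t ht).trans_lt (lt_of_le_of_ne ((hcon j hj).2 h) (hMne j hj))

/-- uniqueness-based positivity -/
lemma pos_of_sol (q : ℝ → ℝ) (hq : ∀ a b, IntervalIntegrable q volume a b)
    (G : ℝ → ℝ) (Λ : ℝ) (hΛ : 0 ≤ Λ) (hG : ∀ s s', |G s - G s'| ≤ Λ * |s - s'|) (hG0 : G 0 = 0)
    (u v : ℝ → ℝ) (hu : ∀ t, HasDerivAt u (v t) t) (hvc : Continuous v)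
    (hint : ∀ a b, IntervalIntegrable (fun x => q x * G (u x)) volume a b)
    (hv : ∀ t, v t = v 0 - ∫ s in (0:ℝ)..t, q s * G (u s)) (hnn : ∀ t, 0 ≤ u t)
    (t1 : ℝ) (ht1 : 0 < u t1) : ∀ t, 0 < u t := by
  have huc : Continuous u := continuous_iff_continuousAt.mpr fun t => (hu t).continuousAt
  by_contra hcon
  push Not at hcon
  obtain ⟨t2, ht2⟩ := hcon
  have hcl : IsClopen {t | u t = 0} := by
    refine ⟨isClosed_eq huc continuous_const, ?_⟩
    rw [isOpen_iff_mem_nhds]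
    intro t0 ht0
    have ht0' : u t0 = 0 := ht0
    have hv0 : v t0 = 0 := by
      apply IsLocalMin.hasDerivAt_eq_zero _ (hu t0)
      exact Eventually.of_forall fun t => by rw [ht0']; exact hnn t
    set I := ∫ x in (t0-1)..(t0+1), |q x| with hI
    have hI0 : 0 ≤ I := intervalIntegral.integral_nonneg (by linarith) (fun x _ => abs_nonneg _)
    have hC0 : 0 ≤ Λ * I := mul_nonneg hΛ hI0
    obtain ⟨δ, hδ⟩ : ∃ δ, δ = 1 / (2 * (Λ * I + 1)) := ⟨_, rfl⟩
    have hδ0 : 0 < δ := by rw [hδ]; positivity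
    have hδ1 : δ ≤ 1 := by
      rw [hδ, div_le_one (by linarith)]; linarith
    have hδ2 : Λ * I * δ ≤ 1/2 := by
      rw [hδ, mul_one_div, div_le_iff₀ (by linarith)]; linarith
    obtain ⟨tm, htm, hmax⟩ := isCompact_Icc.exists_isMaxOn (s := Icc (t0-δ) (t0+δ))
      (nonempty_Icc.mpr (by linarith)) huc.continuousOn
    obtain ⟨N, hN⟩ : ∃ N, N = u tm := ⟨_, rfl⟩
    have hN0 : 0 ≤ N := hN ▸ hnn tm
    have huN : ∀ t ∈ Icc (t0-δ) (t0+δ), u t ≤ N := fun t ht => hN ▸ hmax ht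
    have hvN : ∀ t ∈ Icc (t0-δ) (t0+δ), |v t| ≤ Λ * I * N := by
      intro t ht
      have e1 : v t = - ∫ s in t0..t, q s * G (u s) := by
        rw [← intervalIntegral.integral_interval_sub_left (hint 0 t) (hint 0 t0)]
        have h1 := hv t
        have h2 := hv t0
        linarith
      have hsub : uIoc t0 t ⊆ Icc (t0-δ) (t0+δ) := by
        intro x hx
        rw [mem_uIoc] at hx
        rcases hx with h | h
        · exact ⟨by linarith [h.1], h.2.trans ht.2⟩
        · exact ⟨by linarith [h.1, ht.1], by linarith [h.2]⟩
      have hsub2 : uIoc t0 t ⊆ uIoc (t0-1) (t0+1) := by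
        intro x hx
        rw [mem_uIoc] at hx ⊢
        left
        rcases hx with h | h
        · exact ⟨by linarith [h.1], by linarith [h.2, ht.2]⟩
        · exact ⟨by linarith [h.1, ht.1], by linarith [h.2]⟩
      rw [e1, abs_neg, ← Real.norm_eq_abs]
      have hb : ∀ᵐ x ∂(volume.restrict (uIoc t0 t)), ‖q x * G (u x)‖ ≤ |q x| * (Λ * N) := by
        filter_upwards [ae_restrict_mem measurableSet_uIoc] with x hx
        rw [Real.norm_eq_abs, abs_mul]
        apply mul_le_mul_of_nonneg_left _ (abs_nonneg _)
        have := hG (u x) 0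
        rw [hG0, sub_zero, sub_zero, abs_of_nonneg (hnn x)] at this
        exact this.trans (mul_le_mul_of_nonneg_left (huN x (hsub hx)) hΛ)
      have h1 := intervalIntegral.norm_integral_le_abs_of_norm_le hb
        ((hq t0 t).abs.mul_const (Λ * N))
      rw [intervalIntegral.integral_mul_const, abs_mul, abs_of_nonneg (mul_nonneg hΛ hN0)] at h1
      have h2 : |(∫ x in t0..t, |q x|)| ≤ |(∫ x in (t0-1)..(t0+1), |q x|)| :=
        intervalIntegral.abs_integral_mono_interval hsub2
          (Eventually.of_forall fun x => abs_nonneg _) (hq _ _).abs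
      rw [← hI, abs_of_nonneg hI0] at h2
      calc _ ≤ _ := h1
        _ ≤ I * (Λ * N) := mul_le_mul_of_nonneg_right h2 (mul_nonneg hΛ hN0)
        _ = _ := by ring
    have huN2 : ∀ t ∈ Icc (t0-δ) (t0+δ), u t ≤ N / 2 := by
      intro t ht
      have e1 : ∫ x in t0..t, v x = u t - u t0 :=
        intervalIntegral.integral_eq_sub_of_hasDerivAt (fun x _ => hu x) (hvc.intervalIntegrable _ _)
      have hsub : uIoc t0 t ⊆ Icc (t0-δ) (t0+δ) := by
        intro x hx
        rw [mem_uIoc] at hx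
        rcases hx with h | h
        · exact ⟨by linarith [h.1], h.2.trans ht.2⟩
        · exact ⟨by linarith [h.1, ht.1], by linarith [h.2]⟩
      have h1 := intervalIntegral.norm_integral_le_of_norm_le_const (f := v) (a := t0) (b := t)
        (C := Λ * I * N) (fun x hx => hvN x (hsub hx))
      rw [e1, ht0', sub_zero, Real.norm_eq_abs, abs_of_nonneg (hnn t)] at h1
      have h2 : |t - t0| ≤ δ := by
        rw [abs_le]; exact ⟨by linarith [ht.1], by linarith [ht.2]⟩
      calc u t ≤ _ := h1
        _ ≤ Λ * I * N * δ := mul_le_mul_of_nonneg_left h2 (mul_nonneg hC0 hN0)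
        _ = Λ * I * δ * N := by ring
        _ ≤ 1/2 * N := mul_le_mul_of_nonneg_right hδ2 hN0
        _ = N / 2 := by ring
    have hN' : N ≤ N / 2 := by
      have := huN2 tm htm
      rwa [← hN] at this
    filter_upwards [Icc_mem_nhds (show t0 - δ < t0 by linarith) (show t0 < t0 + δ by linarith)] with t ht
    have h1 := huN t ht
    have h2 := hnn t
    show u t = 0
    linarith
  have := hcl.eq_univ ⟨t2, le_antisymm ht2 (hnn t2)⟩
  have h1 : t1 ∈ {t | u t = 0} := this ▸ mem_univ t1
  have h1' : u t1 = 0 := h1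
  linarith

lemma extend (T : ℝ) (hT : 0 < T) (q : ℝ → ℝ) (hqp : Function.Periodic q T)
    (G : ℝ → ℝ) (Λ : ℝ) (hΛ : 0 ≤ Λ) (hG : ∀ s s', |G s - G s'| ≤ Λ * |s - s'|)
    (u v : ℝ → ℝ) (h : Traj T q G u v) (huT : u T = u 0) (hvT : v T = v 0)
    (hnn : ∀ t ∈ Icc 0 T, 0 ≤ u t) (hex : ∃ t ∈ Icc 0 T, 0 < u t) :
    ∃ U V : ℝ → ℝ, (∀ t ∈ Icc 0 T, U t = u t) ∧ (∀ t, ∃ s ∈ Icc 0 T, U t = u s) ∧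
      Function.Periodic U T ∧ (∀ t, HasDerivAt U (V t) t) ∧
      (∀ a b, IntervalIntegrable (fun x => q x * G (U x)) volume a b) ∧
      (∀ t, V t = V 0 - ∫ s in (0:ℝ)..t, q s * G (U s)) ∧ ∀ t, 0 < U t := by
  obtain ⟨p, hp⟩ : ∃ p : ℝ → ℝ, p = fun t => u (toIcoMod hT 0 t) := ⟨_, rfl⟩
  have pper : Function.Periodic p T := fun t => by
    rw [hp]
    simp only [toIcoMod_add_right]
  have pIcc : ∀ t ∈ Icc 0 T, p t = u t := by
    intro t ht
    rcases eq_or_lt_of_le ht.2 with e | e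
    · have h1 : p t = p 0 := by
        rw [e]; have := pper 0; rwa [zero_add] at this
      have h2 : p 0 = u 0 := by
        rw [hp]
        simp only
        rw [(toIcoMod_eq_self hT).mpr ⟨le_rfl, by linarith⟩]
      rw [h1, h2, e, huT]
    · rw [hp]
      simp only
      rw [(toIcoMod_eq_self hT).mpr ⟨ht.1, by linarith⟩]
  have pex : ∀ t, ∃ s ∈ Icc 0 T, p t = u s := fun t =>
    ⟨toIcoMod hT 0 t, Ico_subset_Icc_self (toIcoMod_mem_Ico' hT t), by rw [hp]⟩
  have wper : Function.Periodic (fun x => q x * G (p x)) T := fun t => by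
    simp only [hqp t, pper t]
  have weq : ∀ t ∈ Icc 0 T, ∫ x in (0:ℝ)..t, q x * G (p x) = ∫ x in (0:ℝ)..t, q x * G (u x) := by
    intro t ht
    apply intervalIntegral.integral_congr
    intro x hx
    rw [uIcc_of_le ht.1] at hx
    simp only [pIcc x ⟨hx.1, hx.2.trans ht.2⟩]
  have wint : ∀ a b, IntervalIntegrable (fun x => q x * G (p x)) volume a b := by
    intro a b
    apply wper.intervalIntegrable₀ hT.ne'
    apply (h.int 0 T).congr
    intro x hx
    rw [uIoc_of_le hT.le] at hx
    simp only [pIcc x ⟨hx.1.le, hx.2⟩]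
  obtain ⟨V, hV⟩ : ∃ V : ℝ → ℝ, V = fun t => v 0 - ∫ x in (0:ℝ)..t, q x * G (p x) := ⟨_, rfl⟩
  have VIcc : ∀ t ∈ Icc 0 T, V t = v t := by
    intro t ht
    rw [hV]
    simp only
    rw [weq t ht]
    have := h.hv 0 t le_rfl ht.1 ht.2
    linarith
  have Vc : Continuous V := by
    rw [hV]
    exact continuous_const.sub (intervalIntegral.continuous_primitive wint 0)
  have V0 : V 0 = v 0 := VIcc 0 ⟨le_rfl, hT.le⟩
  have Vper : Function.Periodic V T := by
    intro t
    have h1 := intervalIntegral.integral_add_adjacent_intervals (wint 0 t) (wint t (t+T))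
    have h2 := wper.intervalIntegral_add_eq t 0
    rw [zero_add, weq T ⟨hT.le, le_rfl⟩] at h2
    have h3 := h.hv 0 T le_rfl hT.le le_rfl
    rw [hV]
    simp only
    linarith
  obtain ⟨U, hU⟩ : ∃ U : ℝ → ℝ, U = fun t => u 0 + ∫ x in (0:ℝ)..t, V x := ⟨_, rfl⟩
  have UIcc : ∀ t ∈ Icc 0 T, U t = u t := by
    intro t ht
    have h1 : ∫ x in (0:ℝ)..t, V x = ∫ x in (0:ℝ)..t, v x := by
      apply intervalIntegral.integral_congr
      intro x hx
      rw [uIcc_of_le ht.1] at hx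
      exact VIcc x ⟨hx.1, hx.2.trans ht.2⟩
    have := h.hu 0 t le_rfl ht.1 ht.2
    rw [hU]
    simp only
    linarith
  have Uper : Function.Periodic U T := by
    intro t
    have h1 := intervalIntegral.integral_add_adjacent_intervals (Vc.intervalIntegrable (μ := volume) 0 t) (Vc.intervalIntegrable t (t+T))
    have h2 := Vper.intervalIntegral_add_eq t 0
    rw [zero_add] at h2
    have h3 := UIcc T ⟨hT.le, le_rfl⟩
    rw [hU] at h3 ⊢
    simp only at h3 ⊢
    linarith
  have Ueq : U = p := by
    funext t
    have h1 := toIcoMod_add_toIcoDiv_zsmul hT 0 t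
    have h2 := Uper.zsmul (toIcoDiv hT 0 t) (toIcoMod hT 0 t)
    rw [h1] at h2
    rw [h2, UIcc _ (Ico_subset_Icc_self (toIcoMod_mem_Ico' hT t)), hp]
  have Ud : ∀ t, HasDerivAt U (V t) t := by
    intro t
    rw [hU]
    exact (intervalIntegral.integral_hasDerivAt_right (Vc.intervalIntegrable _ _)
      (Vc.stronglyMeasurableAtFilter _ _) Vc.continuousAt).const_add _
  have Vf : ∀ t, V t = V 0 - ∫ s in (0:ℝ)..t, q s * G (U s) := by
    intro t
    rw [V0, hV, Ueq]
  have Uex : ∀ t, ∃ s ∈ Icc 0 T, U t = u s := fun t => by rw [Ueq]; exact pex t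
  have hqi : ∀ a b, IntervalIntegrable q volume a b := h.hq
  refine ⟨U, V, UIcc, Uex, Uper, Ud, by rw [Ueq]; exact wint, Vf, ?_⟩
  obtain ⟨t1, ht1, h1⟩ := hex
  exact pos_of_sol q h.hq G Λ hΛ hG (h.hG0 0 le_rfl) U V Ud Vc (by rw [Ueq]; exact wint) Vf
    (fun t => by obtain ⟨s, hs, e⟩ := Uex t; rw [e]; exact hnn s hs) t1 (by rw [UIcc t1 ht1]; exact h1)

lemma exists_G (g : ℝ → ℝ) (hgC1 : ContDiffOn ℝ 1 g (Set.Ici 0))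
    (hg0 : g 0 = 0) (hgpos : ∀ s : ℝ, 0 < s → 0 < g s) (R : ℝ) (hR : 0 < R) :
    ∃ (G : ℝ → ℝ) (Λ : ℝ), 0 ≤ Λ ∧ (∀ s s', |G s - G s'| ≤ Λ * |s - s'|) ∧ (∀ s, s ≤ 0 → G s = 0) ∧
      (∀ s, 0 ≤ G s) ∧ (∀ s, 0 ≤ s → s ≤ R → G s = g s) ∧ ∀ s, R ≤ s → G s = g R / R * s := by
  have hgn : ∀ s, 0 ≤ s → 0 ≤ g s := fun s hs => by
    rcases eq_or_lt_of_le hs with e | e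
    · rw [← e, hg0]
    · exact (hgpos s e).le
  have hI : ContDiffOn ℝ 1 g (Icc 0 R) := hgC1.mono Icc_subset_Ici_self
  have hud : UniqueDiffOn ℝ (Icc 0 R) := uniqueDiffOn_Icc hR
  have hdc := hI.continuousOn_derivWithin hud le_rfl
  obtain ⟨C, hC⟩ := isCompact_Icc.exists_bound_of_continuousOn hdc
  have hL : ∀ x ∈ Icc 0 R, ∀ y ∈ Icc 0 R, |g y - g x| ≤ C * |y - x| := by
    intro x hx y hy
    exact (convex_Icc 0 R).norm_image_sub_le_of_norm_derivWithin_le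
      (hI.differentiableOn one_ne_zero) hC hx hy
  have hC0 : 0 ≤ C := (norm_nonneg _).trans (hC 0 ⟨le_rfl, hR.le⟩)
  have hc0 : 0 ≤ g R / R := div_nonneg (hgn R hR.le) hR.le
  refine ⟨fun s => g (max 0 (min s R)) + (g R / R) * max (s - R) 0, C + g R / R, by linarith, ?_, ?_, ?_, ?_, ?_⟩
  · intro s s'
    have hm : ∀ s, max 0 (min s R) ∈ Icc 0 R := fun s =>
      ⟨le_max_left _ _, max_le hR.le (min_le_right _ _)⟩
    have h1 := hL _ (hm s') _ (hm s)
    have h2 : |max 0 (min s R) - max 0 (min s' R)| ≤ |s - s'| := by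
      have e1 := abs_max_sub_max_le_max 0 (min s R) 0 (min s' R)
      have e2 := abs_min_sub_min_le_max s R s' R
      rw [sub_self, abs_zero, max_eq_right (a := (0:ℝ)) (b := |min s R - min s' R|) (abs_nonneg _)] at e1
      rw [sub_self, abs_zero, max_eq_left (abs_nonneg _)] at e2
      exact e1.trans e2
    have h3 : |max (s - R) 0 - max (s' - R) 0| ≤ |s - s'| := by
      have e1 := abs_max_sub_max_le_abs (s - R) (s' - R) 0
      rwa [sub_sub_sub_cancel_right] at e1
    have h4 : |g R / R * max (s - R) 0 - g R / R * max (s' - R) 0| ≤ g R / R * |s - s'| := by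
      rw [← mul_sub, abs_mul, abs_of_nonneg hc0]
      exact mul_le_mul_of_nonneg_left h3 hc0
    have h5 := mul_le_mul_of_nonneg_left h2 hC0
    simp only
    calc _ = |(g (max 0 (min s R)) - g (max 0 (min s' R))) + (g R / R * max (s - R) 0 - g R / R * max (s' - R) 0)| := by
          congr 1; ring
      _ ≤ _ := abs_add_le _ _
      _ ≤ _ := by linarith
  · intro s hs
    simp only
    rw [max_eq_left ((min_le_left _ _).trans hs), max_eq_right (by linarith), hg0]
    ring
  · intro s
    exact add_nonneg (hgn _ (le_max_left _ _)) (mul_nonneg hc0 (le_max_right _ _))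
  · intro s hs hsR
    simp only
    rw [min_eq_left hsR, max_eq_right hs, max_eq_right (by linarith)]
    ring
  · intro s hs
    simp only
    rw [min_eq_right hs, max_eq_right hR.le, max_eq_left (by linarith)]
    field_simp
    ring

lemma exists_small (g : ℝ → ℝ) (hgC1 : ContDiffOn ℝ 1 g (Set.Ici 0))
    (hg0 : g 0 = 0) (hg'0 : derivWithin g (Set.Ici 0) 0 = 0) (ε : ℝ) (hε : 0 < ε) :
    ∃ r, 0 < r ∧ ∀ s, 0 ≤ s → s ≤ r → g s ≤ ε * s := by
  have h1 : HasDerivWithinAt g 0 (Ici 0) 0 := by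
    have := (hgC1.differentiableOn one_ne_zero 0 (mem_Ici.mpr le_rfl)).hasDerivWithinAt
    rwa [hg'0] at this
  have h2 := (hasDerivWithinAt_iff_isLittleO.mp h1).def hε
  rw [eventually_nhdsWithin_iff, Metric.eventually_nhds_iff] at h2
  obtain ⟨δ, hδ, h⟩ := h2
  refine ⟨δ/2, by linarith, fun s hs hs' => ?_⟩
  have := h (y := s) (by rw [Real.dist_eq, sub_zero, abs_of_nonneg hs]; linarith) hs
  simp only [hg0, sub_zero, smul_zero, Real.norm_eq_abs, abs_of_nonneg hs] at this
  exact (le_abs_self _).trans this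

lemma exists_min_pos (g : ℝ → ℝ) (hgC1 : ContDiffOn ℝ 1 g (Set.Ici 0))
    (hgpos : ∀ s : ℝ, 0 < s → 0 < g s) (b R : ℝ) (hb : 0 < b) (hbR : b ≤ R) :
    ∃ κ, 0 < κ ∧ ∀ s ∈ Icc b R, κ ≤ g s := by
  obtain ⟨x, hx, h⟩ := isCompact_Icc.exists_isMinOn (nonempty_Icc.mpr hbR)
    (hgC1.continuousOn.mono (fun s (hs : s ∈ Icc b R) => hb.le.trans hs.1))
  exact ⟨g x, hgpos x (hb.trans_le hx.1), fun s hs => h hs⟩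

lemma exists_dJ (f : ℝ → ℝ) (hf : ∀ a b, IntervalIntegrable f volume a b) (n : ℕ) (σ : ℕ → ℝ)
    (hσ : ∀ i < n, σ i < σ (i+1))
    (hne : ∀ i < n, ¬ (∀ᵐ t ∂(volume.restrict (Icc (σ i) (σ (i+1)))), f t = 0)) :
    ∃ d J : ℝ, 0 < d ∧ 0 < J ∧ ∀ i < n, σ i + 2 * d < σ (i+1) ∧ J ≤ ∫ x in (σ i + d)..(σ (i+1) - d), |f x| := by
  have hone : ∀ i < n, ∃ J : ℝ, 0 < J ∧ ∀ᶠ d in nhdsWithin (0:ℝ) (Ioi 0),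
      σ i + 2 * d < σ (i+1) ∧ J ≤ ∫ x in (σ i + d)..(σ (i+1) - d), |f x| := by
    intro i hi
    have hpos : 0 < ∫ x in (σ i)..(σ (i+1)), |f x| := by
      have h0 : 0 ≤ ∫ x in (σ i)..(σ (i+1)), |f x| :=
        intervalIntegral.integral_nonneg (hσ i hi).le (fun x _ => abs_nonneg _)
      refine lt_of_le_of_ne h0 fun h => hne i hi ?_
      rw [intervalIntegral.integral_of_le (hσ i hi).le, ← integral_Icc_eq_integral_Ioc] at h
      have hi' : Integrable (fun x => |f x|) (volume.restrict (Icc (σ i) (σ (i+1)))) := by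
        have := (intervalIntegrable_iff_integrableOn_Icc_of_le (hσ i hi).le).mp (hf (σ i) (σ (i+1)))
        exact this.abs
      have := (integral_eq_zero_iff_of_nonneg (fun x => abs_nonneg (f x)) hi').mp h.symm
      filter_upwards [this] with x hx
      exact abs_eq_zero.mp hx
    have hfi : ∀ a b, IntervalIntegrable (fun x => |f x|) volume a b := fun a b => (hf a b).abs
    have hP := intervalIntegral.continuous_primitive hfi 0
    have hc : Continuous (fun d : ℝ => ∫ x in (σ i + d)..(σ (i+1) - d), |f x|) := by
      have : (fun d : ℝ => ∫ x in (σ i + d)..(σ (i+1) - d), |f x|) =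
          fun d => (∫ x in (0:ℝ)..(σ (i+1) - d), |f x|) - ∫ x in (0:ℝ)..(σ i + d), |f x| := by
        funext d
        rw [intervalIntegral.integral_interval_sub_left (hfi _ _) (hfi _ _)]
      rw [this]
      exact (hP.comp (continuous_const.sub continuous_id)).sub (hP.comp (continuous_const.add continuous_id))
    refine ⟨(∫ x in (σ i)..(σ (i+1)), |f x|) / 2, by linarith, ?_⟩
    have e1 : ∀ᶠ d in nhds (0:ℝ), (∫ x in (σ i)..(σ (i+1)), |f x|) / 2 < ∫ x in (σ i + d)..(σ (i+1) - d), |f x| := by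
      apply hc.continuousAt.eventually_const_lt
      simp only [add_zero, sub_zero]
      linarith
    have e2 : ∀ᶠ d in nhds (0:ℝ), σ i + 2 * d < σ (i+1) := by
      have hc2 : Continuous (fun d : ℝ => σ i + 2 * d) := by fun_prop
      apply hc2.continuousAt.eventually_lt_const
      simpa using hσ i hi
    filter_upwards [nhdsWithin_le_nhds e1, nhdsWithin_le_nhds e2] with d h1 h2
    exact ⟨h2, h1.le⟩
  have hall : ∀ k ≤ n, ∃ J : ℝ, 0 < J ∧ ∀ᶠ d in nhdsWithin (0:ℝ) (Ioi 0), ∀ i < k,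
      σ i + 2 * d < σ (i+1) ∧ J ≤ ∫ x in (σ i + d)..(σ (i+1) - d), |f x| := by
    intro k
    induction k with
    | zero => exact fun _ => ⟨1, one_pos, Eventually.of_forall fun d i hi => absurd hi (by omega)⟩
    | succ k ih =>
      intro hk
      obtain ⟨J, hJ, h⟩ := ih (by omega)
      obtain ⟨J', hJ', h'⟩ := hone k (by omega)
      refine ⟨min J J', lt_min hJ hJ', ?_⟩
      filter_upwards [h, h'] with d h1 h2 i hi
      rcases Nat.lt_succ_iff_lt_or_eq.mp hi with e | e
      · exact ⟨(h1 i e).1, (min_le_left _ _).trans (h1 i e).2⟩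
      · subst e
        exact ⟨h2.1, (min_le_right _ _).trans h2.2⟩
  obtain ⟨J, hJ, h⟩ := hall n le_rfl
  obtain ⟨d, hd, hd'⟩ := (h.and self_mem_nhdsWithin).exists
  exact ⟨d, J, hd', hJ, hd⟩

lemma ae_Ioc_of_Icc {p : ℝ → Prop} {a b c d : ℝ} (h : ∀ᵐ x ∂(volume.restrict (Icc a b)), p x)
    (hc : a ≤ c) (hd : d ≤ b) (hcd : c ≤ d) : ∀ᵐ x ∂(volume.restrict (uIoc c d)), p x := by
  rw [uIoc_of_le hcd]
  exact ae_mono (Measure.restrict_mono (Ioc_subset_Icc_self.trans (Icc_subset_Icc hc hd)) le_rfl) h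

theorem stmt3 (T : ℝ) (hT : 0 < T) (a : ℝ → ℝ)
    (haper : Function.Periodic a T)
    (haloc : MeasureTheory.LocallyIntegrable a MeasureTheory.volume)
    (m : ℕ) (hm : 1 ≤ m) (hasign : SignCond a T m)
    (g : ℝ → ℝ) (hgC1 : ContDiffOn ℝ 1 g (Set.Ici 0))
    (hg0 : g 0 = 0) (hgpos : ∀ s : ℝ, 0 < s → 0 < g s)
    (hg'0 : derivWithin g (Set.Ici 0) 0 = 0)
    (hgsup : Filter.Tendsto (fun s => g s / s) Filter.atTop Filter.atTop) :
    ∃ μstar : ℝ, 0 < μstar ∧ ∀ μ : ℝ, μstar < μ →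
      ∃ U : Finset (ℝ → ℝ), 2 ^ m - 1 ≤ U.card ∧
        ∀ u ∈ U,
          IsSol (fun t s => (max (a t) 0 - μ * max (-a t) 0) * g s) u ∧
          (∀ t, 0 < u t) ∧ Function.Periodic u T := by
  obtain ⟨σ, hσ0, hσT, hσ, hpos, hneg⟩ := hasign
  have hai : ∀ x y, IntervalIntegrable a volume x y := fun x y =>
    ⟨(haloc.integrableOn_isCompact isCompact_Icc).mono_set Ioc_subset_Icc_self,
      (haloc.integrableOn_isCompact isCompact_Icc).mono_set Ioc_subset_Icc_self⟩
  obtain ⟨d, J, hd, hJ0, hdJ⟩ := exists_dJ a hai (2*m) σ hσ (by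
    intro i hi h
    rcases Nat.even_or_odd' i with ⟨j, rfl | rfl⟩
    · exact (hpos j (by omega)).2 h
    · apply (hneg j (by omega)).2
      filter_upwards [h] with x hx
      simp [hx])
  have hσn : ∀ i ≤ 2*m, 0 ≤ σ i := fun i hi => by
    have := part_mono hσ (Nat.zero_le i) hi
    linarith
  have hσm : ∀ i ≤ 2*m, σ i ≤ T := fun i hi => by
    have := part_mono hσ hi le_rfl
    linarith
  have hdT : d ≤ T := by
    have h1 := (hdJ 0 (by omega)).1
    have h2 := hσm 1 (by omega)
    simp only [zero_add] at h1
    linarith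
  -- K, s0, R
  obtain ⟨K, hKdef⟩ : ∃ K, K = 2 * T / (J * d^2) + 1 := ⟨_, rfl⟩
  have hJd : 0 < J * d^2 := by positivity
  have hK0 : 0 < K := by rw [hKdef]; positivity
  have hK : 2 * T < K * J * d ^ 2 := by
    have : K * J * d^2 = 2 * T + J * d^2 := by
      rw [hKdef]; field_simp
    linarith
  obtain ⟨s1, hs1⟩ := eventually_atTop.mp (hgsup.eventually_ge_atTop K)
  obtain ⟨s0, hs0def⟩ : ∃ s0, s0 = max s1 1 := ⟨_, rfl⟩
  have hs01 : 1 ≤ s0 := hs0def ▸ le_max_right _ _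
  have hgK : ∀ s, s0 ≤ s → K * s ≤ g s := by
    intro s hs
    have h1 := hs1 s ((le_max_left _ _).trans (hs0def ▸ hs))
    rwa [le_div_iff₀ (by linarith)] at h1
  obtain ⟨R, hRdef⟩ : ∃ R, R = s0 * T / d := ⟨_, rfl⟩
  have hR : d * R = s0 * T := by rw [hRdef]; field_simp
  have hs0R : s0 ≤ R := by
    rw [hRdef, le_div_iff₀ hd]
    exact mul_le_mul_of_nonneg_left hdT (by linarith)
  have hR0 : 0 < R := by linarith
  obtain ⟨G, Λ, hΛ, hGL, hG0, hGn, hGg, hGR⟩ := exists_G g hgC1 hg0 hgpos R hR0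
  have hGK : ∀ s, s0 ≤ s → K * s ≤ G s := by
    intro s hs
    rcases le_total s R with h | h
    · rw [hGg s (by linarith) h]; exact hgK s hs
    · rw [hGR s h]
      have := hgK R hs0R
      rw [← le_div_iff₀ hR0] at this
      exact mul_le_mul_of_nonneg_right this (by linarith)
  -- A, eps, r
  obtain ⟨A, hA⟩ : ∃ A, A = ∫ x in (0:ℝ)..T, |a x| := ⟨_, rfl⟩
  have hA0 : 0 ≤ A := by
    rw [hA]; exact intervalIntegral.integral_nonneg hT.le (fun x _ => abs_nonneg _)
  have hAT : 0 ≤ A * T := mul_nonneg hA0 hT.le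
  obtain ⟨ε, hεdef⟩ : ∃ ε, ε = 1 / (8 * (A * T + 1)) := ⟨_, rfl⟩
  have hε : 0 < ε := by rw [hεdef]; positivity
  have hεA : ε * (A * T) ≤ 1/8 := by
    rw [hεdef, div_mul_eq_mul_div, div_le_iff₀ (by linarith)]
    linarith
  obtain ⟨r0, hr0, hgr0⟩ := exists_small g hgC1 hg0 hg'0 ε hε
  obtain ⟨r, hrdef⟩ : ∃ r, r = min r0 (R/2) := ⟨_, rfl⟩
  have hr : 0 < r := by rw [hrdef]; exact lt_min hr0 (by linarith)
  have hrr0 : r ≤ r0 := hrdef ▸ min_le_left _ _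
  have hrR : r < R := by
    have : r ≤ R/2 := hrdef ▸ min_le_right _ _
    linarith
  have hE : ∀ s, s ≤ r → G s ≤ ε * r := by
    intro s hs
    rcases le_total s 0 with h | h
    · rw [hG0 s h]; positivity
    · rw [hGg s h (by linarith)]
      exact (hgr0 s h (hs.trans hrr0)).trans (mul_le_mul_of_nonneg_left hs hε.le)
  -- kappa
  obtain ⟨κ, hκ, hκg⟩ := exists_min_pos g hgC1 hgpos (r/2) R (by linarith) (by linarith)
  have hk : ∀ s, r / 2 ≤ s → κ ≤ G s := by
    intro s hs
    rcases le_total s R with h | h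
    · rw [hGg s (by linarith) h]; exact hκg s ⟨hs, h⟩
    · rw [hGR s h]
      have h1 := hκg R ⟨by linarith, le_rfl⟩
      have h2 : g R ≤ g R / R * s := by
        rw [div_mul_eq_mul_div, le_div_iff₀ hR0]
        exact mul_le_mul_of_nonneg_left h (hgpos R hR0).le
      linarith
  have hdk : 0 < d * (κ * J) := by positivity
  refine ⟨R / (d * (κ * J)), by positivity, fun μ hμ => ?_⟩
  have hμ0 : 0 < μ := lt_trans (by positivity) hμ
  have hRk : R ≤ d * (κ * (μ * J)) := by
    rw [div_lt_iff₀ hdk] at hμ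
    have : d * (κ * (μ * J)) = μ * (d * (κ * J)) := by ring
    linarith
  obtain ⟨q, hqdef⟩ : ∃ q : ℝ → ℝ, q = fun t => max (a t) 0 - μ * max (-a t) 0 := ⟨_, rfl⟩
  have hqi : ∀ x y, IntervalIntegrable q volume x y := by
    intro x y
    have h1 : IntervalIntegrable (fun t => max (a t) 0) volume x y := by
      have h := hai x y
      exact ⟨h.1.pos_part, h.2.pos_part⟩
    have h2 : IntervalIntegrable (fun t => max (-a t) 0) volume x y := by
      have h := (hai x y)
      exact ⟨h.1.neg.pos_part, h.2.neg.pos_part⟩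
    rw [hqdef]
    exact h1.sub (h2.const_mul μ)
  have hqper : Function.Periodic q T := fun t => by
    rw [hqdef]; simp only [haper t]
  have hq_of_pos : ∀ t, 0 ≤ a t → q t = |a t| := fun t h => by
    rw [hqdef]
    simp only
    rw [max_eq_left h, max_eq_right (by linarith), abs_of_nonneg h]; ring
  have hq_of_neg : ∀ t, 0 ≤ -a t → q t = -(μ * |a t|) := fun t h => by
    rw [hqdef]
    simp only
    rw [max_eq_right (by linarith), max_eq_left h, abs_of_nonpos (by linarith)]; ring
  have hqp : ∀ i < m, ∀ᵐ x ∂(volume.restrict (Icc (σ (2*i)) (σ (2*i+1)))), q x = |a x| := by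
    intro i hi
    filter_upwards [(hpos i hi).1] with x hx
    exact hq_of_pos x hx
  have hqn : ∀ i < m, ∀ᵐ x ∂(volume.restrict (Icc (σ (2*i+1)) (σ (2*i+2)))), q x = -(μ * |a x|) := by
    intro i hi
    filter_upwards [(hneg i hi).1] with x hx
    exact hq_of_neg x hx
  have hJq : ∀ i < m, J ≤ ∫ x in (σ (2*i) + d)..(σ (2*i+1) - d), q x := by
    intro i hi
    obtain ⟨h1, h2⟩ := hdJ (2*i) (by omega)
    rw [intervalIntegral.integral_congr_ae_restrict
      (ae_Ioc_of_Icc (hqp i hi) (by linarith) (by linarith) (by linarith))]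
    exact h2
  have hJq' : ∀ i < m, μ * J ≤ - ∫ x in (σ (2*i+1) + d)..(σ (2*i+2) - d), q x := by
    intro i hi
    obtain ⟨h1, h2⟩ := hdJ (2*i+1) (by omega)
    rw [show 2*i+1+1 = 2*i+2 from rfl] at h1 h2
    rw [intervalIntegral.integral_congr_ae_restrict
      (ae_Ioc_of_Icc (hqn i hi) (by linarith) (by linarith) (by linarith))]
    rw [intervalIntegral.integral_neg, neg_neg, intervalIntegral.integral_const_mul]
    exact mul_le_mul_of_nonneg_left h2 hμ0.le
  have he : ∀ i < m, ε * r * ∫ x in (σ (2*i))..(σ (2*i+1)), q x ≤ ε * r * A := by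
    intro i hi
    apply mul_le_mul_of_nonneg_left _ (by positivity)
    have h1 := hσ (2*i) (by omega)
    rw [intervalIntegral.integral_congr_ae_restrict
      (ae_Ioc_of_Icc (hqp i hi) le_rfl le_rfl h1.le), hA]
    exact intervalIntegral.integral_mono_interval (hσn _ (by omega)) h1.le (hσm _ (by omega))
      (Eventually.of_forall fun x => abs_nonneg _) (hai 0 T).abs
  obtain ⟨Q, hQdef⟩ : ∃ Q, Q = ∫ x in (0:ℝ)..T, |q x| := ⟨_, rfl⟩
  have hQ0 : 0 ≤ Q := by
    rw [hQdef]; exact intervalIntegral.integral_nonneg hT.le (fun x _ => abs_nonneg _)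
  have hQ : ∀ i < m, ∫ x in (σ (2*i+1))..(σ (2*i+2)), |q x| ≤ Q := by
    intro i hi
    rw [hQdef]
    exact intervalIntegral.integral_mono_interval (hσn _ (by omega)) (hσ (2*i+1) (by omega)).le
      (hσm _ (by omega)) (Eventually.of_forall fun x => abs_nonneg _) (hqi 0 T).abs
  have hB : ∀ s, s < R → G s ≤ Λ * R := by
    intro s hs
    rcases le_total s 0 with h | h
    · rw [hG0 s h]; positivity
    · have := hGL s 0
      rw [hG0 0 le_rfl, sub_zero, sub_zero, abs_of_nonneg h] at this
      exact (le_abs_self _).trans (this.trans (mul_le_mul_of_nonneg_left hs.le hΛ))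
  have hB0 : 0 ≤ Λ * R := by positivity
  have hBQ : 0 ≤ Λ * R * Q := by positivity
  obtain ⟨Y, hYdef⟩ : ∃ Y, Y = Λ * R * Q + R / d := ⟨_, rfl⟩
  have hY0 : 0 < Y := by
    have : 0 < R / d := by positivity
    rw [hYdef]; linarith
  have hY : R ≤ d * (Y - Λ * R * Q) := by
    rw [hYdef, add_sub_cancel_left, mul_div_cancel₀ _ hd.ne']
  have hRY : R ≤ d * Y := hY.trans (mul_le_mul_of_nonneg_left (by linarith) hd.le)
  have main : ∀ S : Finset ℕ, ∃ u : ℝ → ℝ, (∃ k < m, k ∈ S) →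
      ((IsSol (fun t s => (max (a t) 0 - μ * max (-a t) 0) * g s) u ∧
          (∀ t, 0 < u t) ∧ Function.Periodic u T) ∧
        ∀ k < m, (k ∈ S → ∃ t ∈ Icc (σ (2*k)) (σ (2*k+1)), r < u t) ∧
        (k ∉ S → ∀ t ∈ Icc (σ (2*k)) (σ (2*k+1)), u t < r)) := by
    intro S
    by_cases hS : ∃ k < m, k ∈ S
    swap
    · exact ⟨fun _ => 0, fun h => absurd h hS⟩
    obtain ⟨u, v, htr, huT, hvT, hub, hus⟩ := core_s3 T hT q hqi G Λ hΛ hGL hG0 hGn m hm σ hσ0 hσT d hd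
      (fun i hi => (hdJ i hi).1)
      (fun i hi => by
        filter_upwards [hqp i hi] with x hx
        rw [hx]; exact abs_nonneg _)
      (fun i hi => by
        filter_upwards [hqn i hi] with x hx
        rw [hx]
        have : 0 ≤ μ * |a x| := by positivity
        linarith)
      J (μ * J) K s0 R r (ε * r * A) (ε * r) κ (Λ * R) Q Y hJq hJ0 hK hK0 hGK hR.ge hR0 hr hrR
      (by positivity) hE he
      (by
        have : ε * r * A * T = r * (ε * (A * T)) := by ring
        rw [this]
        have := mul_le_mul_of_nonneg_left hεA hr.le
        linarith)
      (by positivity) hJq' hκ.le hk hRk hB hB0 hQ hY0 hRY hY (S : Set ℕ)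
      (by simpa using hS)
    have hsub : ∀ k < m, ∀ t ∈ Icc (σ (2*k)) (σ (2*k+1)), t ∈ Icc 0 T := fun k hk t ht =>
      ⟨(hσn _ (by omega)).trans ht.1, ht.2.trans (hσm _ (by omega))⟩
    obtain ⟨U, V, hUu, hUs, hUper, hUd, hUint, hUV, hUpos⟩ := extend T hT q hqper G Λ hΛ hGL u v htr
      huT hvT (fun t ht => (hub t ht).1) (by
        obtain ⟨k, hk, hkS⟩ := hS
        obtain ⟨t, ht, h⟩ := (hus k hk).1 (by simpa using hkS)
        exact ⟨t, hsub k hk t ht, hr.trans h⟩)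
    refine ⟨U, fun _ => ⟨⟨⟨V, hUd, ?_, ?_⟩, hUpos, hUper⟩, fun k hk => ⟨fun h => ?_, fun h t ht => ?_⟩⟩⟩
    · have e : (fun s => (fun t s => (max (a t) 0 - μ * max (-a t) 0) * g s) s (U s)) =
          fun x => q x * G (U x) := by
        funext t
        obtain ⟨s, hs, e⟩ := hUs t
        rw [hqdef]
        simp only
        rw [hGg (U t) (hUpos t).le (by rw [e]; exact (hub s hs).2.le)]
      rw [e]
      rw [locallyIntegrable_iff]
      intro k hk
      obtain ⟨x, y, hxy⟩ : ∃ x y : ℝ, k ⊆ Icc x y := by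
        obtain ⟨y, hy⟩ := hk.bddAbove
        obtain ⟨x, hx⟩ := hk.bddBelow
        exact ⟨x, y, fun z hz => ⟨hx hz, hy hz⟩⟩
      rcases le_total x y with h | h
      · exact ((intervalIntegrable_iff_integrableOn_Icc_of_le h).mp (hUint x y)).mono_set hxy
      · exact ((intervalIntegrable_iff_integrableOn_Icc_of_le h).mp (hUint y x)).mono_set
          (hxy.trans (fun z hz => ⟨h.trans hz.1, hz.2.trans h⟩))
    · intro t
      have e : (fun s => (fun t s => (max (a t) 0 - μ * max (-a t) 0) * g s) s (U s)) =
          fun x => q x * G (U x) := by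
        funext t
        obtain ⟨s, hs, e⟩ := hUs t
        rw [hqdef]
        simp only
        rw [hGg (U t) (hUpos t).le (by rw [e]; exact (hub s hs).2.le)]
      rw [hUV t]
      exact congrArg (fun f : ℝ → ℝ => V 0 - ∫ s in (0:ℝ)..t, f s) e.symm
    · obtain ⟨t, ht, h'⟩ := (hus k hk).1 (by simpa using h)
      exact ⟨t, ht, by rw [hUu t (hsub k hk t ht)]; exact h'⟩
    · rw [hUu t (hsub k hk t ht)]
      exact (hus k hk).2 (by simpa using h) t ht
  choose f hf using main
  classical
  have hne : ∀ S ∈ (Finset.range m).powerset.erase ∅, ∃ k < m, k ∈ S := by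
    intro S hS
    rw [Finset.mem_erase, Finset.mem_powerset] at hS
    obtain ⟨k, hk⟩ := Finset.nonempty_iff_ne_empty.mpr hS.1
    exact ⟨k, Finset.mem_range.mp (hS.2 hk), hk⟩
  refine ⟨((Finset.range m).powerset.erase ∅).image f, ?_, ?_⟩
  · rw [Finset.card_image_of_injOn, Finset.card_erase_of_mem (Finset.empty_mem_powerset _),
      Finset.card_powerset, Finset.card_range]
    intro S hS S' hS' hSS
    have h1 := (hf S (hne S hS)).2
    have h2 := (hf S' (hne S' hS')).2
    have hs1 : S ⊆ Finset.range m := Finset.mem_powerset.mp (Finset.mem_erase.mp hS).2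
    have hs2 : S' ⊆ Finset.range m := Finset.mem_powerset.mp (Finset.mem_erase.mp hS').2
    rw [hSS] at h1
    ext k
    constructor
    · intro hk
      have hkm := Finset.mem_range.mp (hs1 hk)
      by_contra hk'
      obtain ⟨t, ht, h⟩ := (h1 k hkm).1 hk
      have := (h2 k hkm).2 hk' t ht
      linarith
    · intro hk
      have hkm := Finset.mem_range.mp (hs2 hk)
      by_contra hk'
      obtain ⟨t, ht, h⟩ := (h2 k hkm).1 hk
      have := (h1 k hkm).2 hk' t ht
      linarith
  · intro u hu
    obtain ⟨S, hS, rfl⟩ := Finset.mem_image.mp hu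
    exact (hf S (hne S hS)).1
end
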